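/- Suppose f is non-degenerate over ℝ, s₀ ∉ ℤ, and τ₀ is unstable with respect to some variable x_j. Then there is an open neighbourhood U of 0 in ℝⁿ such that for every C^∞ function φ with compact support contained in U and each sign ±, every meromorphic continuation G of Z_± has a pole at s₀ of order strictly less than ρ; that is, lim_{s→s₀} (s−s₀)^{ρ−1} G(s) exists in ℂ. -/

import Mathlib

/-!
Near the origin `f = ∑ v ∈ V, x ^ v * g v x` with `V` finite, `g v 0 = a v`, and `V` generating the
Newton polyhedron (`power_split`, `exists_setup`). Write `m = ∑ v ∈ V, |x ^ v|`. Non-degeneracy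
implies that the logarithmic gradient `(x_i ∂_i f)_i` dominates `m` off the coordinate hyperplanes:
otherwise the logarithms of the coordinates of a sequence of counterexamples would single out a
compact face whose polynomial has a critical point in the torus (`lower_bound`, `low_grad`).

Two kinds of integration by parts in `∫ f_± ^ s φ` are based on this. Integrating along the
logarithmic gradient replaces the exponent `s` by `s + 1` and the amplitude by one which is larger
by a factor `m⁻¹`, at the cost of a factor `s + 1` (`Base.reg`). Integrating along the Euler fields
`∑ w_i x_i ∂_i`, for finitely many weights `w`, continues the integral meromorphically to every
half-plane (`Base.mer`).

Instability yields a third one, in the single variable `x_j`. The part of `f` coming from `τ₀` is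
affine in `x_j`, and the coefficient of `x_j` in it has no zeros on the relevant faces, so that it is
comparable to the sum of the absolute values of its monomials (`low_unstable`). Hence `∂_j f` has
size at least `b = √b2`, the size of that coefficient, up to an error `b √Th` (`Dd_low`). With
`Q = (∂_j f)² + b² Th²` the amplitude splits as `φ = ∂_j f * (φ ∂_j f / Q) + φ b² Th² / Q`, and the
first term is integrated by parts in `x_j` (`unstable_parts`). Both new amplitudes carry the gain
`gn = √Th / √(1 + Th)` (`adm_DH`, `adm_R`). Combined with `N` steps along the logarithmic gradient
(`representation`), this expresses the integral near `s₀` by integrals of size `∫ m ^ (Re s) * gn`,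
up to a factor that vanishes only at integers; here `s₀ ∉ ℤ` enters.

In the coordinates `u_i = -log |x_i|`, the function `m ^ (s₀ + ε)` times the Jacobian is of size
`exp (-(df u / t₀) - ε N(u))`, where the defect `df u = t₀ ∑ u_i - N(u)` controls `|⟨u, b⟩|` for
the `dim τ₀` directions `b` of the face. Where the defect is small, the gain makes the integrand decay
in one more direction, transversal to the face: the unstable variable, or an exponent of `V` off
`τ₀` (`weight_exp_bound`). Only `ρ - 1` directions are left in which the decay has rate `ε`, so the
integrals are `O(ε ^ (-(ρ - 1)))` (`lintegral_face`, `integrable_weight`). A meromorphic function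
with this bound along the ray `s₀ + ε` has a pole of order at most `ρ - 1`
(`exists_tendsto_of_ray_bound`, `pole_order`), and the identity theorem, along a path from `1` to
`s₀` in the domain of the given continuation, transfers this to every continuation.
-/


open MeasureTheory Filter Topology Complex

noncomputable section
open scoped Classical

/-- Inner product `⟨a, y⟩ = ∑ i, a i * y i` on `Fin n → ℝ`. -/
def dotR {n : ℕ} (a y : Fin n → ℝ) : ℝ := ∑ i, a i * y i

/-- The Newton polyhedron of a support set `S ⊆ ℕⁿ`: the convex hull of `S + [0,∞)ⁿ`. -/
def newtonPolyhedron {n : ℕ} (S : Set (Fin n → ℕ)) : Set (Fin n → ℝ) :=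
  convexHull ℝ {x : Fin n → ℝ | ∃ α ∈ S, ∀ i, (α i : ℝ) ≤ x i}

/-- The face of `Γ` cut out by a nonnegative linear functional `u`:
the set of minimizers of `⟨u, ·⟩` on `Γ`. -/
def traceFace {n : ℕ} (Γ : Set (Fin n → ℝ)) (u : Fin n → ℝ) : Set (Fin n → ℝ) :=
  {y ∈ Γ | ∀ z ∈ Γ, dotR u y ≤ dotR u z}

/-- `τ` is a face of `Γ`: the set of minimizers of some nonnegative linear functional. -/
def IsFaceOf {n : ℕ} (Γ τ : Set (Fin n → ℝ)) : Prop :=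
  ∃ u : Fin n → ℝ, (∀ i, 0 ≤ u i) ∧ τ = traceFace Γ u

/-- The dimension of (the affine span of) a subset of `ℝⁿ`. -/
def faceDim {n : ℕ} (τ : Set (Fin n → ℝ)) : ℕ := Module.finrank ℝ (vectorSpan ℝ τ)

/-- Given Taylor coefficients `a : ℕⁿ → ℝ` and a region `γ ⊆ ℝⁿ`, the polynomial
`f_γ(x) = ∑_{α ∈ γ ∩ ℕⁿ} a_α x^α`. -/
def facePoly {n : ℕ} (a : (Fin n → ℕ) → ℝ) (γ : Set (Fin n → ℝ)) (x : Fin n → ℝ) : ℝ :=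
  ∑' α : Fin n → ℕ, if (fun i => (α i : ℝ)) ∈ γ then a α * ∏ i, x i ^ α i else 0

/-- `f` (with Taylor coefficients `a` and Newton polyhedron `Γ`) is non-degenerate over ℝ:
for every compact face `γ` of `Γ`, the polynomial `f_γ` has no critical point in `(ℝ∖{0})ⁿ`. -/
def NonDegenerateR {n : ℕ} (a : (Fin n → ℕ) → ℝ) (Γ : Set (Fin n → ℝ)) : Prop :=
  ∀ γ : Set (Fin n → ℝ), IsFaceOf Γ γ → IsCompact γ →
    ∀ x : Fin n → ℝ, (∀ i, x i ≠ 0) → fderiv ℝ (facePoly a γ) x ≠ 0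

/-- The positive open orthant `(0,∞)^m`. -/
def posOrthant (m : ℕ) : Set (Fin m → ℝ) := {y | ∀ i, 0 < y i}

/-- `pad ρ y = (1,…,1,y_{ρ+1},…,y_n)`: the first `ρ` coordinates are `1`,
the remaining ones come from `y`. -/
def padR {n : ℕ} (ρ : ℕ) (y : Fin (n - ρ) → ℝ) : Fin n → ℝ :=
  fun i => if h : (i : ℕ) < ρ then 1 else y ⟨(i : ℕ) - ρ, by have := i.isLt; omega⟩

/-- `pPow u s = u^s` for `u > 0`, and `0` otherwise (so in particular `0^s = 0`). -/
def pPow (u s : ℝ) : ℝ := if 0 < u then u ^ s else 0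

/-- `G` is a meromorphic continuation of `Z` (defined for `Re s > 0`) to a connected open
set containing the half-plane `{Re s > 0}` and the point `s₀`. -/
def IsMeroCont (Z : ℂ → ℂ) (s₀ : ℂ) (G : ℂ → ℂ) : Prop :=
  ∃ U : Set ℂ, IsOpen U ∧ IsConnected U ∧ ({s : ℂ | 0 < s.re} ∪ {s₀}) ⊆ U ∧
    MeromorphicOn G U ∧ ∀ s : ℂ, 0 < s.re → G s = Z s

/-- The positive part `max (σ • f) 0`; for `σ = 1` this is `f₊`, for `σ = -1` it is `f₋`. -/
def sgnPart (σ : ℝ) (u : ℝ) : ℝ := max (σ * u) 0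

/-- `τ₀` is unstable over ℝ with respect to the `j`-th variable. -/
def UnstableR {n : ℕ} (a : (Fin n → ℕ) → ℝ) (Γ τ₀ : Set (Fin n → ℝ)) (j : Fin n) : Prop :=
  (∀ y ∈ τ₀, 0 ≤ y j ∧ y j ≤ 1) ∧ (¬ ∀ y ∈ τ₀, y j = 0) ∧
  ∀ γ : Set (Fin n → ℝ), IsFaceOf Γ γ → IsCompact γ → (∀ y ∈ γ, y j = 1) →
    ∀ x : Fin n → ℝ, (∀ i, x i ≠ 0) → facePoly a γ x ≠ 0

/-! ### Basic notation -/

/-- The monomial `x ^ v = ∏ i, x i ^ v i`. -/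
def mon {n : ℕ} (v : Fin n → ℕ) (x : Fin n → ℝ) : ℝ := ∏ i, x i ^ v i

/-- The open box of half-width `r` around the origin. -/
def bx {n : ℕ} (r : ℝ) : Set (Fin n → ℝ) := {x | ∀ i, |x i| < r}

/-- The complement of the coordinate hyperplanes in the box of half-width `r`. -/
def Wx {n : ℕ} (r : ℝ) : Set (Fin n → ℝ) := {x | (∀ i, |x i| < r) ∧ ∀ i, x i ≠ 0}

lemma isOpen_bx {n : ℕ} (r : ℝ) : IsOpen (bx r : Set (Fin n → ℝ)) := by
  have : (bx r : Set (Fin n → ℝ)) = ⋂ i, {x | |x i| < r} := by ext; simp [bx]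
  rw [this]
  exact isOpen_iInter_of_finite fun i => isOpen_lt (by fun_prop) continuous_const

lemma isOpen_Wx {n : ℕ} (r : ℝ) : IsOpen (Wx r : Set (Fin n → ℝ)) := by
  have : (Wx r : Set (Fin n → ℝ)) = bx r ∩ ⋂ i, {x | x i ≠ 0} := by ext; simp [bx, Wx]
  rw [this]
  exact (isOpen_bx r).inter (isOpen_iInter_of_finite fun i =>
    isOpen_ne_fun (by fun_prop) continuous_const)

lemma Wx_subset_bx {n : ℕ} (r : ℝ) : (Wx r : Set (Fin n → ℝ)) ⊆ bx r := fun _ h => h.1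

lemma zero_mem_bx {n : ℕ} {r : ℝ} (hr : 0 < r) : (0 : Fin n → ℝ) ∈ bx r := by simp [bx, hr]

lemma bx_mono {n : ℕ} {r r' : ℝ} (h : r ≤ r') : (bx r : Set (Fin n → ℝ)) ⊆ bx r' :=
  fun _ hx i => (hx i).trans_le h

lemma Wx_mono {n : ℕ} {r r' : ℝ} (h : r ≤ r') : (Wx r : Set (Fin n → ℝ)) ⊆ Wx r' :=
  fun _ hx => ⟨fun i => (hx.1 i).trans_le h, hx.2⟩

/-- Every neighbourhood of the origin contains a box. -/
lemma exists_bx_of_eventually {n : ℕ} {p : (Fin n → ℝ) → Prop} (h : ∀ᶠ x in 𝓝 0, p x) :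
    ∃ r > 0, ∀ x ∈ bx r, p x := by
  obtain ⟨r, hr, h⟩ := Metric.eventually_nhds_iff.1 h
  refine ⟨r, hr, fun x hx => h ?_⟩
  rw [dist_zero_right, pi_norm_lt_iff hr]
  exact hx

lemma bx_mem_nhds {n : ℕ} {r : ℝ} (hr : 0 < r) : (bx r : Set (Fin n → ℝ)) ∈ 𝓝 0 :=
  (isOpen_bx r).mem_nhds (zero_mem_bx hr)

lemma mon_add {n : ℕ} (v w : Fin n → ℕ) (x : Fin n → ℝ) : mon (v + w) x = mon v x * mon w x := by
  simp [mon, pow_add, Finset.prod_mul_distrib]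

lemma mon_zero {n : ℕ} (x : Fin n → ℝ) : mon 0 x = 1 := by simp [mon]

lemma mon_single {n : ℕ} (i : Fin n) (x : Fin n → ℝ) : mon (Pi.single i 1) x = x i := by
  simp only [mon]
  rw [Finset.prod_eq_single i]
  · simp
  · intro b _ hb; simp [Pi.single_eq_of_ne hb]
  · simp

lemma contDiff_mon {n : ℕ} (v : Fin n → ℕ) {k : WithTop ℕ∞} : ContDiff ℝ k (mon v) := by
  unfold mon; fun_prop

lemma mon_ne_zero {n : ℕ} (v : Fin n → ℕ) {x : Fin n → ℝ} (hx : ∀ i, x i ≠ 0) : mon v x ≠ 0 :=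
  Finset.prod_ne_zero_iff.2 fun i _ => pow_ne_zero _ (hx i)

lemma abs_mon {n : ℕ} (v : Fin n → ℕ) (x : Fin n → ℝ) : |mon v x| = mon v (fun i => |x i|) := by
  simp [mon, Finset.abs_prod]

/-- The partial derivative in the direction of the `i`-th coordinate. -/
def Dd {n : ℕ} (i : Fin n) (Ψ : (Fin n → ℝ) → ℝ) (x : Fin n → ℝ) : ℝ :=
  fderiv ℝ Ψ x (Pi.single i 1)

/-- The Euler field `x_i ∂_i`. -/
def Ed {n : ℕ} (i : Fin n) (Ψ : (Fin n → ℝ) → ℝ) (x : Fin n → ℝ) : ℝ := x i * Dd i Ψ x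

lemma Dd_add {n : ℕ} {i : Fin n} {Ψ Φ : (Fin n → ℝ) → ℝ} {x : Fin n → ℝ}
    (h1 : DifferentiableAt ℝ Ψ x) (h2 : DifferentiableAt ℝ Φ x) :
    Dd i (fun x => Ψ x + Φ x) x = Dd i Ψ x + Dd i Φ x := by
  simp only [Dd]; rw [fderiv_fun_add h1 h2]; simp

lemma Dd_mul {n : ℕ} {i : Fin n} {Ψ Φ : (Fin n → ℝ) → ℝ} {x : Fin n → ℝ}
    (h1 : DifferentiableAt ℝ Ψ x) (h2 : DifferentiableAt ℝ Φ x) :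
    Dd i (fun x => Ψ x * Φ x) x = Dd i Ψ x * Φ x + Ψ x * Dd i Φ x := by
  simp only [Dd]; rw [fderiv_fun_mul h1 h2]; simp; ring

lemma Dd_sum {n : ℕ} {ι : Type*} {i : Fin n} {s : Finset ι} {Ψ : ι → (Fin n → ℝ) → ℝ}
    {x : Fin n → ℝ} (h : ∀ k ∈ s, DifferentiableAt ℝ (Ψ k) x) :
    Dd i (fun x => ∑ k ∈ s, Ψ k x) x = ∑ k ∈ s, Dd i (Ψ k) x := by
  simp only [Dd]; rw [fderiv_fun_sum h]; simp

lemma Dd_inv {n : ℕ} {i : Fin n} {Ψ : (Fin n → ℝ) → ℝ} {x : Fin n → ℝ}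
    (h1 : DifferentiableAt ℝ Ψ x) (h2 : Ψ x ≠ 0) :
    Dd i (fun x => (Ψ x)⁻¹) x = - Dd i Ψ x * ((Ψ x)⁻¹ * (Ψ x)⁻¹) := by
  simp only [Dd]
  have := ((hasDerivAt_inv h2).comp_hasFDerivAt x h1.hasFDerivAt).fderiv
  rw [show (fun x => (Ψ x)⁻¹) = Inv.inv ∘ Ψ from rfl, this]
  simp; field_simp

lemma Dd_congr {n : ℕ} {i : Fin n} {Ψ Φ : (Fin n → ℝ) → ℝ} {x : Fin n → ℝ}
    (h : Ψ =ᶠ[𝓝 x] Φ) : Dd i Ψ x = Dd i Φ x := by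
  simp only [Dd]; rw [h.fderiv_eq]

lemma Dd_const {n : ℕ} {i : Fin n} (c : ℝ) (x : Fin n → ℝ) : Dd i (fun _ => c) x = 0 := by
  simp [Dd]

lemma Dd_coord {n : ℕ} {i k : Fin n} (x : Fin n → ℝ) :
    Dd i (fun x => x k) x = if i = k then 1 else 0 := by
  simp only [Dd]
  have : HasFDerivAt (fun x : Fin n → ℝ => x k)
    (ContinuousLinearMap.proj (R := ℝ) (φ := fun _ : Fin n => ℝ) k) x := hasFDerivAt_apply k x
  rw [this.fderiv]
  simp [Pi.single_apply, eq_comm]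

lemma Dd_pow {n : ℕ} {i : Fin n} {Ψ : (Fin n → ℝ) → ℝ} {x : Fin n → ℝ}
    (h1 : DifferentiableAt ℝ Ψ x) (k : ℕ) :
    Dd i (fun x => Ψ x ^ k) x = k * Ψ x ^ (k - 1) * Dd i Ψ x := by
  simp only [Dd]
  rw [(h1.hasFDerivAt.pow k).fderiv]
  simp

lemma mon_split {n : ℕ} (i : Fin n) (v : Fin n → ℕ) (x : Fin n → ℝ) :
    mon v x = x i ^ v i * ∏ k ∈ Finset.univ.erase i, x k ^ v k :=
  (Finset.mul_prod_erase _ (fun k => x k ^ v k) (Finset.mem_univ i)).symm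

/-- `∂_i x^v = v_i x^(v - e_i)`; the truncated subtraction is harmless since the coefficient
vanishes when `v_i = 0`. -/
lemma Dd_mon {n : ℕ} (i : Fin n) (v : Fin n → ℕ) (x : Fin n → ℝ) :
    Dd i (mon v) x = v i * mon (v - Pi.single i 1) x := by
  have h : mon v = fun x => x i ^ v i * ∏ k ∈ Finset.univ.erase i, x k ^ v k :=
    funext fun x => mon_split i v x
  have hd : ∀ s : Finset (Fin n), DifferentiableAt ℝ (fun x : Fin n → ℝ => ∏ k ∈ s, x k ^ v k) x := by
    intro s; fun_prop
  have h0 : ∀ s : Finset (Fin n), i ∉ s → Dd i (fun x : Fin n → ℝ => ∏ k ∈ s, x k ^ v k) x = 0 := by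
    intro s
    induction s using Finset.induction_on with
    | empty => intro _; simp [Dd_const]
    | insert b s hb ih =>
      intro hi
      simp only [Finset.mem_insert, not_or] at hi
      simp only [Finset.prod_insert hb]
      rw [Dd_mul (by fun_prop) (hd s), ih hi.2, Dd_pow (by fun_prop), Dd_coord, if_neg hi.1]
      simp
  rw [h, Dd_mul (by fun_prop) (hd _), h0 _ (Finset.notMem_erase _ _), Dd_pow (by fun_prop),
    Dd_coord, mon_split i (v - Pi.single i 1)]
  have h2 : ∏ k ∈ Finset.univ.erase i, x k ^ (v - Pi.single i 1 : Fin n → ℕ) k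
      = ∏ k ∈ Finset.univ.erase i, x k ^ v k :=
    Finset.prod_congr rfl fun k hk => by simp [Pi.single_eq_of_ne (Finset.ne_of_mem_erase hk)]
  rw [h2]
  simp; ring

/-- `x_i ∂_i x^v = v_i x^v`. -/
lemma Ed_mon {n : ℕ} (i : Fin n) (v : Fin n → ℕ) (x : Fin n → ℝ) :
    Ed i (mon v) x = v i * mon v x := by
  rw [Ed, Dd_mon]
  rcases Nat.eq_zero_or_pos (v i) with h | h
  · simp [h]
  · have : v = (v - Pi.single i 1) + Pi.single i 1 := by
      funext k
      rcases eq_or_ne k i with rfl | hk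
      · simp; omega
      · simp [Pi.single_eq_of_ne hk]
    conv_rhs => rw [this, mon_add, mon_single]
    rw [← this]; ring

lemma fderiv_eq_sum_Dd {n : ℕ} (Ψ : (Fin n → ℝ) → ℝ) (x : Fin n → ℝ) :
    fderiv ℝ Ψ x = ∑ i, Dd i Ψ x •
      ContinuousLinearMap.proj (R := ℝ) (φ := fun _ : Fin n => ℝ) i := by
  ext y
  have := LinearMap.pi_apply_eq_sum_univ (fderiv ℝ Ψ x).toLinearMap y
  simp only [ContinuousLinearMap.coe_coe] at this
  rw [this]
  simp only [Dd, _root_.sum_apply, _root_.smul_apply,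
    ContinuousLinearMap.proj_apply, smul_eq_mul]
  refine Finset.sum_congr rfl fun i _ => ?_
  rw [mul_comm]
  congr 2
  funext k
  simp [Pi.single_apply, eq_comm]

/-! ### Power series in several variables -/

/-- The power series with coefficient family `c`. -/
def pse {n : ℕ} (c : (Fin n → ℕ) → ℝ) (x : Fin n → ℝ) : ℝ := ∑' γ, c γ * mon γ x

/-- Absolute convergence of the power series at the point `(ρ, …, ρ)`. -/
def AbsConv {n : ℕ} (c : (Fin n → ℕ) → ℝ) (ρ : ℝ) : Prop :=
  Summable fun γ => |c γ| * mon γ (fun _ => ρ)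

/-- Coefficients of the partial derivative `∂_i` of a power series. -/
def shiftC {n : ℕ} (i : Fin n) (c : (Fin n → ℕ) → ℝ) (γ : Fin n → ℕ) : ℝ :=
  (γ i + 1) * c (γ + Pi.single i 1)

lemma hasSum_of_eq {ι : Type*} {f f' : ι → ℝ} {a a' : ℝ} (h : HasSum f a) (e : ∀ i, f' i = f i)
    (e' : a' = a) : HasSum f' a' := by
  rw [e', show f' = f from funext e]; exact h

lemma mon_const {n : ℕ} (γ : Fin n → ℕ) (ρ : ℝ) : mon γ (fun _ => ρ) = ρ ^ (∑ i, γ i) := by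
  simp [mon, Finset.prod_pow_eq_pow_sum]

lemma abs_mon_le {n : ℕ} (γ : Fin n → ℕ) {x : Fin n → ℝ} {ρ : ℝ} (hx : ∀ i, |x i| ≤ ρ) :
    |mon γ x| ≤ mon γ (fun _ => ρ) := by
  rw [abs_mon]
  exact Finset.prod_le_prod (fun i _ => by positivity)
    (fun i _ => pow_le_pow_left₀ (abs_nonneg _) (hx i) _)

lemma mon_const_nonneg {n : ℕ} (γ : Fin n → ℕ) {ρ : ℝ} (h : 0 ≤ ρ) : 0 ≤ mon γ (fun _ => ρ) := by
  rw [mon_const]; positivity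

lemma AbsConv.mono {n : ℕ} {c : (Fin n → ℕ) → ℝ} {ρ ρ' : ℝ} (h : AbsConv c ρ) (h0 : 0 ≤ ρ')
    (h1 : ρ' ≤ ρ) : AbsConv c ρ' := by
  refine Summable.of_nonneg_of_le (fun γ => ?_) (fun γ => ?_) h
  · exact mul_nonneg (abs_nonneg _) (mon_const_nonneg γ h0)
  · refine mul_le_mul_of_nonneg_left ?_ (abs_nonneg _)
    rw [mon_const, mon_const]; gcongr

lemma AbsConv.summable {n : ℕ} {c : (Fin n → ℕ) → ℝ} {ρ : ℝ} (h : AbsConv c ρ) {x : Fin n → ℝ}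
    (hx : ∀ i, |x i| ≤ ρ) : Summable fun γ => c γ * mon γ x := by
  refine Summable.of_norm_bounded h fun γ => ?_
  rw [Real.norm_eq_abs, abs_mul]
  exact mul_le_mul_of_nonneg_left (abs_mon_le γ hx) (abs_nonneg _)

lemma add_single_injective {n : ℕ} (v : Fin n → ℕ) :
    Function.Injective (fun γ : Fin n → ℕ => γ + v) := fun _ _ h => add_right_cancel h

lemma single_le_of_ne {n : ℕ} {i : Fin n} {γ : Fin n → ℕ} (h : γ i ≠ 0) :
    γ - Pi.single i 1 + Pi.single i 1 = γ := by
  funext k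
  rcases eq_or_ne k i with rfl | hk
  · simp; omega
  · simp [Pi.single_eq_of_ne hk]

/-- The termwise derivative of a power series converges absolutely on smaller boxes. -/
lemma AbsConv.deriv_aux {n : ℕ} {c : (Fin n → ℕ) → ℝ} {ρ ρ' : ℝ} (h : AbsConv c ρ) (h0 : 0 < ρ')
    (h1 : ρ' < ρ) (i : Fin n) :
    Summable fun γ => |c γ| * (γ i * mon (γ - Pi.single i 1) (fun _ => ρ')) := by
  have h2 : 0 ≤ ρ' / ρ := by have := h0.trans h1; positivity
  have h3 : ρ' / ρ < 1 := by rw [div_lt_one (h0.trans h1)]; exact h1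
  obtain ⟨K, hK⟩ := (tendsto_self_mul_const_pow_of_lt_one h2 h3).bddAbove_range
  have hK' : ∀ d : ℕ, (d : ℝ) * ρ' ^ d ≤ K * ρ ^ d := by
    intro d
    have := hK ⟨d, rfl⟩
    simp only [div_pow] at this
    have hp : 0 < ρ ^ d := pow_pos (h0.trans h1) d
    rwa [← mul_div_assoc, div_le_iff₀ hp] at this
  refine Summable.of_nonneg_of_le (fun γ => ?_) (fun γ => ?_) (Summable.mul_left (K / ρ') h)
  · have := mon_const_nonneg (γ - Pi.single i 1) h0.le; positivity
  · rcases Nat.eq_zero_or_pos (γ i) with hz | hz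
    · simp only [hz, Nat.cast_zero, zero_mul, mul_zero]
      have hK0 : 0 ≤ K := by simpa using hK' 0
      have := mon_const_nonneg γ (h0.trans h1).le
      positivity
    · have e : mon γ (fun _ => ρ') = mon (γ - Pi.single i 1) (fun _ => ρ') * ρ' := by
        conv_lhs => rw [← single_le_of_ne hz.ne']
        rw [mon_add, mon_single]
      have e2 : mon (γ - Pi.single i 1) (fun _ => ρ') = ρ' ^ (∑ i, γ i) / ρ' := by
        rw [← mon_const γ, e]; field_simp
      rw [e2, mon_const]
      have hle : (γ i : ℝ) ≤ ((∑ i, γ i : ℕ) : ℝ) := by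
        exact_mod_cast Finset.single_le_sum (f := γ) (fun _ _ => Nat.zero_le _) (Finset.mem_univ i)
      have := hK' (∑ i, γ i)
      have h4 : (γ i : ℝ) * ρ' ^ (∑ i, γ i) ≤ K * ρ ^ (∑ i, γ i) :=
        (mul_le_mul_of_nonneg_right hle (by positivity)).trans this
      calc |c γ| * (γ i * (ρ' ^ (∑ i, γ i) / ρ')) = |c γ| / ρ' * (γ i * ρ' ^ (∑ i, γ i)) := by ring
        _ ≤ |c γ| / ρ' * (K * ρ ^ (∑ i, γ i)) := by gcongr
        _ = _ := by ring

lemma AbsConv.shiftC {n : ℕ} {c : (Fin n → ℕ) → ℝ} {ρ ρ' : ℝ} (h : AbsConv c ρ) (h0 : 0 < ρ')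
    (h1 : ρ' < ρ) (i : Fin n) : AbsConv (shiftC i c) ρ' := by
  have := (h.deriv_aux h0 h1 i).comp_injective (add_single_injective (Pi.single i 1))
  refine this.congr fun γ => ?_
  simp only [_root_.shiftC, Function.comp]
  rw [abs_mul, abs_of_nonneg (by positivity : (0:ℝ) ≤ γ i + 1)]
  simp; ring

/-- Termwise differentiation of a power series inside its box of absolute convergence. -/
lemma AbsConv.hasFDerivAt {n : ℕ} {c : (Fin n → ℕ) → ℝ} {ρ : ℝ} (h : AbsConv c ρ) (hρ : 0 < ρ)
    {x : Fin n → ℝ} (hx : x ∈ bx ρ) :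
    HasFDerivAt (pse c) (∑ i, pse (_root_.shiftC i c) x •
      ContinuousLinearMap.proj (R := ℝ) (φ := fun _ : Fin n => ℝ) i) x := by
  obtain ⟨ρ', h0, h1, hx'⟩ : ∃ ρ', 0 < ρ' ∧ ρ' < ρ ∧ x ∈ bx ρ' := by
    have hn : ‖x‖ < ρ := (pi_norm_lt_iff hρ).2 hx
    obtain ⟨ρ', h2, h3⟩ := exists_between hn
    exact ⟨ρ', (norm_nonneg _).trans_lt h2, h3, fun i => (norm_le_pi_norm x i).trans_lt h2⟩
  set f' : (Fin n → ℕ) → (Fin n → ℝ) → ((Fin n → ℝ) →L[ℝ] ℝ) := fun γ x =>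
    ∑ i, (c γ * (γ i * mon (γ - Pi.single i 1) x)) •
      ContinuousLinearMap.proj (R := ℝ) (φ := fun _ : Fin n => ℝ) i with hf'
  have hder : ∀ γ, ∀ x ∈ (bx ρ' : Set (Fin n → ℝ)),
      HasFDerivAt (fun x => c γ * mon γ x) (f' γ x) x := by
    intro γ x _
    have hd : DifferentiableAt ℝ (mon γ) x := ((contDiff_mon γ (k := 1)).differentiable (by simp)) x
    have := (hd.hasFDerivAt.const_mul (c γ))
    have e : f' γ x = c γ • fderiv ℝ (mon γ) x := by
      rw [fderiv_eq_sum_Dd, Finset.smul_sum]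
      refine Finset.sum_congr rfl fun i _ => ?_
      rw [Dd_mon, smul_smul]
    rw [e]; exact this
  have hu : Summable fun γ => ∑ i, |c γ| * (γ i * mon (γ - Pi.single i 1) (fun _ => ρ')) :=
    summable_sum fun i _ => h.deriv_aux h0 h1 i
  have hbd : ∀ γ, ∀ x ∈ (bx ρ' : Set (Fin n → ℝ)), ‖f' γ x‖ ≤
      ∑ i, |c γ| * (γ i * mon (γ - Pi.single i 1) (fun _ => ρ')) := by
    intro γ x hx
    refine (norm_sum_le _ _).trans (Finset.sum_le_sum fun i _ => ?_)
    rw [norm_smul]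
    have hp : ‖ContinuousLinearMap.proj (R := ℝ) (φ := fun _ : Fin n => ℝ) i‖ ≤ 1 :=
      ContinuousLinearMap.opNorm_le_bound _ zero_le_one fun y => by
        simpa using norm_le_pi_norm y i
    have h5 : ‖c γ * (γ i * mon (γ - Pi.single i 1) x)‖
        ≤ |c γ| * (γ i * mon (γ - Pi.single i 1) (fun _ => ρ')) := by
      rw [Real.norm_eq_abs, abs_mul, abs_mul, Nat.abs_cast]
      gcongr
      exact abs_mon_le _ fun i => (hx i).le
    calc _ ≤ ‖c γ * (γ i * mon (γ - Pi.single i 1) x)‖ * 1 := by gcongr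
      _ ≤ _ := by rw [mul_one]; exact h5
  have hconv : Convex ℝ (bx ρ' : Set (Fin n → ℝ)) := by
    have : (bx ρ' : Set (Fin n → ℝ)) = Metric.ball 0 ρ' := by
      ext y; rw [mem_ball_zero_iff, pi_norm_lt_iff h0]; rfl
    rw [this]; exact convex_ball _ _
  have key := hasFDerivAt_tsum_of_isPreconnected hu (isOpen_bx ρ') hconv.isPreconnected hder hbd
    (zero_mem_bx h0) ((h.mono h0.le h1.le).summable (x := 0) (by simp [h0.le])) hx'
  have hs : HasSum (fun γ => f' γ x) (∑ i, pse (_root_.shiftC i c) x •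
      ContinuousLinearMap.proj (R := ℝ) (φ := fun _ : Fin n => ℝ) i) := by
    refine hasSum_sum fun i _ => HasSum.smul_const ?_ _
    have h6 : HasSum (fun γ => _root_.shiftC i c γ * mon γ x) (pse (_root_.shiftC i c) x) :=
      ((h.shiftC h0 h1 i).summable fun i => (hx' i).le).hasSum
    rw [← (add_single_injective (Pi.single i 1 : Fin n → ℕ)).hasSum_iff]
    · refine hasSum_of_eq h6 (fun γ => ?_) rfl
      simp [_root_.shiftC]; ring
    · intro γ hγ
      have : γ i = 0 := by
        by_contra hne
        exact hγ ⟨_, single_le_of_ne hne⟩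
      simp [this]
  rw [hs.tsum_eq] at key
  exact key

/-- A convergent power series is smooth inside its polydisc of convergence. -/
lemma AbsConv.contDiffOn {n : ℕ} {c : (Fin n → ℕ) → ℝ} {ρ : ℝ} (h : AbsConv c ρ) (hρ : 0 < ρ) (N : ℕ) :
    ContDiffOn ℝ N (pse c) (bx ρ) := by
  induction N generalizing c ρ with
  | zero =>
    exact contDiffOn_zero.2 fun x hx => (h.hasFDerivAt hρ hx).continuousAt.continuousWithinAt
  | succ N ih =>
    push_cast
    rw [contDiffOn_succ_iff_fderiv_of_isOpen (isOpen_bx ρ)]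
    refine ⟨fun x hx => (h.hasFDerivAt hρ hx).differentiableAt.differentiableWithinAt,
      by simp, ?_⟩
    have : ContDiffOn ℝ N (fun x => ∑ i, pse (_root_.shiftC i c) x •
      ContinuousLinearMap.proj (R := ℝ) (φ := fun _ : Fin n => ℝ) i) (bx ρ) := by
      refine ContDiffOn.sum fun i _ => ContDiffOn.fun_smul ?_ contDiffOn_const
      intro x hx
      have hn : ‖x‖ < ρ := (pi_norm_lt_iff hρ).2 hx
      obtain ⟨ρ', h2, h3⟩ := exists_between hn
      have h0 : 0 < ρ' := (norm_nonneg _).trans_lt h2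
      have hx' : x ∈ bx ρ' := fun i => (norm_le_pi_norm x i).trans_lt h2
      exact ((ih (h.shiftC h0 h3 i) h0).contDiffAt ((isOpen_bx ρ').mem_nhds hx')).contDiffWithinAt
    exact this.congr fun x hx => (h.hasFDerivAt hρ hx).fderiv

lemma AbsConv.Dd {n : ℕ} {c : (Fin n → ℕ) → ℝ} {ρ : ℝ} (h : AbsConv c ρ) (hρ : 0 < ρ)
    {x : Fin n → ℝ} (hx : x ∈ bx ρ) (i : Fin n) : _root_.Dd i (pse c) x = pse (_root_.shiftC i c) x := by
  rw [_root_.Dd, (h.hasFDerivAt hρ hx).fderiv]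
  simp [_root_.sum_apply, Pi.single_apply]

lemma contDiff_mul_of_tsupport {n : ℕ} {χ Ψ : (Fin n → ℝ) → ℝ} {U : Set (Fin n → ℝ)}
    (hU : IsOpen U) (hχ : ContDiff ℝ (⊤ : ℕ∞) χ) (hs : tsupport χ ⊆ U)
    (hΨ : ContDiffOn ℝ (⊤ : ℕ∞) Ψ U) : ContDiff ℝ (⊤ : ℕ∞) fun x => χ x * Ψ x := by
  refine contDiff_iff_contDiffAt.2 fun x => ?_
  by_cases hx : x ∈ tsupport χ
  · exact hχ.contDiffAt.mul (hΨ.contDiffAt (hU.mem_nhds (hs hx)))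
  · have : (fun x => χ x * Ψ x) =ᶠ[𝓝 x] fun _ => 0 := by
      filter_upwards [(isClosed_tsupport χ).isOpen_compl.mem_nhds hx] with y hy
      rw [image_eq_zero_of_notMem_tsupport hy, zero_mul]
    exact contDiffAt_const.congr_of_eventuallyEq this

/-- Splitting of a convergent power series along finitely many monomials: each multi-index `α` in
the support is attributed to one `cl α ≤ α` in the finite set `V`, and the terms attributed to `v`
are collected into `x^v g_v`. Cutting off outside a box makes the `g_v` smooth everywhere. If all
multi-indices attributed to `v` have the same `j`-th entry as `v`, then `g_v` does not depend on
`x_j` near the origin. -/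
theorem power_split {n : ℕ} {f : (Fin n → ℝ) → ℝ} {a : (Fin n → ℕ) → ℝ}
    (hfa : ∀ᶠ x in 𝓝 (0 : Fin n → ℝ), HasSum (fun α => a α * ∏ i, x i ^ α i) (f x))
    (cl : (Fin n → ℕ) → (Fin n → ℕ)) (V : Finset (Fin n → ℕ))
    (hcl : ∀ α, a α ≠ 0 → cl α ∈ V ∧ cl α ≤ α) (hV : ∀ v ∈ V, cl v = v) :
    ∃ r > 0, ∃ g : (Fin n → ℕ) → (Fin n → ℝ) → ℝ, (∀ v, ContDiff ℝ (⊤ : ℕ∞) (g v)) ∧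
      (∀ x ∈ bx r, f x = ∑ v ∈ V, mon v x * g v x) ∧ (∀ v ∈ V, g v 0 = a v) ∧
      ∀ v ∈ V, ∀ j, (∀ α, a α ≠ 0 → cl α = v → α j = v j) → ∀ x ∈ bx r, Dd j (g v) x = 0 := by
  obtain ⟨ρ₁, hρ₁, hf⟩ := exists_bx_of_eventually hfa
  set ρ := ρ₁ / 2 with hρd
  have hρ : 0 < ρ := by positivity
  have hρ1 : ρ < ρ₁ := by linarith
  have habs : AbsConv a ρ := by
    have := (hf (fun _ => ρ) (fun i => by simpa [abs_of_pos hρ] using hρ1)).summable.abs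
    refine this.congr fun α => ?_
    rw [abs_mul]; congr 1
    exact abs_of_nonneg (Finset.prod_nonneg fun i _ => by positivity)
  set c : (Fin n → ℕ) → (Fin n → ℕ) → ℝ := fun v γ => if cl (γ + v) = v then a (γ + v) else 0 with hc
  have hcconv : ∀ v, AbsConv (c v) ρ := by
    intro v
    have h1 := (habs.comp_injective (add_single_injective v))
    have hv : 0 < mon v (fun _ => ρ) := by rw [mon_const]; positivity
    have h2 := h1.mul_left (mon v (fun _ => ρ))⁻¹
    refine Summable.of_nonneg_of_le (fun γ => mul_nonneg (abs_nonneg _) (mon_const_nonneg γ hρ.le))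
      (fun γ => ?_) h2
    have : |c v γ| ≤ |a (γ + v)| := by
      simp only [hc]; split_ifs <;> simp
    simp only [Function.comp, mon_add]
    calc _ ≤ |a (γ + v)| * mon γ (fun _ => ρ) :=
          mul_le_mul_of_nonneg_right this (mon_const_nonneg γ hρ.le)
      _ = _ := by field_simp
  let χ : ContDiffBump (0 : Fin n → ℝ) := ⟨ρ / 4, ρ / 2, by positivity, by linarith⟩
  have hχ1 : ∀ x ∈ (bx (ρ / 4) : Set (Fin n → ℝ)), χ x = 1 := by
    intro x hx
    refine χ.one_of_mem_closedBall ?_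
    rw [mem_closedBall_zero_iff]
    have h1 : ‖x‖ < ρ / 4 := (pi_norm_lt_iff (by positivity : (0:ℝ) < ρ / 4)).2 hx
    exact h1.le
  have hχs : tsupport χ ⊆ bx ρ := by
    rw [χ.tsupport_eq]
    intro x hx i
    rw [mem_closedBall_zero_iff] at hx
    have h1 : ‖x‖ ≤ ρ / 2 := hx
    have h2 := norm_le_pi_norm x i
    rw [Real.norm_eq_abs] at h2
    linarith
  refine ⟨ρ / 4, by positivity, fun v x => χ x * pse (c v) x, ?_, ?_, ?_, ?_⟩
  · intro v
    refine contDiff_mul_of_tsupport (isOpen_bx ρ) χ.contDiff hχs ?_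
    exact contDiffOn_infty.2 fun N => (hcconv v).contDiffOn hρ N
  · intro x hx
    have hxρ : ∀ i, |x i| ≤ ρ := fun i => by have := hx i; linarith
    have hfx := hf x (fun i => by have := hx i; linarith)
    have hterm : ∀ v ∈ V, HasSum (fun α => if cl α = v then a α * mon α x else 0)
        (mon v x * (χ x * pse (c v) x)) := by
      intro v _
      rw [hχ1 x hx, one_mul]
      have h1 := (((hcconv v).summable hxρ).hasSum).mul_left (mon v x)
      rw [← (add_single_injective v).hasSum_iff]
      · refine hasSum_of_eq h1 (fun γ => ?_) rfl
        simp only [Function.comp, hc, mon_add]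
        split_ifs <;> ring
      · intro α hα
        by_cases hav : cl α = v
        · rw [if_pos hav]
          by_contra hne
          have ha : a α ≠ 0 := fun h => hne (by rw [h, zero_mul])
          have hle := (hcl α ha).2
          rw [hav] at hle
          exact hα ⟨α - v, tsub_add_cancel_of_le hle⟩
        · rw [if_neg hav]
    have hsum := hasSum_sum hterm
    refine hfx.unique ?_
    refine hasSum_of_eq hsum (fun α => ?_) rfl
    by_cases ha : a α = 0
    · simp [ha]
    · rw [Finset.sum_ite_eq, if_pos (hcl α ha).1]; rfl
  · intro v hv
    have h0 : pse (c v) 0 = a v := by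
      rw [pse, tsum_eq_single 0]
      · simp [hc, mon_zero, hV v hv]
      · intro γ hγ
        obtain ⟨i, hi⟩ : ∃ i, γ i ≠ 0 := by
          by_contra h; push Not at h; exact hγ (funext h)
        have : mon γ (0 : Fin n → ℝ) = 0 :=
          Finset.prod_eq_zero (Finset.mem_univ i) (by simp [hi])
        rw [this, mul_zero]
    show χ 0 * pse (c v) 0 = a v
    rw [hχ1 0 (zero_mem_bx (by positivity)), h0, one_mul]
  · intro v hv j hj x hx
    have he : (fun x => χ x * pse (c v) x) =ᶠ[𝓝 x] pse (c v) := by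
      filter_upwards [(isOpen_bx (ρ / 4)).mem_nhds hx] with y hy
      rw [hχ1 y hy, one_mul]
    rw [Dd_congr he, (hcconv v).Dd hρ (bx_mono (by linarith) hx), pse]
    have : ∀ γ, shiftC j (c v) γ = 0 := by
      intro γ
      have : c v (γ + Pi.single j 1) = 0 := by
        simp only [hc]
        split_ifs with h
        · by_contra hne
          have := hj _ hne h
          simp at this
        · rfl
      rw [shiftC, this, mul_zero]
    simp [this]

/-! ### Finitely generated cones -/

lemma dotR_add_left {n : ℕ} (a b y : Fin n → ℝ) : dotR (a + b) y = dotR a y + dotR b y := by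
  simp [dotR, add_mul, Finset.sum_add_distrib]

lemma dotR_sub_left {n : ℕ} (a b y : Fin n → ℝ) : dotR (a - b) y = dotR a y - dotR b y := by
  simp [dotR, sub_mul, Finset.sum_sub_distrib]

lemma dotR_smul_left {n : ℕ} (c : ℝ) (a y : Fin n → ℝ) : dotR (c • a) y = c * dotR a y := by
  simp [dotR, Finset.mul_sum, mul_assoc]

lemma dotR_comm {n : ℕ} (a y : Fin n → ℝ) : dotR a y = dotR y a := by
  simp [dotR, mul_comm]

lemma dotR_add_right {n : ℕ} (a b y : Fin n → ℝ) : dotR y (a + b) = dotR y a + dotR y b := by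
  rw [dotR_comm, dotR_add_left, dotR_comm a, dotR_comm b]

lemma dotR_sub_right {n : ℕ} (a b y : Fin n → ℝ) : dotR y (a - b) = dotR y a - dotR y b := by
  rw [dotR_comm, dotR_sub_left, dotR_comm a, dotR_comm b]

lemma dotR_smul_right {n : ℕ} (c : ℝ) (a y : Fin n → ℝ) : dotR y (c • a) = c * dotR y a := by
  rw [dotR_comm, dotR_smul_left, dotR_comm a]

lemma dotR_single_left {n : ℕ} (i : Fin n) (y : Fin n → ℝ) : dotR (Pi.single i 1) y = y i := by
  simp [dotR, Pi.single_apply]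

lemma dotR_single_right {n : ℕ} (i : Fin n) (y : Fin n → ℝ) : dotR y (Pi.single i 1) = y i := by
  rw [dotR_comm, dotR_single_left]

lemma dotR_sum_right {n : ℕ} {ι : Type*} (s : Finset ι) (y : Fin n → ℝ) (v : ι → Fin n → ℝ) :
    dotR y (∑ k ∈ s, v k) = ∑ k ∈ s, dotR y (v k) := by
  simp only [dotR, Finset.sum_apply, Finset.mul_sum]
  rw [Finset.sum_comm]

lemma dotR_nonneg {n : ℕ} {a y : Fin n → ℝ} (ha : ∀ i, 0 ≤ a i) (hy : ∀ i, 0 ≤ y i) :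
    0 ≤ dotR a y := Finset.sum_nonneg fun i _ => mul_nonneg (ha i) (hy i)

lemma dotR_mono_right {n : ℕ} {a y z : Fin n → ℝ} (ha : ∀ i, 0 ≤ a i) (h : ∀ i, y i ≤ z i) :
    dotR a y ≤ dotR a z := Finset.sum_le_sum fun i _ => mul_le_mul_of_nonneg_left (h i) (ha i)

lemma continuous_dotR_right {n : ℕ} (a : Fin n → ℝ) : Continuous (dotR a) := by
  unfold dotR; fun_prop

lemma continuous_dotR_left {n : ℕ} (a : Fin n → ℝ) : Continuous (fun u => dotR u a) := by
  unfold dotR; fun_prop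

/-- The intersection of the nonnegative orthant with finitely many half-spaces through `0`. -/
def conePoly {n : ℕ} (L : List (Fin n → ℝ)) : Set (Fin n → ℝ) :=
  {u | (∀ i, 0 ≤ u i) ∧ ∀ l ∈ L, 0 ≤ dotR l u}

/-- A polyhedral cone is tested by finitely many of its elements: a linear functional is
nonnegative on the cone as soon as it is nonnegative on them. This is Fourier–Motzkin elimination,
carried out on the dual side. -/
lemma exists_generators {n : ℕ} (L : List (Fin n → ℝ)) :
    ∃ G : Finset (Fin n → ℝ), (∀ g ∈ G, g ∈ conePoly L) ∧
      ∀ d, (∀ g ∈ G, 0 ≤ dotR d g) → ∀ u ∈ conePoly L, 0 ≤ dotR d u := by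
  induction L with
  | nil =>
    refine ⟨Finset.univ.image fun i => Pi.single i 1, ?_, ?_⟩
    · intro g hg
      obtain ⟨i, -, rfl⟩ := Finset.mem_image.1 hg
      refine ⟨fun k => ?_, by simp⟩
      by_cases h : k = i
      · subst h; simp
      · simp [Pi.single_eq_of_ne h]
    · intro d hd u hu
      refine dotR_nonneg (fun i => ?_) hu.1
      have := hd (Pi.single i 1) (Finset.mem_image_of_mem _ (Finset.mem_univ i))
      rwa [dotR_single_right] at this
  | cons l L ih =>
    obtain ⟨G, hG, hd⟩ := ih
    refine ⟨G.filter (fun g => 0 ≤ dotR l g) ∪ ((G ×ˢ G).filter (fun p => 0 < dotR l p.1 ∧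
      dotR l p.2 < 0)).image (fun p => dotR l p.1 • p.2 - dotR l p.2 • p.1), ?_, ?_⟩
    · intro g hg
      rcases Finset.mem_union.1 hg with h | h
      · rw [Finset.mem_filter] at h
        refine ⟨(hG g h.1).1, fun l' hl' => ?_⟩
        rcases List.mem_cons.1 hl' with rfl | h'
        · exact h.2
        · exact (hG g h.1).2 l' h'
      · obtain ⟨⟨g, k⟩, hp, rfl⟩ := Finset.mem_image.1 h
        simp only [Finset.mem_filter, Finset.mem_product] at hp
        obtain ⟨⟨hg1, hk1⟩, hg2, hk2⟩ := hp
        refine ⟨fun i => ?_, fun l' hl' => ?_⟩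
        · simp only [Pi.sub_apply, Pi.smul_apply, smul_eq_mul]
          nlinarith [mul_nonneg hg2.le ((hG k hk1).1 i), mul_nonneg (neg_nonneg.2 hk2.le) ((hG g hg1).1 i)]
        · simp only [dotR_sub_right, dotR_smul_right]
          rcases List.mem_cons.1 hl' with rfl | h'
          · linarith
          · nlinarith [mul_nonneg hg2.le ((hG k hk1).2 l' h'),
              mul_nonneg (neg_nonneg.2 hk2.le) ((hG g hg1).2 l' h')]
    · intro d hpos u hu
      -- a multiplier `t ≥ 0` for which `d - t l` is nonnegative on the old generators
      obtain ⟨t, ht0, ht⟩ : ∃ t : ℝ, 0 ≤ t ∧ ∀ g ∈ G, 0 ≤ dotR (d - t • l) g := by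
        set H := insert 0 ((G.filter fun k => dotR l k < 0).image fun k => dotR d k / dotR l k)
          with hH
        have hne : H.Nonempty := ⟨0, Finset.mem_insert_self _ _⟩
        refine ⟨H.max' hne, H.le_max' _ (Finset.mem_insert_self _ _), fun g hg => ?_⟩
        rw [dotR_sub_left, dotR_smul_left]
        rcases lt_trichotomy (dotR l g) 0 with h | h | h
        · have := H.le_max' (dotR d g / dotR l g) (Finset.mem_insert_of_mem
            (Finset.mem_image_of_mem _ (Finset.mem_filter.2 ⟨hg, h⟩)))
          rw [div_le_iff_of_neg h] at this
          linarith
        · rw [h, mul_zero, sub_zero]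
          exact hpos g (Finset.mem_union_left _ (Finset.mem_filter.2 ⟨hg, h.ge⟩))
        · have hg' := hpos g (Finset.mem_union_left _ (Finset.mem_filter.2 ⟨hg, h.le⟩))
          suffices H.max' hne ≤ dotR d g / dotR l g by
            rw [le_div_iff₀ h] at this; linarith
          refine Finset.max'_le _ _ _ fun y hy => ?_
          rcases Finset.mem_insert.1 hy with rfl | hy
          · positivity
          · obtain ⟨k, hk, rfl⟩ := Finset.mem_image.1 hy
            obtain ⟨hk1, hk2⟩ := Finset.mem_filter.1 hk
            have h3 := hpos _ (Finset.mem_union_right _ (Finset.mem_image.2 ⟨(g, k),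
              Finset.mem_filter.2 ⟨Finset.mem_product.2 ⟨hg, hk1⟩, h, hk2⟩, rfl⟩))
            simp only [dotR_sub_right, dotR_smul_right] at h3
            rw [div_le_iff_of_neg hk2, div_mul_eq_mul_div, div_le_iff₀ h]
            linarith
      have h1 := hd _ ht u ⟨hu.1, fun l' hl' => hu.2 l' (List.mem_cons_of_mem _ hl')⟩
      have h2 := hu.2 l List.mem_cons_self
      rw [dotR_sub_left, dotR_smul_left] at h1
      nlinarith [mul_nonneg ht0 h2]

/-! ### Newton polyhedra with finitely many generators -/

/-- A multi-index as a real vector. -/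
def cv {n : ℕ} (v : Fin n → ℕ) : Fin n → ℝ := fun i => (v i : ℝ)

lemma cv_nonneg {n : ℕ} (v : Fin n → ℕ) (i : Fin n) : 0 ≤ cv v i := Nat.cast_nonneg _

/-- The support function `N(u) = min_{v ∈ V} ⟨u, v⟩` (and `0` when `V` is empty). -/
def NN {n : ℕ} (V : Finset (Fin n → ℕ)) (u : Fin n → ℝ) : ℝ :=
  if h : V.Nonempty then V.inf' h (fun v => dotR u (cv v)) else 0

lemma NN_le {n : ℕ} {V : Finset (Fin n → ℕ)} {v : Fin n → ℕ} (hv : v ∈ V) (u : Fin n → ℝ) :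
    NN V u ≤ dotR u (cv v) := by
  rw [NN, dif_pos ⟨v, hv⟩]; exact Finset.inf'_le _ hv

lemma exists_NN {n : ℕ} {V : Finset (Fin n → ℕ)} (hV : V.Nonempty) (u : Fin n → ℝ) :
    ∃ v ∈ V, NN V u = dotR u (cv v) := by
  rw [NN, dif_pos hV]; exact Finset.exists_mem_eq_inf' hV _

lemma le_NN {n : ℕ} {V : Finset (Fin n → ℕ)} (hV : V.Nonempty) {u : Fin n → ℝ} {c : ℝ}
    (h : ∀ v ∈ V, c ≤ dotR u (cv v)) : c ≤ NN V u := by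
  obtain ⟨v, hv, e⟩ := exists_NN hV u
  rw [e]; exact h v hv

/-- `V` is a finite set of exponents from `S` dominating all of `S`. -/
structure Dom {n : ℕ} (S : Set (Fin n → ℕ)) (V : Finset (Fin n → ℕ)) : Prop where
  sub : ∀ v ∈ V, v ∈ S
  dom : ∀ α ∈ S, ∃ v ∈ V, v ≤ α

section Newton

variable {n : ℕ} {S : Set (Fin n → ℕ)} {V : Finset (Fin n → ℕ)}

/-- The points of the Newton polyhedron are those which dominate, coordinatewise, a convex
combination of the finitely many generators. -/
lemma Dom.mem_iff (h : Dom S V) (y : Fin n → ℝ) : y ∈ newtonPolyhedron S ↔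
    ∃ c : (Fin n → ℕ) → ℝ, (∀ v, 0 ≤ c v) ∧ ∑ v ∈ V, c v = 1 ∧
      ∀ i, (∑ v ∈ V, c v • cv v) i ≤ y i := by
  constructor
  · intro hy
    refine convexHull_min (t := {y | ∃ c : (Fin n → ℕ) → ℝ, (∀ v, 0 ≤ c v) ∧ ∑ v ∈ V, c v = 1 ∧
      ∀ i, (∑ v ∈ V, c v • cv v) i ≤ y i}) ?_ ?_ hy
    · rintro x ⟨α, hα, hx⟩
      obtain ⟨v, hv, hle⟩ := h.dom α hα
      refine ⟨fun w => if w = v then 1 else 0, fun w => by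
        show (0:ℝ) ≤ if w = v then 1 else 0
        split_ifs <;> simp, by simp [hv], ?_⟩
      intro i
      simp only [ite_smul, one_smul, zero_smul, Finset.sum_ite_eq', if_pos hv]
      exact (Nat.cast_le.2 (hle i)).trans (hx i)
    · rintro x ⟨c, hc, hc1, hcx⟩ y ⟨d, hd, hd1, hdy⟩ s t hs ht hst
      refine ⟨fun v => s * c v + t * d v, fun v => by have := hc v; have := hd v; positivity, ?_, ?_⟩
      · rw [Finset.sum_add_distrib, ← Finset.mul_sum, ← Finset.mul_sum, hc1, hd1]; linarith
      · intro i
        have e : ∑ v ∈ V, (s * c v + t * d v) • cv v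
            = s • ∑ v ∈ V, c v • cv v + t • ∑ v ∈ V, d v • cv v := by
          rw [Finset.smul_sum, Finset.smul_sum, ← Finset.sum_add_distrib]
          refine Finset.sum_congr rfl fun v _ => ?_
          rw [add_smul, smul_smul, smul_smul]
        rw [e]
        simp only [Pi.add_apply, Pi.smul_apply, smul_eq_mul]
        have := mul_le_mul_of_nonneg_left (hcx i) hs
        have := mul_le_mul_of_nonneg_left (hdy i) ht
        linarith
  · rintro ⟨c, hc, hc1, hcy⟩
    set z := y - ∑ v ∈ V, c v • cv v with hz
    have hz0 : ∀ i, 0 ≤ z i := fun i => by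
      simp only [hz, Pi.sub_apply]; linarith [hcy i]
    have e : y = ∑ v ∈ V, c v • (cv v + z) := by
      simp only [smul_add, Finset.sum_add_distrib, ← Finset.sum_smul, hc1, one_smul, hz]
      abel
    rw [e]
    refine (convex_convexHull ℝ _).sum_mem (fun v _ => hc v) hc1 fun v hv => ?_
    refine subset_convexHull ℝ _ ⟨v, h.sub v hv, fun i => ?_⟩
    have := hz0 i
    simp only [Pi.add_apply, cv]; linarith

lemma Dom.mem_of_le (h : Dom S V) {y z : Fin n → ℝ} (hy : y ∈ newtonPolyhedron S)
    (hz : ∀ i, y i ≤ z i) : z ∈ newtonPolyhedron S := by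
  obtain ⟨c, h1, h2, h3⟩ := (h.mem_iff y).1 hy
  exact (h.mem_iff z).2 ⟨c, h1, h2, fun i => (h3 i).trans (hz i)⟩

lemma Dom.cv_mem {α : Fin n → ℕ} (hα : α ∈ S) : cv α ∈ newtonPolyhedron S :=
  subset_convexHull ℝ _ ⟨α, hα, fun _ => le_rfl⟩

lemma dotR_conv {c : (Fin n → ℕ) → ℝ} (u : Fin n → ℝ) :
    dotR u (∑ v ∈ V, c v • cv v) = ∑ v ∈ V, c v * dotR u (cv v) := by
  rw [dotR_sum_right]; simp only [dotR_smul_right]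

lemma NN_le_conv {c : (Fin n → ℕ) → ℝ} (hc : ∀ v, 0 ≤ c v) (hc1 : ∑ v ∈ V, c v = 1)
    (u : Fin n → ℝ) : NN V u ≤ dotR u (∑ v ∈ V, c v • cv v) := by
  rw [dotR_conv]
  calc NN V u = ∑ v ∈ V, c v * NN V u := by rw [← Finset.sum_mul, hc1, one_mul]
    _ ≤ _ := Finset.sum_le_sum fun v hv => mul_le_mul_of_nonneg_left (NN_le hv u) (hc v)

lemma Dom.NN_le_of_mem (h : Dom S V) {u y : Fin n → ℝ} (hu : ∀ i, 0 ≤ u i)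
    (hy : y ∈ newtonPolyhedron S) : NN V u ≤ dotR u y := by
  obtain ⟨c, hc, hc1, hcy⟩ := (h.mem_iff y).1 hy
  exact (NN_le_conv hc hc1 u).trans (dotR_mono_right hu hcy)

lemma Dom.mem_traceFace (h : Dom S V) (hV : V.Nonempty) {u : Fin n → ℝ} (hu : ∀ i, 0 ≤ u i)
    (y : Fin n → ℝ) : y ∈ traceFace (newtonPolyhedron S) u ↔
      y ∈ newtonPolyhedron S ∧ dotR u y = NN V u := by
  constructor
  · rintro ⟨h1, h2⟩
    refine ⟨h1, le_antisymm ?_ (h.NN_le_of_mem hu h1)⟩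
    obtain ⟨v, hv, e⟩ := exists_NN hV u
    rw [e]; exact h2 _ (Dom.cv_mem (h.sub v hv))
  · rintro ⟨h1, h2⟩
    exact ⟨h1, fun z hz => h2 ▸ h.NN_le_of_mem hu hz⟩

/-- For a strictly positive functional, the face is the convex hull of the minimizing elements
of `V`. -/
lemma Dom.traceFace_pos (h : Dom S V) (hV : V.Nonempty) {u : Fin n → ℝ} (hu : ∀ i, 0 < u i)
    {y : Fin n → ℝ} (hy : y ∈ traceFace (newtonPolyhedron S) u) :
    ∃ c : (Fin n → ℕ) → ℝ, (∀ v, 0 ≤ c v) ∧ ∑ v ∈ V, c v = 1 ∧ y = ∑ v ∈ V, c v • cv v ∧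
      ∀ v ∈ V, c v ≠ 0 → dotR u (cv v) = NN V u := by
  obtain ⟨h1, h2⟩ := (h.mem_traceFace hV (fun i => (hu i).le) y).1 hy
  obtain ⟨c, hc, hc1, hcy⟩ := (h.mem_iff y).1 h1
  have h3 := NN_le_conv hc hc1 u
  have h4 : dotR u (y - ∑ v ∈ V, c v • cv v) ≤ 0 := by rw [dotR_sub_right]; linarith
  have h5 : ∀ i ∈ Finset.univ, 0 ≤ u i * (y - ∑ v ∈ V, c v • cv v) i := fun i _ =>
    mul_nonneg (hu i).le (by simp only [Pi.sub_apply]; linarith [hcy i])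
  have h6 : ∀ i, y i = (∑ v ∈ V, c v • cv v) i := by
    intro i
    have := (Finset.sum_eq_zero_iff_of_nonneg h5).1 (le_antisymm h4 (Finset.sum_nonneg h5)) i
      (Finset.mem_univ i)
    rcases mul_eq_zero.1 this with h | h
    · exact absurd h (hu i).ne'
    · simp only [Pi.sub_apply] at h; linarith
  have e : y = ∑ v ∈ V, c v • cv v := funext h6
  refine ⟨c, hc, hc1, e, fun v hv hne => ?_⟩
  rw [e, dotR_conv] at h2
  have h7 : ∑ v ∈ V, c v * (dotR u (cv v) - NN V u) = 0 := by
    simp only [mul_sub, Finset.sum_sub_distrib, ← Finset.sum_mul, hc1]; linarith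
  have := (Finset.sum_eq_zero_iff_of_nonneg (fun v hv => mul_nonneg (hc v)
    (sub_nonneg.2 (NN_le hv u)))).1 h7 v hv
  rcases mul_eq_zero.1 this with h | h
  · exact absurd h hne
  · linarith

open scoped Pointwise in
lemma Dom.isClosed (h : Dom S V) : IsClosed (newtonPolyhedron S) := by
  have e : newtonPolyhedron S = convexHull ℝ ((V.image cv : Finset (Fin n → ℝ)) : Set (Fin n → ℝ)) +
      Set.Ici (0 : Fin n → ℝ) := by
    apply Set.Subset.antisymm
    · intro y hy
      obtain ⟨c, hc, hc1, hcy⟩ := (h.mem_iff y).1 hy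
      refine Set.mem_add.2 ⟨∑ v ∈ V, c v • cv v, ?_, y - ∑ v ∈ V, c v • cv v, ?_, by abel⟩
      · exact (convex_convexHull ℝ _).sum_mem (fun v _ => hc v) hc1 fun v hv =>
          subset_convexHull ℝ _ (by simpa using ⟨v, hv, rfl⟩)
      · intro i; simp only [Pi.zero_apply, Pi.sub_apply]; linarith [hcy i]
    · rintro _ ⟨p, hp, z, hz, rfl⟩
      have hp' : p ∈ newtonPolyhedron S := by
        refine convexHull_mono ?_ hp
        intro q hq
        obtain ⟨v, hv, rfl⟩ := Finset.mem_image.1 (Finset.mem_coe.1 hq)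
        exact ⟨v, h.sub v hv, fun _ => le_rfl⟩
      exact h.mem_of_le hp' fun i => by have := hz i; simp at this ⊢; exact this
  rw [e]
  exact isClosed_Ici.add_left_of_isCompact
    ((Finset.finite_toSet _).isCompact_convexHull ℝ)

end Newton

/-! ### Faces of Newton polyhedra -/

lemma Dom.isCompact_face {n : ℕ} {S : Set (Fin n → ℕ)} {V : Finset (Fin n → ℕ)} (h : Dom S V)
    (hV : V.Nonempty) {u : Fin n → ℝ} (hu : ∀ i, 0 < u i) :
    IsCompact (traceFace (newtonPolyhedron S) u) := by
  have hc := (V.image cv).finite_toSet.isCompact_convexHull ℝ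
  refine hc.of_isClosed_subset ?_ ?_
  · have : traceFace (newtonPolyhedron S) u = newtonPolyhedron S ∩ {y | dotR u y = NN V u} := by
      ext y; exact h.mem_traceFace hV (fun i => (hu i).le) y
    rw [this]
    exact h.isClosed.inter (isClosed_eq (continuous_dotR_right u) continuous_const)
  · intro y hy
    obtain ⟨c, hc, hc1, e, -⟩ := h.traceFace_pos hV hu hy
    rw [e]
    exact (convex_convexHull ℝ _).sum_mem (fun v _ => hc v) hc1 fun v hv =>
      subset_convexHull ℝ _ (by simpa using ⟨v, hv, rfl⟩)

/-- For a positive weight the face is compact and only generators contribute to its polynomial, since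
every other exponent strictly dominates a generator. -/
lemma facePoly_eq {n : ℕ} {a : (Fin n → ℕ) → ℝ} {V : Finset (Fin n → ℕ)}
    (h : Dom {α | a α ≠ 0} V) (hV : V.Nonempty) {u : Fin n → ℝ} (hu : ∀ i, 0 < u i) :
    facePoly a (traceFace (newtonPolyhedron {α | a α ≠ 0}) u) =
      fun x => ∑ v ∈ V.filter (fun v => dotR u (cv v) = NN V u), a v * mon v x := by
  funext x
  have hu' : ∀ i, 0 ≤ u i := fun i => (hu i).le
  rw [facePoly, tsum_eq_sum (s := V.filter (fun v => dotR u (cv v) = NN V u))]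
  · refine Finset.sum_congr rfl fun v hv => ?_
    obtain ⟨h1, h2⟩ := Finset.mem_filter.1 hv
    exact if_pos ((h.mem_traceFace hV hu' (cv v)).2 ⟨Dom.cv_mem (h.sub v h1), h2⟩)
  · intro α hα
    split_ifs with hmem
    · by_contra hne
      have ha : a α ≠ 0 := fun h => hne (by rw [h, zero_mul])
      obtain ⟨v, hv, hle⟩ := h.dom α ha
      have h2 : dotR u (cv α) = NN V u := ((h.mem_traceFace hV hu' (cv α)).1 hmem).2
      have h3 := NN_le hv u
      have h4 : ∀ i ∈ Finset.univ, 0 ≤ u i * (cv α i - cv v i) := fun i _ =>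
        mul_nonneg (hu' i) (sub_nonneg.2 (Nat.cast_le.2 (hle i)))
      have h5 : ∑ i, u i * (cv α i - cv v i) ≤ 0 := by
        have : ∑ i, u i * (cv α i - cv v i) = dotR u (cv α) - dotR u (cv v) := by
          simp [dotR, mul_sub, Finset.sum_sub_distrib]
        linarith
      have h6 : α = v := by
        funext i
        have := (Finset.sum_eq_zero_iff_of_nonneg h4).1 (le_antisymm h5 (Finset.sum_nonneg h4)) i
          (Finset.mem_univ i)
        rcases mul_eq_zero.1 this with h | h
        · exact absurd h (hu i).ne'
        · have h' : (α i : ℝ) = (v i : ℝ) := sub_eq_zero.1 h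
          exact_mod_cast h'
      subst h6
      exact hα (Finset.mem_filter.2 ⟨hv, h2⟩)
    · rfl

/-- Inequalities `R N(u) ≤ ⟨u, β⟩` on the nonnegative orthant need only be checked on finitely many
vectors, which do not depend on `R` and `β`: the linearity domains of `N` are polyhedral cones. -/
lemma exists_test_vectors {n : ℕ} {V : Finset (Fin n → ℕ)} (hV : V.Nonempty) :
    ∃ F : Finset (Fin n → ℝ), (∀ w ∈ F, ∀ i, 0 ≤ w i) ∧ ∀ (β : Fin n → ℝ) (R : ℝ),
      (∀ w ∈ F, R * NN V w ≤ dotR w β) → ∀ u : Fin n → ℝ, (∀ i, 0 ≤ u i) →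
        R * NN V u ≤ dotR u β := by
  set L : (Fin n → ℕ) → List (Fin n → ℝ) := fun v => V.toList.map fun v' => cv v' - cv v with hL
  choose G hG1 hG2 using fun v => exists_generators (L v)
  have hK : ∀ v ∈ V, ∀ u : Fin n → ℝ, (∀ i, 0 ≤ u i) →
      (u ∈ conePoly (L v) ↔ NN V u = dotR u (cv v)) := by
    intro v hv u hu
    constructor
    · rintro ⟨-, h⟩
      refine le_antisymm (NN_le hv u) (le_NN hV fun v' hv' => ?_)
      have := h (cv v' - cv v) (List.mem_map.2 ⟨v', Finset.mem_toList.2 hv', rfl⟩)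
      rw [dotR_sub_left, dotR_comm, dotR_comm (cv v)] at this
      linarith
    · intro e
      refine ⟨hu, fun l hl => ?_⟩
      obtain ⟨v', hv', rfl⟩ := List.mem_map.1 hl
      have := NN_le (Finset.mem_toList.1 hv') u
      rw [dotR_sub_left, dotR_comm, dotR_comm (cv v)]
      linarith
  refine ⟨V.biUnion G, ?_, ?_⟩
  · intro w hw
    obtain ⟨v, hv, hw⟩ := Finset.mem_biUnion.1 hw
    exact (hG1 v w hw).1
  · intro β R hF u hu
    obtain ⟨v, hv, e⟩ := exists_NN hV u
    have := hG2 v (β - R • cv v) (fun g hg => ?_) u ((hK v hv u hu).2 e)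
    · rw [dotR_sub_left, dotR_smul_left, dotR_comm, dotR_comm (cv v)] at this
      rw [e]; linarith
    · have h1 := hF g (Finset.mem_biUnion.2 ⟨v, hv, hg⟩)
      rw [(hK v hv g (hG1 v g hg).1).1 (hG1 v g hg)] at h1
      rw [dotR_sub_left, dotR_smul_left, dotR_comm, dotR_comm (cv v)]
      linarith

/-- The sum `∑ u_i = ⟨u, (1, …, 1)⟩`. -/
def sm {n : ℕ} (u : Fin n → ℝ) : ℝ := ∑ i, u i

lemma dotR_const {n : ℕ} (u : Fin n → ℝ) (t : ℝ) : dotR u (fun _ => t) = t * sm u := by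
  simp [dotR, sm, Finset.mul_sum, mul_comm]

/-- On the smallest face through the diagonal point `(t₀, …, t₀)`, a functional `u` differs from
its value at that point by at most a multiple of the defect `t₀|u| - N(u)`. -/
lemma face_defect {n : ℕ} {S : Set (Fin n → ℕ)} {V : Finset (Fin n → ℕ)} (h : Dom S V)
    (hV : V.Nonempty) {t₀ : ℝ} {τ₀ : Set (Fin n → ℝ)}
    (ht₀mem : (fun _ => t₀) ∈ newtonPolyhedron S) (hsub : τ₀ ⊆ newtonPolyhedron S)
    (hτmin : ∀ τ : Set (Fin n → ℝ), IsFaceOf (newtonPolyhedron S) τ → (fun _ => t₀) ∈ τ → τ₀ ⊆ τ)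
    {y : Fin n → ℝ} (hy : y ∈ τ₀) :
    ∃ C : ℝ, 0 ≤ C ∧ ∀ u : Fin n → ℝ, (∀ i, 0 ≤ u i) →
      |dotR u y - t₀ * sm u| ≤ C * (t₀ * sm u - NN V u) := by
  obtain ⟨F, hF0, hF⟩ := exists_test_vectors hV
  have hdef : ∀ u : Fin n → ℝ, (∀ i, 0 ≤ u i) → 0 ≤ t₀ * sm u - NN V u := by
    intro u hu
    have := h.NN_le_of_mem hu ht₀mem
    rw [dotR_const] at this; linarith
  obtain ⟨C, hC1, hC⟩ : ∃ C : ℝ, 1 ≤ C ∧ ∀ w ∈ F, dotR w y - t₀ * sm w ≤ C * (t₀ * sm w - NN V w) := by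
    have hone : ∀ w ∈ F, ∃ C : ℝ, 0 ≤ C ∧ dotR w y - t₀ * sm w ≤ C * (t₀ * sm w - NN V w) := by
      intro w hw
      rcases (hdef w (hF0 w hw)).eq_or_lt with h0 | h0
      · refine ⟨0, le_rfl, ?_⟩
        have h1 : (fun _ => t₀) ∈ traceFace (newtonPolyhedron S) w :=
          (h.mem_traceFace hV (hF0 w hw) _).2 ⟨ht₀mem, by rw [dotR_const]; linarith⟩
        have h2 := ((h.mem_traceFace hV (hF0 w hw) _).1
          (hτmin _ ⟨w, hF0 w hw, rfl⟩ h1 hy)).2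
        rw [h2]; linarith
      · refine ⟨|dotR w y - t₀ * sm w| / (t₀ * sm w - NN V w), by positivity, ?_⟩
        rw [div_mul_cancel₀ _ h0.ne']; exact le_abs_self _
    choose! c hc0 hc using hone
    refine ⟨1 + ∑ w ∈ F, c w, by linarith [Finset.sum_nonneg hc0], fun w hw => (hc w hw).trans ?_⟩
    refine mul_le_mul_of_nonneg_right ?_ (hdef w (hF0 w hw))
    linarith [Finset.single_le_sum hc0 hw]
  refine ⟨C, by linarith, fun u hu => abs_le.2 ⟨?_, ?_⟩⟩
  · have h1 := h.NN_le_of_mem hu (hsub hy)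
    nlinarith [hdef u hu]
  · have h2 := hF ((C + 1) • (fun _ => t₀) - y) C (fun w hw => ?_) u hu
    · rw [dotR_sub_right, dotR_smul_right, dotR_const] at h2; linarith
    · rw [dotR_sub_right, dotR_smul_right, dotR_const]; linarith [hC w hw]

/-! ### Lower bounds by curve selection -/

/-- A linear map between finite-dimensional spaces has a generalized inverse. -/
lemma exists_pseudo_inverse {E F : Type*} [AddCommGroup E] [Module ℝ E] [AddCommGroup F]
    [Module ℝ F] (A : E →ₗ[ℝ] F) : ∃ s : F →ₗ[ℝ] E, ∀ x, A (s (A x)) = A x := by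
  obtain ⟨s₁, hs₁⟩ := LinearMap.exists_rightInverse_of_surjective A.rangeRestrict
    A.range_rangeRestrict
  obtain ⟨s, hs⟩ := LinearMap.exists_extend s₁
  refine ⟨s, fun x => ?_⟩
  have h1 : s (A x) = s₁ ⟨A x, LinearMap.mem_range_self A x⟩ := by
    rw [← hs]; rfl
  have h2 := LinearMap.congr_fun hs₁ ⟨A x, LinearMap.mem_range_self A x⟩
  rw [h1]
  exact congrArg Subtype.val h2

lemma mon_mul_exp {n : ℕ} (v : Fin n → ℕ) (ε p : Fin n → ℝ) :
    mon v (fun i => ε i * Real.exp (-p i)) = mon v ε * Real.exp (-dotR p (cv v)) := by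
  simp only [mon, mul_pow, Finset.prod_mul_distrib, dotR, cv, ← Finset.sum_neg_distrib,
    Real.exp_sum]
  congr 1
  refine Finset.prod_congr rfl fun i _ => ?_
  rw [← Real.exp_nat_mul]; congr 1; ring

lemma abs_mon_sign {n : ℕ} (v : Fin n → ℕ) {ε : Fin n → ℝ} (hε : ∀ i, |ε i| = 1) :
    |mon v ε| = 1 := by
  rw [abs_mon]; simp [hε, mon]

/-- A real sequence bounded below either converges or tends to infinity along an ultrafilter. -/
lemma ultra_dichotomy (U : Ultrafilter ℕ) {d : ℕ → ℝ} (hd : ∀ᶠ k in (U : Filter ℕ), 0 ≤ d k) :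
    (∃ D, Tendsto d U (𝓝 D)) ∨ Tendsto d U atTop := by
  by_cases hB : ∃ B, ∀ᶠ k in (U : Filter ℕ), d k ≤ B
  · left
    obtain ⟨B, hB⟩ := hB
    obtain ⟨D, -, hD⟩ := (isCompact_Icc (a := (0 : ℝ)) (b := B)).ultrafilter_le_nhds (U.map d) (by
      rw [le_principal_iff]
      exact (hd.and hB : ∀ᶠ k in (U : Filter ℕ), d k ∈ Set.Icc 0 B))
    exact ⟨D, hD⟩
  · right
    refine tendsto_atTop.2 fun B => ?_
    have := Ultrafilter.eventually_not.2 (not_exists.1 hB B)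
    filter_upwards [this] with k hk
    exact (not_le.1 hk).le

lemma ultra_exists {ι : Type*} (U : Ultrafilter ℕ) {V : Finset ι} {P : ι → ℕ → Prop}
    (h : ∀ k, ∃ v ∈ V, P v k) : ∃ v ∈ V, ∀ᶠ k in (U : Filter ℕ), P v k := by
  have := (Ultrafilter.eventually_exists_mem_iff (f := U) (is := (V : Set ι)) (P := P) V.finite_toSet).1
    (Eventually.of_forall fun k => by simpa using h k)
  simpa using this

/-- If, for all positive weights, the leading parts of the sums `∑ v, x ^ v * h v l` have no common
zero off the coordinate hyperplanes, then near the origin these sums are jointly bounded below by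
the sum of the absolute values of the monomials. Along a sequence violating this, the logarithms
of the coordinates single out a weight whose leading parts do have a common zero. -/
theorem lower_bound {n k : ℕ} (V : Finset (Fin n → ℕ)) (hV : V.Nonempty)
    (h : (Fin n → ℕ) → Fin k → (Fin n → ℝ) → ℝ) (hc : ∀ v ∈ V, ∀ l, ContinuousAt (h v l) 0)
    (hnd : ∀ u : Fin n → ℝ, (∀ i, 0 < u i) → ∀ z : Fin n → ℝ, (∀ i, z i ≠ 0) →
      ∃ l, ∑ v ∈ V.filter (fun v => dotR u (cv v) = NN V u), h v l 0 * mon v z ≠ 0) :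
    ∃ c > 0, ∃ r > 0, ∀ x ∈ Wx r,
      c * ∑ v ∈ V, |mon v x| ≤ ∑ l, |∑ v ∈ V, mon v x * h v l x| := by
  by_contra hcon
  push Not at hcon
  have hpos : ∀ m : ℕ, (0 : ℝ) < 1 / ((m : ℝ) + 1) := fun m => by positivity
  choose X hXW hX using fun m : ℕ => hcon _ (hpos m) _ (hpos m)
  set U : Ultrafilter ℕ := hyperfilter ℕ with hU
  have hUtop : (U : Filter ℕ) ≤ atTop := Nat.hyperfilter_le_atTop
  have hX0 : ∀ i, Tendsto (fun m => X m i) U (𝓝 0) := by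
    intro i
    refine Tendsto.mono_left ?_ hUtop
    exact squeeze_zero_norm (fun m => ((hXW m).1 i).le) tendsto_one_div_add_atTop_nhds_zero_nat
  have hXlim : Tendsto X U (𝓝 0) := tendsto_pi_nhds.2 hX0
  -- signs are eventually constant
  have hsgn : ∀ i, ∃ e : ℝ, |e| = 1 ∧ ∀ᶠ m in (U : Filter ℕ), X m i = e * |X m i| := by
    intro i
    obtain ⟨e, he, h⟩ := ultra_exists U (V := ({1, -1} : Finset ℝ))
      (P := fun e m => X m i = e * |X m i|) (fun m => by
        rcases le_total 0 (X m i) with h | h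
        · exact ⟨1, by simp, by rw [abs_of_nonneg h, one_mul]⟩
        · exact ⟨-1, by simp, by rw [abs_of_nonpos h]; ring⟩)
    refine ⟨e, ?_, h⟩
    simp at he
    rcases he with rfl | rfl <;> simp
  choose ε hε1 hε using hsgn
  set p : ℕ → Fin n → ℝ := fun m i => -Real.log |X m i| with hp
  have hpexp : ∀ m i, Real.exp (-p m i) = |X m i| := fun m i => by
    simp only [hp, neg_neg]; exact Real.exp_log (abs_pos.2 ((hXW m).2 i))
  have hXeq : ∀ᶠ m in (U : Filter ℕ), X m = fun i => ε i * Real.exp (-p m i) := by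
    filter_upwards [eventually_all.2 hε] with m hm
    funext i; rw [hpexp]; exact hm i
  have hptop : ∀ i, Tendsto (fun m => p m i) U atTop := by
    intro i
    refine tendsto_neg_atBot_atTop.comp (Real.tendsto_log_nhdsNE_zero.comp ?_)
    refine tendsto_nhdsWithin_iff.2 ⟨by simpa using (hX0 i).abs, Eventually.of_forall fun m => ?_⟩
    exact abs_ne_zero.2 ((hXW m).2 i)
  obtain ⟨v₀, hv₀, hmin⟩ := ultra_exists U (V := V)
    (P := fun v₀ m => ∀ v ∈ V, dotR (p m) (cv v₀) ≤ dotR (p m) (cv v))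
    (fun m => V.exists_min_image _ hV)
  set d : (Fin n → ℕ) → ℕ → ℝ := fun v m => dotR (p m) (cv v - cv v₀) with hd
  have hd0 : ∀ v ∈ V, ∀ᶠ m in (U : Filter ℕ), 0 ≤ d v m := by
    intro v hv
    filter_upwards [hmin] with m hm
    simp only [hd, dotR_sub_right]; linarith [hm v hv]
  set V' := V.filter (fun v => ∃ D, Tendsto (d v) U (𝓝 D)) with hV'
  have hD : ∀ v : V', ∃ D, Tendsto (d v) U (𝓝 D) := fun v => (Finset.mem_filter.1 v.2).2
  choose D hD using hD
  have htop : ∀ v ∈ V, v ∉ V' → Tendsto (d v) U atTop := fun v hv hv' =>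
    (ultra_dichotomy U (hd0 v hv)).resolve_left fun h => hv' (Finset.mem_filter.2 ⟨hv, h⟩)
  have hv₀' : v₀ ∈ V' := Finset.mem_filter.2 ⟨hv₀, 0, by simp [hd, dotR]⟩
  -- split the weights `p m` as a convergent part plus a part constant on `V'`
  let A : (Fin n → ℝ) →ₗ[ℝ] (V' → ℝ) :=
    { toFun := fun u v => dotR u (cv v - cv v₀)
      map_add' := fun u w => by funext v; exact dotR_add_left _ _ _
      map_smul' := fun c u => by funext v; exact dotR_smul_left _ _ _ }
  obtain ⟨s, hs⟩ := exists_pseudo_inverse A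
  have hAc : Continuous A := A.continuous_of_finiteDimensional
  have hsc : Continuous s := s.continuous_of_finiteDimensional
  have hAp : Tendsto (fun m => A (p m)) U (𝓝 D) := tendsto_pi_nhds.2 fun v => hD v
  set w := s D with hw
  have hwm : Tendsto (fun m => s (A (p m))) U (𝓝 w) := (hsc.tendsto D).comp hAp
  have hAw : A w = D := by
    refine tendsto_nhds_unique ((hAc.tendsto w).comp hwm) ?_
    refine hAp.congr fun m => (hs (p m)).symm
  have hAw' : ∀ v : V', dotR w (cv v - cv v₀) = D v := fun v => congrFun hAw v
  set q : ℕ → Fin n → ℝ := fun m => p m - s (A (p m)) with hq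
  have hqA : ∀ m, ∀ v ∈ V', dotR (q m) (cv v - cv v₀) = 0 := by
    intro m v hv
    have : A (q m) = 0 := by rw [hq]; simp only [map_sub, hs, sub_self]
    exact congrFun this ⟨v, hv⟩
  have hqpos : ∀ᶠ m in (U : Filter ℕ), ∀ i, 0 < q m i := by
    refine eventually_all.2 fun i => ?_
    have : Tendsto (fun m => p m i + -(s (A (p m)) i)) U atTop :=
      (hptop i).atTop_add ((tendsto_pi_nhds.1 hwm i).neg)
    filter_upwards [this.eventually_gt_atTop 0] with m hm
    simpa [hq, sub_eq_add_neg] using hm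
  have hqout : ∀ᶠ m in (U : Filter ℕ), ∀ v ∈ V \ V', 0 < dotR (q m) (cv v - cv v₀) := by
    refine (Filter.eventually_all_finset _).2 fun v hv => ?_
    obtain ⟨h1, h2⟩ := Finset.mem_sdiff.1 hv
    have : Tendsto (fun m => d v m + -(dotR (s (A (p m))) (cv v - cv v₀))) U atTop :=
      (htop v h1 h2).atTop_add (((continuous_dotR_left _).tendsto w).comp hwm).neg
    filter_upwards [this.eventually_gt_atTop 0] with m hm
    simp only [hq, dotR_sub_left]; simp only [hd] at hm; linarith
  obtain ⟨m, hm1, hm2⟩ := (hqpos.and hqout).exists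
  have hNN : NN V (q m) = dotR (q m) (cv v₀) := by
    refine le_antisymm (NN_le hv₀ _) (le_NN hV fun v hv => ?_)
    by_cases hvV : v ∈ V'
    · have := hqA m v hvV
      rw [dotR_sub_right] at this; linarith
    · have := hm2 v (Finset.mem_sdiff.2 ⟨hv, hvV⟩)
      rw [dotR_sub_right] at this; linarith
  have hfil : V.filter (fun v => dotR (q m) (cv v) = NN V (q m)) = V' := by
    ext v
    rw [Finset.mem_filter, hNN]
    constructor
    · rintro ⟨hv, e⟩
      by_contra hvV
      have := hm2 v (Finset.mem_sdiff.2 ⟨hv, hvV⟩)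
      rw [dotR_sub_right] at this; linarith
    · intro hv
      have := hqA m v hv
      rw [dotR_sub_right] at this
      exact ⟨(Finset.mem_filter.1 hv).1, by linarith⟩
  obtain ⟨l, hl⟩ := hnd (q m) hm1 (fun i => ε i * Real.exp (-w i)) (fun i =>
    mul_ne_zero (abs_ne_zero.1 (by rw [hε1]; norm_num)) (Real.exp_ne_zero _))
  rw [hfil] at hl
  apply hl
  -- the rescaled sums tend to zero
  set T : ℕ → ℝ := fun m => ∑ v ∈ V, mon v ε * Real.exp (-d v m) * h v l (X m) with hT
  have hTbound : ∀ᶠ m in (U : Filter ℕ), |T m| ≤ 1 / ((m : ℝ) + 1) * V.card := by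
    filter_upwards [hXeq, (Filter.eventually_all_finset V).2 hd0] with m hm hdm
    have hmon : ∀ v, mon v (X m) = mon v ε * Real.exp (-d v m) * Real.exp (-dotR (p m) (cv v₀)) := by
      intro v
      rw [hm, mon_mul_exp, mul_assoc, ← Real.exp_add]
      congr 2
      simp only [hd, dotR_sub_right]; ring
    have h1 : ∑ v ∈ V, mon v (X m) * h v l (X m) = T m * Real.exp (-dotR (p m) (cv v₀)) := by
      rw [hT, Finset.sum_mul]
      refine Finset.sum_congr rfl fun v _ => ?_
      rw [hmon]; ring
    have h2 : |T m| * Real.exp (-dotR (p m) (cv v₀)) ≤ 1 / ((m : ℝ) + 1) * ∑ v ∈ V, |mon v (X m)| := by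
      refine le_trans ?_ (hX m).le
      rw [← abs_of_pos (Real.exp_pos (-dotR (p m) (cv v₀))), ← abs_mul, ← h1]
      exact Finset.single_le_sum (f := fun l => |∑ v ∈ V, mon v (X m) * h v l (X m)|)
        (fun _ _ => abs_nonneg _) (Finset.mem_univ l)
    have h3 : ∑ v ∈ V, |mon v (X m)| ≤ V.card * Real.exp (-dotR (p m) (cv v₀)) := by
      rw [← nsmul_eq_mul]
      refine Finset.sum_le_card_nsmul _ _ _ fun v hv => ?_
      rw [hmon, abs_mul, abs_mul, abs_mon_sign v hε1, one_mul, Real.abs_exp, Real.abs_exp]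
      have : Real.exp (-d v m) ≤ 1 := Real.exp_le_one_iff.2 (by linarith [hdm v hv])
      nlinarith [Real.exp_pos (-dotR (p m) (cv v₀))]
    refine le_of_mul_le_mul_right ?_ (Real.exp_pos (-dotR (p m) (cv v₀)))
    calc _ ≤ _ := h2
      _ ≤ 1 / ((m : ℝ) + 1) * (V.card * Real.exp (-dotR (p m) (cv v₀))) :=
        mul_le_mul_of_nonneg_left h3 (hpos m).le
      _ = _ := by ring
  have hT0 : Tendsto T U (𝓝 0) := by
    refine squeeze_zero_norm' hTbound ?_
    have := (tendsto_one_div_add_atTop_nhds_zero_nat (𝕜 := ℝ)).mul_const (V.card : ℝ)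
    rw [zero_mul] at this
    exact this.mono_left hUtop
  have hterm : ∀ v ∈ V, Tendsto (fun m => mon v ε * Real.exp (-d v m) * h v l (X m)) U
      (𝓝 (mon v ε * (if hv : v ∈ V' then Real.exp (-D ⟨v, hv⟩) else 0) * h v l 0)) := by
    intro v hv
    refine (tendsto_const_nhds.mul ?_).mul ((hc v hv l).tendsto.comp hXlim)
    split_ifs with hv'
    · exact (Real.continuous_exp.tendsto _).comp (hD ⟨v, hv'⟩).neg
    · exact Real.tendsto_exp_neg_atTop_nhds_zero.comp (htop v hv hv')
  have hlim := tendsto_nhds_unique (tendsto_finset_sum V hterm) hT0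
  have hsum : ∑ v ∈ V', mon v ε * (if hv : v ∈ V' then Real.exp (-D ⟨v, hv⟩) else 0) * h v l 0 = 0 := by
    refine Eq.trans ?_ hlim
    refine Finset.sum_subset (show V' ⊆ V from Finset.filter_subset _ _) fun v _ hv => ?_
    rw [dif_neg hv]; ring
  calc _ = Real.exp (-dotR w (cv v₀)) *
      ∑ v ∈ V', mon v ε * (if hv : v ∈ V' then Real.exp (-D ⟨v, hv⟩) else 0) * h v l 0 := by
        rw [Finset.mul_sum]
        refine Finset.sum_congr rfl fun v hv => ?_
        rw [dif_pos hv, mon_mul_exp, ← hAw' ⟨v, hv⟩]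
        have : Real.exp (-dotR w (cv v)) =
            Real.exp (-dotR w (cv v₀)) * Real.exp (-dotR w (cv v - cv v₀)) := by
          rw [← Real.exp_add, dotR_sub_right]; congr 1; ring
        rw [this]; ring
    _ = 0 := by rw [hsum, mul_zero]

/-! ### Decomposition of the analytic function -/

/-- The globally smooth function `∑ v ∈ V, x ^ v * g v x`, which represents `f` near the origin. -/
def fV {n : ℕ} (V : Finset (Fin n → ℕ)) (g : (Fin n → ℕ) → (Fin n → ℝ) → ℝ) (x : Fin n → ℝ) : ℝ :=
  ∑ v ∈ V, mon v x * g v x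

/-- The scale `∑ v ∈ V, |x ^ v|` to which `f` is compared. -/
def mV {n : ℕ} (V : Finset (Fin n → ℕ)) (x : Fin n → ℝ) : ℝ := ∑ v ∈ V, |mon v x|

/-- The logarithmic gradient of `∑ v ∈ V, x ^ v * g v x` dominates `∑ v ∈ V, |x ^ v|` near the
origin. -/
structure Base {n : ℕ} (V : Finset (Fin n → ℕ)) (g : (Fin n → ℕ) → (Fin n → ℝ) → ℝ)
    (r c : ℝ) : Prop where
  ne : V.Nonempty
  r_pos : 0 < r
  r_lt : r < 1
  c_pos : 0 < c
  smooth : ∀ v, ContDiff ℝ (⊤ : ℕ∞) (g v)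
  low : ∀ x ∈ Wx r, c * mV V x ≤ ∑ l, |Ed l (fV V g) x|
  small : ∀ x ∈ bx r, |fV V g x| ≤ 1

/-- The exponents of `V` on the face `τ` whose `j`-th entry is `1`. -/
def V1 {n : ℕ} (V : Finset (Fin n → ℕ)) (τ : Set (Fin n → ℝ)) (j : Fin n) : Finset (Fin n → ℕ) :=
  V.filter fun v => v j = 1 ∧ cv v ∈ τ

/-- Consequences of the instability of `τ` with respect to the `j`-th variable. -/
structure Inst {n : ℕ} (V : Finset (Fin n → ℕ)) (g : (Fin n → ℕ) → (Fin n → ℝ) → ℝ)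
    (r c : ℝ) (τ : Set (Fin n → ℝ)) (j : Fin n) : Prop extends Base V g r c where
  ne1 : (V1 V τ j).Nonempty
  low1 : ∀ x ∈ Wx r, c * ∑ v ∈ V1 V τ j, |mon v x| ≤ |∑ v ∈ V1 V τ j, mon v x * g v x|
  indep : ∀ v ∈ V, v j ≤ 1 → ∀ x ∈ bx r, Dd j (g v) x = 0

/-- Dickson's lemma, applied to each class of a finite partition of `S`. -/
lemma exists_minimals {n : ℕ} (S : Set (Fin n → ℕ)) (cls : (Fin n → ℕ) → ℕ) (hb : ∀ α, cls α < 4) :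
    ∃ (V : Finset (Fin n → ℕ)) (cl : (Fin n → ℕ) → (Fin n → ℕ)), (∀ v ∈ V, v ∈ S) ∧
      (∀ α ∈ S, cl α ∈ V ∧ cl α ≤ α ∧ cls (cl α) = cls α) ∧ ∀ v ∈ V, cl v = v := by
  set M : ℕ → Set (Fin n → ℕ) := fun k => {α | Minimal (fun β => β ∈ S ∧ cls β = k) α} with hM
  have hM' : ∀ k α, α ∈ M k → Minimal (fun β => β ∈ S ∧ cls β = k) α := fun _ _ h => h
  have hfin : ∀ k, (M k).Finite := fun k =>
    WellQuasiOrderedLE.finite_of_isAntichain (setOf_minimal_antichain _)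
  have hex : ∀ α ∈ S, ∃ β ∈ M (cls α), β ≤ α := by
    intro α hα
    obtain ⟨β, hβ, hm⟩ := exists_minimal_le_of_wellFoundedLT (fun β => β ∈ S ∧ cls β = cls α) α
      ⟨hα, rfl⟩
    exact ⟨β, hm, hβ⟩
  set V : Finset (Fin n → ℕ) := (Finset.range 4).biUnion fun k => (hfin k).toFinset with hV
  have hmem : ∀ v, v ∈ V ↔ v ∈ M (cls v) := by
    intro v
    simp only [hV, Finset.mem_biUnion, Set.Finite.mem_toFinset, Finset.mem_range]
    constructor
    · rintro ⟨k, -, h⟩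
      have : cls v = k := (hM' _ _ h).prop.2
      rw [this]; exact h
    · exact fun h => ⟨_, hb v, h⟩
  choose! cl h1 h2 using hex
  have hS : ∀ v ∈ V, v ∈ S := fun v hv => (hM' _ _ ((hmem v).1 hv)).prop.1
  refine ⟨V, cl, hS, fun α hα => ?_, fun v hv => ?_⟩
  · have hc : cls (cl α) = cls α := (hM' _ _ (h1 α hα)).prop.2
    exact ⟨(hmem _).2 (by rw [hc]; exact h1 α hα), h2 α hα, hc⟩
  · exact (hM' _ _ ((hmem v).1 hv)).eq_of_le (hM' _ _ (h1 v (hS v hv))).prop (h2 v (hS v hv))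

lemma contDiff_fV {n : ℕ} {V : Finset (Fin n → ℕ)} {g : (Fin n → ℕ) → (Fin n → ℝ) → ℝ}
    (hg : ∀ v, ContDiff ℝ (⊤ : ℕ∞) (g v)) : ContDiff ℝ (⊤ : ℕ∞) (fV V g) := by
  unfold fV
  exact ContDiff.sum fun v _ => (contDiff_mon v).mul (hg v)

lemma Dd_fV {n : ℕ} {V : Finset (Fin n → ℕ)} {g : (Fin n → ℕ) → (Fin n → ℝ) → ℝ}
    (hg : ∀ v, ContDiff ℝ (⊤ : ℕ∞) (g v)) (l : Fin n) (x : Fin n → ℝ) :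
    Dd l (fV V g) x = ∑ v ∈ V, (Dd l (mon v) x * g v x + mon v x * Dd l (g v) x) := by
  have hd : ∀ v, DifferentiableAt ℝ (g v) x := fun v => (hg v).differentiable (by simp) x
  have hm : ∀ v : Fin n → ℕ, DifferentiableAt ℝ (mon v) x := fun v =>
    (contDiff_mon (k := 1) v).differentiable (by simp) x
  have : fV V g = fun x => ∑ v ∈ V, mon v x * g v x := rfl
  rw [this]
  refine (Dd_sum (Ψ := fun v x => mon v x * g v x) fun v _ => (hm v).mul (hd v)).trans ?_
  exact Finset.sum_congr rfl fun v _ => Dd_mul (hm v) (hd v)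

lemma Ed_fV {n : ℕ} {V : Finset (Fin n → ℕ)} {g : (Fin n → ℕ) → (Fin n → ℝ) → ℝ}
    (hg : ∀ v, ContDiff ℝ (⊤ : ℕ∞) (g v)) (l : Fin n) (x : Fin n → ℝ) :
    Ed l (fV V g) x = ∑ v ∈ V, mon v x * (v l * g v x + Ed l (g v) x) := by
  rw [Ed, Dd_fV hg, Finset.mul_sum]
  refine Finset.sum_congr rfl fun v _ => ?_
  have := Ed_mon l v x
  rw [Ed] at this ⊢
  linear_combination g v x * this

lemma Ed_zero {n : ℕ} (l : Fin n) (Ψ : (Fin n → ℝ) → ℝ) : Ed l Ψ 0 = 0 := by simp [Ed]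

lemma contDiff_Dd {n : ℕ} (l : Fin n) {Ψ : (Fin n → ℝ) → ℝ} (h : ContDiff ℝ (⊤ : ℕ∞) Ψ) :
    ContDiff ℝ (⊤ : ℕ∞) (Dd l Ψ) := by
  have : ContDiff ℝ (⊤ : ℕ∞) (fderiv ℝ Ψ) := h.fderiv_right (by simp)
  exact this.clm_apply contDiff_const

lemma contDiff_Ed {n : ℕ} (l : Fin n) {Ψ : (Fin n → ℝ) → ℝ} (h : ContDiff ℝ (⊤ : ℕ∞) Ψ) :
    ContDiff ℝ (⊤ : ℕ∞) (Ed l Ψ) := by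
  unfold Ed
  exact (contDiff_apply ℝ ℝ l).mul (contDiff_Dd l h)

/-- Non-degeneracy supplies the hypothesis of `lower_bound` for the logarithmic gradient. -/
lemma low_grad {n : ℕ} {a : (Fin n → ℕ) → ℝ} {V : Finset (Fin n → ℕ)}
    (h : Dom {α | a α ≠ 0} V) (hV : V.Nonempty)
    (hnd : NonDegenerateR a (newtonPolyhedron {α | a α ≠ 0}))
    {g : (Fin n → ℕ) → (Fin n → ℝ) → ℝ} (hg : ∀ v, ContDiff ℝ (⊤ : ℕ∞) (g v))
    (hga : ∀ v ∈ V, g v 0 = a v) :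
    ∃ c > 0, ∃ r > 0, ∀ x ∈ Wx r, c * mV V x ≤ ∑ l, |Ed l (fV V g) x| := by
  obtain ⟨c, hc, r, hr, hlow⟩ := lower_bound V hV (fun v l x => v l * g v x + Ed l (g v) x)
    (fun v _ l => ((continuous_const.mul (hg v).continuous).add
      (contDiff_Ed l (hg v)).continuous).continuousAt) (by
    intro u hu z hz
    have h1 := hnd _ ⟨u, fun i => (hu i).le, rfl⟩ (h.isCompact_face hV hu) z hz
    rw [facePoly_eq h hV hu] at h1
    set V' := V.filter (fun v => dotR u (cv v) = NN V u) with hV'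
    by_contra hcon
    push Not at hcon
    apply h1
    have hm : ∀ v : Fin n → ℕ, DifferentiableAt ℝ (mon v) z := fun v =>
      (contDiff_mon (k := 1) v).differentiable (by simp) z
    have hD : ∀ l, Dd l (fun x => ∑ v ∈ V', a v * mon v x) z = 0 := by
      intro l
      refine (Dd_sum (Ψ := fun v x => a v * mon v x) fun v _ => (hm v).const_mul _).trans ?_
      have e : ∀ v, Dd l (fun x => a v * mon v x) z = a v * Dd l (mon v) z := by
        intro v
        have := Dd_mul (i := l) (differentiableAt_const (a v)) (hm v)
        rw [this, Dd_const]; ring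
      have h2 := hcon l
      have h3 : z l * ∑ v ∈ V', Dd l (fun x => a v * mon v x) z = 0 := by
        rw [Finset.mul_sum, ← h2]
        refine Finset.sum_congr rfl fun v hv => ?_
        have := Ed_mon l v z
        rw [Ed] at this
        rw [e, Ed_zero, hga v (Finset.mem_filter.1 hv).1]
        linear_combination a v * this
      exact (mul_eq_zero.1 h3).resolve_left (hz l)
    ext y
    rw [fderiv_eq_sum_Dd]
    simp [hD])
  refine ⟨c, hc, r, hr, fun x hx => ?_⟩
  simp only [Ed_fV hg]
  exact hlow x hx

/-- The exponents of `V` on the face cut out by `w` with `j`-th entry `1` are singled out, within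
`V`, by the functional `C' w - e_j` for large `C'`. Hence for every `u` there is a positive weight
whose minimizers in `V` are the minimizers of `u` among those exponents. -/
lemma exists_weight {n : ℕ} {V : Finset (Fin n → ℕ)} {τ : Set (Fin n → ℝ)} {j : Fin n}
    (h1 : (V1 V τ j).Nonempty) {w : Fin n → ℝ} (hw : ∀ i, 0 ≤ w i) (hwj : 0 < w j)
    (hτ : ∀ v ∈ V, cv v ∈ τ ↔ dotR w (cv v) = NN V w) (hle : ∀ v ∈ V, cv v ∈ τ → v j ≤ 1)
    {u : Fin n → ℝ} (hu : ∀ i, 0 < u i) :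
    ∃ u' : Fin n → ℝ, (∀ i, 0 < u' i) ∧ V.filter (fun v => dotR u' (cv v) = NN V u') =
      (V1 V τ j).filter (fun v => dotR u (cv v) = NN (V1 V τ j) u) := by
  -- `C'` beats the `j`-th entries off the face and makes the `j`-th entry of `C' w - e_j` nonnegative
  obtain ⟨C', hC0, hC1, hC2⟩ : ∃ C' : ℝ, 0 ≤ C' ∧ 1 ≤ C' * w j ∧
      ∀ v ∈ V, cv v ∉ τ → (v j : ℝ) ≤ C' * (dotR w (cv v) - NN V w) := by
    have hpos : ∀ v ∈ V, cv v ∉ τ → 0 < dotR w (cv v) - NN V w := fun v hv hvτ =>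
      sub_pos.2 (lt_of_le_of_ne (NN_le hv w) fun e => hvτ ((hτ v hv).2 e.symm))
    set D := V.filter (fun v => cv v ∉ τ)
    have hnn : ∀ v ∈ D, 0 ≤ (v j : ℝ) / (dotR w (cv v) - NN V w) := fun v hv =>
      div_nonneg (Nat.cast_nonneg _) (hpos v (Finset.mem_filter.1 hv).1 (Finset.mem_filter.1 hv).2).le
    have hsn := Finset.sum_nonneg hnn
    refine ⟨1 / w j + ∑ v ∈ D, (v j : ℝ) / (dotR w (cv v) - NN V w), by positivity, ?_, ?_⟩
    · rw [add_mul, one_div_mul_cancel hwj.ne']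
      nlinarith
    · intro v hv hvτ
      rw [← div_le_iff₀ (hpos v hv hvτ)]
      have := Finset.single_le_sum hnn (Finset.mem_filter.2 ⟨hv, hvτ⟩ : v ∈ D)
      have : 0 ≤ 1 / w j := by positivity
      linarith
  have huv : ∀ v, 0 ≤ dotR u (cv v) := fun v => dotR_nonneg (fun i => (hu i).le) (cv_nonneg v)
  set C : ℝ := 1 + ∑ v ∈ V, dotR u (cv v) with hC
  have hCpos : 0 < C := by have := Finset.sum_nonneg fun v (_ : v ∈ V) => huv v; linarith
  set e : Fin n → ℝ := C' • w - Pi.single j 1 with he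
  set u' : Fin n → ℝ := C • e + u with hu'
  have hdot : ∀ v, dotR u' (cv v) = C * (C' * dotR w (cv v) - v j) + dotR u (cv v) := by
    intro v
    rw [hu', he, dotR_add_left, dotR_smul_left, dotR_sub_left, dotR_smul_left, dotR_single_left]
    rfl
  have hin : ∀ v ∈ V1 V τ j, dotR u' (cv v) = C * (C' * NN V w - 1) + dotR u (cv v) := by
    intro v hv
    obtain ⟨hvV, hvj, hvτ⟩ := Finset.mem_filter.1 hv
    rw [hdot, (hτ v hvV).1 hvτ, hvj]; simp
  have hout : ∀ v ∈ V, v ∉ V1 V τ j → C * (C' * NN V w) ≤ dotR u' (cv v) := by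
    intro v hv hv1
    rw [hdot]
    have : C' * NN V w ≤ C' * dotR w (cv v) - v j := by
      by_cases hvτ : cv v ∈ τ
      · have h0 : v j = 0 := by
          have := hle v hv hvτ
          rcases Nat.le_one_iff_eq_zero_or_eq_one.1 this with h | h
          · exact h
          · exact absurd (Finset.mem_filter.2 ⟨hv, h, hvτ⟩) hv1
        rw [(hτ v hv).1 hvτ, h0]; simp
      · have := hC2 v hv hvτ
        linarith
    nlinarith [huv v]
  obtain ⟨v₁, hv₁, hv₁N⟩ := exists_NN h1 u
  have hV1 : ∀ v ∈ V1 V τ j, v ∈ V := fun v hv => (Finset.mem_filter.1 hv).1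
  have hltC : ∀ v ∈ V, dotR u (cv v) < C := fun v hv => by
    have := Finset.single_le_sum (fun v (_ : v ∈ V) => huv v) hv
    linarith
  have hNN : NN V u' = C * (C' * NN V w - 1) + NN (V1 V τ j) u := by
    refine le_antisymm ?_ (le_NN ⟨v₁, hV1 v₁ hv₁⟩ fun v hv => ?_)
    · rw [hv₁N, ← hin v₁ hv₁]; exact NN_le (hV1 v₁ hv₁) _
    · by_cases hv1 : v ∈ V1 V τ j
      · rw [hin v hv1]; linarith [NN_le hv1 u]
      · have := hout v hv hv1
        have := hltC v₁ (hV1 v₁ hv₁)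
        rw [hv₁N]; nlinarith
  refine ⟨u', fun i => ?_, ?_⟩
  · have : 0 ≤ e i := by
      by_cases hij : i = j
      · subst hij; simp [he]; linarith
      · simp [he, Pi.single_eq_of_ne hij]; exact mul_nonneg hC0 (hw i)
    have := mul_nonneg hCpos.le this
    have h2 := hu i
    simp only [hu', Pi.add_apply, Pi.smul_apply, smul_eq_mul]; linarith
  · ext v
    simp only [Finset.mem_filter]
    constructor
    · rintro ⟨hv, hve⟩
      by_cases hv1 : v ∈ V1 V τ j
      · refine ⟨hv1, ?_⟩
        rw [hin v hv1, hNN] at hve; linarith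
      · have := hout v hv hv1
        have := hltC v₁ (hV1 v₁ hv₁)
        rw [hve, hNN, hv₁N] at *; nlinarith
    · rintro ⟨hv1, hve⟩
      exact ⟨hV1 v hv1, by rw [hin v hv1, hNN, hve]⟩

/-- Instability supplies the hypothesis of `lower_bound` for the part of the sum over the exponents on
`τ` with `j`-th entry `1`. The required weights on the whole of `V` come from `exists_weight`. -/
lemma low_unstable {n : ℕ} {a : (Fin n → ℕ) → ℝ} {V : Finset (Fin n → ℕ)}
    (h : Dom {α | a α ≠ 0} V) {τ : Set (Fin n → ℝ)} {j : Fin n}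
    (h1 : (V1 V τ j).Nonempty) {w : Fin n → ℝ} (hw : ∀ i, 0 ≤ w i) (hwj : 0 < w j)
    (hτ : ∀ v ∈ V, cv v ∈ τ ↔ dotR w (cv v) = NN V w) (hle : ∀ v ∈ V, cv v ∈ τ → v j ≤ 1)
    (hun : ∀ γ : Set (Fin n → ℝ), IsFaceOf (newtonPolyhedron {α | a α ≠ 0}) γ → IsCompact γ →
      (∀ y ∈ γ, y j = 1) → ∀ x : Fin n → ℝ, (∀ i, x i ≠ 0) → facePoly a γ x ≠ 0)
    {g : (Fin n → ℕ) → (Fin n → ℝ) → ℝ} (hg : ∀ v, ContDiff ℝ (⊤ : ℕ∞) (g v))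
    (hga : ∀ v ∈ V, g v 0 = a v) :
    ∃ c > 0, ∃ r > 0, ∀ x ∈ Wx r,
      c * ∑ v ∈ V1 V τ j, |mon v x| ≤ |∑ v ∈ V1 V τ j, mon v x * g v x| := by
  have hV : V.Nonempty := h1.mono (Finset.filter_subset _ _)
  obtain ⟨c, hc, r, hr, hlow⟩ := lower_bound (k := 1) (V1 V τ j) h1 (fun v _ x => g v x)
    (fun v _ l => (hg v).continuous.continuousAt) (by
    intro u hu z hz
    obtain ⟨u', hu', e⟩ := exists_weight h1 hw hwj hτ hle hu
    refine ⟨0, ?_⟩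
    have h2 := hun _ ⟨u', fun i => (hu' i).le, rfl⟩ (h.isCompact_face hV hu') (fun y hy => ?_) z hz
    · rw [facePoly_eq h hV hu', e] at h2
      refine fun h3 => h2 (Eq.trans (Finset.sum_congr rfl fun v hv => ?_) h3)
      rw [hga v (Finset.mem_filter.1 (Finset.mem_filter.1 hv).1).1]
    · obtain ⟨b, hb, hb1, rfl, hbe⟩ := h.traceFace_pos hV hu' hy
      rw [Finset.sum_apply, ← hb1]
      refine Finset.sum_congr rfl fun v hv => ?_
      by_cases hbv : b v = 0
      · simp [hbv]
      · have : v ∈ V.filter (fun v => dotR u' (cv v) = NN V u') :=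
          Finset.mem_filter.2 ⟨hv, hbe v hv hbv⟩
        rw [e] at this
        have := (Finset.mem_filter.1 (Finset.mem_filter.1 this).1).2.1
        simp [cv, this])
  refine ⟨c, hc, r, hr, fun x hx => ?_⟩
  simpa using hlow x hx

lemma mV_nonneg {n : ℕ} (V : Finset (Fin n → ℕ)) (x : Fin n → ℝ) : 0 ≤ mV V x :=
  Finset.sum_nonneg fun _ _ => abs_nonneg _

/-- The decomposition of an unstable non-degenerate function. Exponents are grouped according to
whether the `j`-th entry is `0`, is `1` (on or off `τ₀`), or is at least `2`, so that only the parts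
with `j`-th entry at least `2` involve `x_j` otherwise than through the monomials. -/
theorem exists_setup {n : ℕ} {f : (Fin n → ℝ) → ℝ} {a : (Fin n → ℕ) → ℝ}
    (hfa : ∀ᶠ x in 𝓝 (0 : Fin n → ℝ), HasSum (fun α => a α * ∏ i, x i ^ α i) (f x))
    (hf0 : f 0 = 0)
    (hnd : NonDegenerateR a (newtonPolyhedron {α | a α ≠ 0}))
    {τ₀ : Set (Fin n → ℝ)} (hτface : IsFaceOf (newtonPolyhedron {α | a α ≠ 0}) τ₀)
    {j : Fin n} (hunst : UnstableR a (newtonPolyhedron {α | a α ≠ 0}) τ₀ j) :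
    ∃ V g r c, Inst V g r c τ₀ j ∧ Dom {α | a α ≠ 0} V ∧ ∀ x ∈ bx r, f x = fV V g x := by
  set cls : (Fin n → ℕ) → ℕ := fun α =>
    if α j = 0 then 0 else if α j = 1 then (if cv α ∈ τ₀ then 1 else 2) else 3 with hcls
  obtain ⟨V, cl, hVS, hcl, hclV⟩ := exists_minimals {α | a α ≠ 0} cls (fun α => by
    simp only [hcls]; split_ifs <;> norm_num)
  have h : Dom {α | a α ≠ 0} V := ⟨hVS, fun α hα => ⟨cl α, (hcl α hα).1, (hcl α hα).2.1⟩⟩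
  obtain ⟨w, hw, hτw⟩ := hτface
  obtain ⟨hu1, hu2, hu3⟩ := hunst
  obtain ⟨y, hyτ, hyj⟩ : ∃ y ∈ τ₀, y j ≠ 0 := by push Not at hu2; exact hu2
  have hyΓ : y ∈ newtonPolyhedron {α | a α ≠ 0} := by rw [hτw] at hyτ; exact hyτ.1
  obtain ⟨b, hb, hb1, hby⟩ := (h.mem_iff y).1 hyΓ
  have hV : V.Nonempty := by
    by_contra hne
    rw [Finset.not_nonempty_iff_eq_empty] at hne
    rw [hne] at hb1; simp at hb1
  have hτ' : ∀ z, z ∈ τ₀ ↔ z ∈ newtonPolyhedron {α | a α ≠ 0} ∧ dotR w z = NN V w := by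
    intro z; rw [hτw]; exact h.mem_traceFace hV hw z
  have hτ : ∀ v ∈ V, cv v ∈ τ₀ ↔ dotR w (cv v) = NN V w := fun v hv => by
    rw [hτ']; exact ⟨fun h => h.2, fun h => ⟨Dom.cv_mem (hVS v hv), h⟩⟩
  have hle : ∀ α, cv α ∈ τ₀ → α j ≤ 1 := fun α hα => by
    have := (hu1 _ hα).2
    simp only [cv] at this; exact_mod_cast this
  have hwj : 0 < w j := by
    refine lt_of_le_of_ne (hw j) fun h0 => ?_
    have hz : y + Pi.single j 2 ∈ τ₀ := by
      rw [hτ']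
      refine ⟨h.mem_of_le hyΓ fun i => ?_, ?_⟩
      · by_cases hij : i = j
        · subst hij; simp
        · simp [Pi.single_eq_of_ne hij]
      · rw [dotR_add_right, ((hτ' y).1 hyτ).2]
        simp [dotR, Pi.single_apply, ← h0]
    have h1 := (hu1 _ hz).2
    have h2 := (hu1 _ hyτ).1
    simp at h1; linarith
  have hwy : dotR w (∑ v ∈ V, b v • cv v) = NN V w :=
    le_antisymm ((dotR_mono_right hw hby).trans ((hτ' y).1 hyτ).2.le) (NN_le_conv hb hb1 w)
  have hne1 : (V1 V τ₀ j).Nonempty := by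
    have hyeq : (∑ v ∈ V, b v • cv v) j = y j := by
      by_contra hne
      have hlt := lt_of_le_of_ne (hby j) hne
      have : dotR w (∑ v ∈ V, b v • cv v) < dotR w y :=
        Finset.sum_lt_sum (fun i _ => mul_le_mul_of_nonneg_left (hby i) (hw i))
          ⟨j, Finset.mem_univ j, mul_lt_mul_of_pos_left hlt hwj⟩
      rw [hwy, ((hτ' y).1 hyτ).2] at this
      exact lt_irrefl _ this
    have hex : ∃ v ∈ V, b v * (v j : ℝ) ≠ 0 := by
      by_contra hcon
      push Not at hcon
      apply hyj
      rw [← hyeq, Finset.sum_apply]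
      exact Finset.sum_eq_zero fun v hv => hcon v hv
    obtain ⟨v, hv, hbv⟩ := hex
    have hb0 : b v ≠ 0 := left_ne_zero_of_mul hbv
    have hvj : v j ≠ 0 := by exact_mod_cast right_ne_zero_of_mul hbv
    have hvτ : cv v ∈ τ₀ := by
      rw [hτ v hv]
      by_contra hne
      have hlt : NN V w < dotR w (cv v) := lt_of_le_of_ne (NN_le hv w) (Ne.symm hne)
      have : ∑ v ∈ V, b v * NN V w < ∑ v ∈ V, b v * dotR w (cv v) :=
        Finset.sum_lt_sum (fun i hi => mul_le_mul_of_nonneg_left (NN_le hi w) (hb i))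
          ⟨v, hv, mul_lt_mul_of_pos_left hlt (lt_of_le_of_ne (hb v) (Ne.symm hb0))⟩
      rw [← Finset.sum_mul, hb1, one_mul, ← dotR_conv, hwy] at this
      exact lt_irrefl _ this
    have := hle v hvτ
    exact ⟨v, Finset.mem_filter.2 ⟨hv, by omega, hvτ⟩⟩
  obtain ⟨r₁, hr₁, g, hg, hfg, hga, hgi⟩ := power_split hfa cl V
    (fun α hα => ⟨(hcl α hα).1, (hcl α hα).2.1⟩) hclV
  obtain ⟨c₂, hc₂, r₂, hr₂, hlow⟩ := low_grad h hV hnd hg hga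
  obtain ⟨c₃, hc₃, r₃, hr₃, hlow1⟩ := low_unstable h hne1 hw hwj hτ (fun v _ => hle v) hu3 hg hga
  have hs0 : fV V g 0 = 0 := by rw [← hf0, hfg 0 (zero_mem_bx hr₁)]; rfl
  obtain ⟨r₄, hr₄, hsmall⟩ := exists_bx_of_eventually
    (p := fun x : Fin n → ℝ => |fV V g x| < 1)
    (((contDiff_fV hg).continuous.abs.tendsto 0).eventually_lt_const (by simp [hs0]))
  set r := min (min r₁ r₂) (min (min r₃ r₄) (1 / 2)) with hr
  have e1 : r ≤ r₁ := (min_le_left _ _).trans (min_le_left _ _)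
  have e2 : r ≤ r₂ := (min_le_left _ _).trans (min_le_right _ _)
  have e3 : r ≤ r₃ := (min_le_right _ _).trans ((min_le_left _ _).trans (min_le_left _ _))
  have e4 : r ≤ r₄ := (min_le_right _ _).trans ((min_le_left _ _).trans (min_le_right _ _))
  have e5 : r ≤ 1 / 2 := (min_le_right _ _).trans (min_le_right _ _)
  refine ⟨V, g, r, min c₂ c₃, ?_, h, fun x hx => hfg x (bx_mono e1 hx)⟩
  refine ⟨⟨hV, by positivity, by linarith, by positivity, hg, fun x hx => ?_,
    fun x hx => (hsmall x (bx_mono e4 hx)).le⟩, hne1, fun x hx => ?_, fun v hv hvj x hx => ?_⟩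
  · exact (mul_le_mul_of_nonneg_right (min_le_left _ _) (mV_nonneg V x)).trans
      (hlow x (Wx_mono e2 hx))
  · exact (mul_le_mul_of_nonneg_right (min_le_right _ _)
      (Finset.sum_nonneg fun _ _ => abs_nonneg _)).trans (hlow1 x (Wx_mono e3 hx))
  · refine hgi v hv j (fun α hα hαv => ?_) x (bx_mono e1 hx)
    have h1 : cls v = cls α := by rw [← hαv]; exact (hcl α hα).2.2
    have h2 : v j ≤ α j := by rw [← hαv]; exact (hcl α hα).2.1 j
    simp only [hcls] at h1
    split_ifs at h1 <;> omega

/-! ### Symbols -/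

/-- `Ψ` and its iterated logarithmic derivatives `x_i ∂_i` of order at most `k` are bounded by
multiples of the weight `ω` on the box of half-width `r` without the coordinate hyperplanes. -/
def Symb {n : ℕ} (r : ℝ) : ℕ → ((Fin n → ℝ) → ℝ) → ((Fin n → ℝ) → ℝ) → Prop
  | 0, ω, Ψ => ∃ C : ℝ, 0 ≤ C ∧ ∀ x ∈ Wx r, |Ψ x| ≤ C * ω x
  | k + 1, ω, Ψ => (∃ C : ℝ, 0 ≤ C ∧ ∀ x ∈ Wx r, |Ψ x| ≤ C * ω x) ∧
      (∀ x ∈ Wx r, DifferentiableAt ℝ Ψ x) ∧ ∀ i, Symb r k ω (Ed i Ψ)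

/-- `Ψ` and all its iterated logarithmic derivatives are bounded by multiples of `ω`. -/
def SS {n : ℕ} (r : ℝ) (ω Ψ : (Fin n → ℝ) → ℝ) : Prop := ∀ k, Symb r k ω Ψ

section Symbols

variable {n : ℕ} {r : ℝ} {ω ω' Ψ Φ : (Fin n → ℝ) → ℝ}

lemma eventuallyEq_of_eqOn_Wx (h : Set.EqOn Ψ Φ (Wx r)) {x : Fin n → ℝ} (hx : x ∈ Wx r) :
    Ψ =ᶠ[𝓝 x] Φ := h.eventuallyEq_of_mem ((isOpen_Wx r).mem_nhds hx)

lemma Symb.bound {k : ℕ} (h : Symb r k ω Ψ) : ∃ C : ℝ, 0 ≤ C ∧ ∀ x ∈ Wx r, |Ψ x| ≤ C * ω x := by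
  cases k with
  | zero => exact h
  | succ k => exact h.1

lemma Symb.congr {k : ℕ} (h : Symb r k ω Ψ) (e : Set.EqOn Φ Ψ (Wx r)) : Symb r k ω Φ := by
  induction k generalizing Ψ Φ with
  | zero =>
    obtain ⟨C, hC, h⟩ := h
    exact ⟨C, hC, fun x hx => by rw [e hx]; exact h x hx⟩
  | succ k ih =>
    obtain ⟨⟨C, hC, h1⟩, h2, h3⟩ := h
    refine ⟨⟨C, hC, fun x hx => by rw [e hx]; exact h1 x hx⟩, fun x hx => ?_, fun i => ?_⟩
    · exact (h2 x hx).congr_of_eventuallyEq (eventuallyEq_of_eqOn_Wx e hx)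
    · refine ih (h3 i) fun x hx => ?_
      rw [Ed, Ed, Dd_congr (eventuallyEq_of_eqOn_Wx e hx)]

lemma Symb.mono {k : ℕ} (h : Symb r k ω Ψ) {D : ℝ} (hD : 0 ≤ D)
    (hω : ∀ x ∈ Wx r, ω x ≤ D * ω' x) : Symb r k ω' Ψ := by
  have key : ∀ {Ψ : (Fin n → ℝ) → ℝ}, (∃ C : ℝ, 0 ≤ C ∧ ∀ x ∈ Wx r, |Ψ x| ≤ C * ω x) →
      ∃ C : ℝ, 0 ≤ C ∧ ∀ x ∈ Wx r, |Ψ x| ≤ C * ω' x := by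
    rintro Ψ ⟨C, hC, h⟩
    refine ⟨C * D, mul_nonneg hC hD, fun x hx => (h x hx).trans ?_⟩
    rw [mul_assoc]; exact mul_le_mul_of_nonneg_left (hω x hx) hC
  induction k generalizing Ψ with
  | zero => exact key h
  | succ k ih => exact ⟨key h.1, h.2.1, fun i => ih (h.2.2 i)⟩

lemma Symb.add {k : ℕ} (h : Symb r k ω Ψ) (h' : Symb r k ω Φ) :
    Symb r k ω (fun x => Ψ x + Φ x) := by
  have key : ∀ {Ψ Φ : (Fin n → ℝ) → ℝ}, (∃ C : ℝ, 0 ≤ C ∧ ∀ x ∈ Wx r, |Ψ x| ≤ C * ω x) →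
      (∃ C : ℝ, 0 ≤ C ∧ ∀ x ∈ Wx r, |Φ x| ≤ C * ω x) →
      ∃ C : ℝ, 0 ≤ C ∧ ∀ x ∈ Wx r, |Ψ x + Φ x| ≤ C * ω x := by
    rintro Ψ Φ ⟨C, hC, h⟩ ⟨C', hC', h'⟩
    exact ⟨C + C', add_nonneg hC hC', fun x hx => (abs_add_le _ _).trans
      ((add_le_add (h x hx) (h' x hx)).trans (add_mul _ _ _).ge)⟩
  induction k generalizing Ψ Φ with
  | zero => exact key h h'
  | succ k ih =>
    refine ⟨key h.1 h'.1, fun x hx => (h.2.1 x hx).add (h'.2.1 x hx), fun i => ?_⟩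
    refine (ih (h.2.2 i) (h'.2.2 i)).congr fun x hx => ?_
    simp only [Ed]
    rw [Dd_add (h.2.1 x hx) (h'.2.1 x hx)]; ring

lemma Symb.pred {k : ℕ} (h : Symb r (k + 1) ω Ψ) : Symb r k ω Ψ := by
  induction k generalizing Ψ with
  | zero => exact h.1
  | succ k ih => exact ⟨h.1, h.2.1, fun i => ih (h.2.2 i)⟩

lemma Symb.mul {k : ℕ} (h : Symb r k ω Ψ) (h' : Symb r k ω' Φ) :
    Symb r k (fun x => ω x * ω' x) (fun x => Ψ x * Φ x) := by
  have key : ∀ {Ψ Φ : (Fin n → ℝ) → ℝ}, (∃ C : ℝ, 0 ≤ C ∧ ∀ x ∈ Wx r, |Ψ x| ≤ C * ω x) →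
      (∃ C : ℝ, 0 ≤ C ∧ ∀ x ∈ Wx r, |Φ x| ≤ C * ω' x) →
      ∃ C : ℝ, 0 ≤ C ∧ ∀ x ∈ Wx r, |Ψ x * Φ x| ≤ C * (ω x * ω' x) := by
    rintro Ψ Φ ⟨C, hC, h⟩ ⟨C', hC', h'⟩
    refine ⟨C * C', mul_nonneg hC hC', fun x hx => ?_⟩
    rw [abs_mul]
    calc _ ≤ (C * ω x) * (C' * ω' x) :=
          mul_le_mul (h x hx) (h' x hx) (abs_nonneg _) ((abs_nonneg _).trans (h x hx))
      _ = _ := by ring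
  induction k generalizing Ψ Φ with
  | zero => exact key h h'
  | succ k ih =>
    refine ⟨key h.1 h'.1, fun x hx => (h.2.1 x hx).mul (h'.2.1 x hx), fun i => ?_⟩
    refine ((ih (h.2.2 i) h'.pred).add (ih h.pred (h'.2.2 i))).congr fun x hx => ?_
    simp only [Ed]
    rw [Dd_mul (h.2.1 x hx) (h'.2.1 x hx)]; ring

lemma SS.bound (h : SS r ω Ψ) : ∃ C : ℝ, 0 ≤ C ∧ ∀ x ∈ Wx r, |Ψ x| ≤ C * ω x := h 0

lemma SS.diff (h : SS r ω Ψ) {x : Fin n → ℝ} (hx : x ∈ Wx r) : DifferentiableAt ℝ Ψ x :=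
  (h 1).2.1 x hx

lemma SS.Ed (h : SS r ω Ψ) (i : Fin n) : SS r ω (Ed i Ψ) := fun k => (h (k + 1)).2.2 i

lemma SS.congr (h : SS r ω Ψ) (e : Set.EqOn Φ Ψ (Wx r)) : SS r ω Φ := fun k => (h k).congr e

lemma SS.mono (h : SS r ω Ψ) {D : ℝ} (hD : 0 ≤ D) (hω : ∀ x ∈ Wx r, ω x ≤ D * ω' x) :
    SS r ω' Ψ := fun k => (h k).mono hD hω

lemma SS.add (h : SS r ω Ψ) (h' : SS r ω Φ) : SS r ω (fun x => Ψ x + Φ x) :=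
  fun k => (h k).add (h' k)

lemma SS.mul (h : SS r ω Ψ) (h' : SS r ω' Φ) : SS r (fun x => ω x * ω' x) (fun x => Ψ x * Φ x) :=
  fun k => (h k).mul (h' k)

/-- Smooth functions have symbol weight `1`. -/
lemma SS.of_contDiff (h : ContDiff ℝ (⊤ : ℕ∞) Ψ) : SS r (fun _ => 1) Ψ := by
  have key : ∀ {Ψ : (Fin n → ℝ) → ℝ}, ContDiff ℝ (⊤ : ℕ∞) Ψ →
      ∃ C : ℝ, 0 ≤ C ∧ ∀ x ∈ Wx r, |Ψ x| ≤ C * 1 := by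
    intro Ψ h
    obtain ⟨C, hC⟩ := (isCompact_univ_pi fun _ : Fin n => isCompact_Icc (a := -r) (b := r)).exists_bound_of_continuousOn
      h.continuous.continuousOn
    refine ⟨max C 0, le_max_right _ _, fun x hx => ?_⟩
    rw [mul_one]
    exact (hC x fun i _ => abs_le.1 (hx.1 i).le).trans (le_max_left _ _)
  intro k
  induction k generalizing Ψ with
  | zero => exact key h
  | succ k ih =>
    exact ⟨key h, fun x _ => h.differentiable (by simp) x, fun i => ih (contDiff_Ed i h)⟩

lemma SS.const_mul (h : SS r ω Ψ) (c : ℝ) : SS r ω (fun x => c * Ψ x) :=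
  ((SS.of_contDiff (contDiff_const (c := c))).mul h).mono zero_le_one (by simp)

lemma SS.neg (h : SS r ω Ψ) : SS r ω (fun x => -Ψ x) := (h.const_mul (-1)).congr fun x _ => by simp

lemma SS.zero : SS r ω (fun _ => 0) := by
  intro k
  have hE : ∀ i, (_root_.Ed i (fun _ : Fin n → ℝ => (0 : ℝ))) = fun _ => 0 := fun i => by
    funext x; simp [_root_.Ed, Dd_const]
  induction k with
  | zero => exact ⟨0, le_rfl, by simp⟩
  | succ k ih => exact ⟨⟨0, le_rfl, by simp⟩, fun _ _ => differentiableAt_const _, fun i => by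
      rw [hE]; exact ih⟩

lemma SS.sum {ι : Type*} {s : Finset ι} {Ψ : ι → (Fin n → ℝ) → ℝ}
    (h : ∀ k ∈ s, SS r ω (Ψ k)) : SS r ω (fun x => ∑ k ∈ s, Ψ k x) := by
  induction s using Finset.induction_on with
  | empty => simpa using (SS.zero (ω := ω) (r := r))
  | insert a s ha ih =>
    simp only [Finset.sum_insert ha]
    exact (h a (Finset.mem_insert_self a s)).add (ih fun k hk => h k (Finset.mem_insert_of_mem hk))

lemma SS.mon (β : Fin n → ℕ) : SS r (fun x => |mon β x|) (_root_.mon β) := by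
  have key : ∀ k, ∀ c : ℝ, Symb r k (fun x => |_root_.mon β x|) (fun x => c * _root_.mon β x) := by
    intro k
    have hb : ∀ c : ℝ, ∃ C : ℝ, 0 ≤ C ∧ ∀ x ∈ Wx r, |c * _root_.mon β x| ≤ C * |_root_.mon β x| :=
      fun c => ⟨|c|, abs_nonneg c, fun x _ => (abs_mul _ _).le⟩
    have hd : ∀ x, DifferentiableAt ℝ (_root_.mon β) x := fun x =>
      (contDiff_mon (k := 1) β).differentiable (by simp) x
    induction k with
    | zero => exact hb
    | succ k ih =>
      refine fun c => ⟨hb c, fun x _ => (hd x).const_mul c, fun i => ?_⟩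
      refine (ih (c * β i)).congr fun x _ => ?_
      have h1 := Ed_mon i β x
      simp only [_root_.Ed] at h1 ⊢
      rw [Dd_mul (differentiableAt_const c) (hd x), Dd_const]
      linear_combination c * h1
  intro k
  simpa using key k 1

lemma SS.inv (h : SS r ω Ψ) {c : ℝ} (hc : 0 < c) (hω : ∀ x ∈ Wx r, 0 < ω x)
    (hlow : ∀ x ∈ Wx r, c * ω x ≤ |Ψ x|) : SS r (fun x => (ω x)⁻¹) (fun x => (Ψ x)⁻¹) := by
  have hne : ∀ x ∈ Wx r, Ψ x ≠ 0 := fun x hx =>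
    abs_pos.1 ((mul_pos hc (hω x hx)).trans_le (hlow x hx))
  have hb : ∃ C : ℝ, 0 ≤ C ∧ ∀ x ∈ Wx r, |(Ψ x)⁻¹| ≤ C * (ω x)⁻¹ := by
    refine ⟨c⁻¹, by positivity, fun x hx => ?_⟩
    rw [abs_inv, ← mul_inv]
    exact inv_anti₀ (mul_pos hc (hω x hx)) (hlow x hx)
  intro k
  induction k with
  | zero => exact hb
  | succ k ih =>
    refine ⟨hb, fun x hx => (h.diff hx).inv (hne x hx), fun i => ?_⟩
    have h1 := ((h.Ed i).neg k).mul (ih.mul ih)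
    refine (h1.congr fun x hx => ?_).mono zero_le_one fun x hx => ?_
    · simp only [_root_.Ed]
      rw [Dd_inv (h.diff hx) (hne x hx)]
      field_simp
    · rw [one_mul, ← mul_assoc, mul_inv_cancel₀ (hω x hx).ne', one_mul]

lemma SS.pow (h : SS r ω Ψ) (k : ℕ) : SS r (fun x => ω x ^ k) (fun x => Ψ x ^ k) := by
  induction k with
  | zero => simpa using SS.of_contDiff (contDiff_const (c := (1 : ℝ)))
  | succ k ih => simpa only [pow_succ] using ih.mul h

end Symbols

/-! ### Integration by parts -/

lemma ae_ne_zero {n : ℕ} : ∀ᵐ x : Fin n → ℝ, ∀ i, x i ≠ 0 := by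
  refine ae_all_iff.2 fun i => ?_
  have := Measure.pi_hyperplane (fun _ : Fin n => (volume : Measure ℝ)) i 0
  rw [← volume_pi] at this
  exact (ae_iff.2 (by simpa using this))

/-- The fundamental theorem of calculus for a compactly supported continuous function which need not be
differentiable at `0`. -/
lemma integral_deriv_eq_zero {g g' : ℝ → ℂ} {B : ℝ} (hB : ∀ t, B ≤ |t| → g t = 0)
    (hc : Continuous g) (hd : ∀ t ≠ 0, HasDerivAt g (g' t) t) (hi : Integrable g') :
    ∫ t, g' t = 0 := by
  set B' := |B| + 1 with hB'
  have hBB : B < B' := by rw [hB']; linarith [le_abs_self B]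
  have hB0 : 0 < B' := by rw [hB']; positivity
  have hz : ∀ t, t ∉ Set.Ioc (-B') B' → g' t = 0 := by
    intro t ht
    have ht' : B < |t| := by
      by_contra hcon
      push Not at hcon
      have := abs_le.1 hcon
      exact ht ⟨by linarith, by linarith⟩
    have ht0 : t ≠ 0 := by
      rintro rfl
      exact ht ⟨by linarith, hB0.le⟩
    have h1 : g =ᶠ[𝓝 t] fun _ => 0 := by
      filter_upwards [(continuous_abs.tendsto t).eventually_const_lt ht'] with s hs
      exact hB s hs.le
    exact (hd t ht0).unique ((hasDerivAt_const t (0 : ℂ)).congr_of_eventuallyEq h1)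
  rw [← setIntegral_eq_integral_of_forall_compl_eq_zero hz,
    ← intervalIntegral.integral_of_le (by linarith)]
  rw [integral_eq_of_hasDerivAt_off_countable g g' (Set.countable_singleton (0 : ℝ))
    hc.continuousOn (fun t ht => hd t (by simpa using ht.2)) hi.intervalIntegrable]
  rw [hB B' (by rw [abs_of_pos hB0]; exact hBB.le),
    hB (-B') (by rw [abs_neg, abs_of_pos hB0]; exact hBB.le), sub_zero]

/-- The integral of a partial derivative of a function supported in a bounded set vanishes, where
the derivative need not exist on the coordinate hyperplanes. -/
lemma integral_partial_eq_zero {n : ℕ} (i : Fin n) {h h' : (Fin n → ℝ) → ℂ} {B : ℝ}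
    (hB : ∀ x, B ≤ |x i| → h x = 0)
    (hd : ∀ x : Fin n → ℝ, (∀ k ≠ i, x k ≠ 0) → Continuous (fun t => h (Function.update x i t)) ∧
      ∀ t ≠ 0, HasDerivAt (fun t => h (Function.update x i t)) (h' (Function.update x i t)) t)
    (hi : Integrable h') : ∫ x, h' x = 0 := by
  obtain ⟨m, rfl⟩ : ∃ m, n = m + 1 := ⟨n - 1, by have := i.isLt; omega⟩
  have hmp := (volume_preserving_piFinSuccAbove (fun _ : Fin (m + 1) => ℝ) i).symm
  rw [← hmp.integral_comp' h']
  have hi' : Integrable (fun z : ℝ × (Fin m → ℝ) =>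
      h' ((MeasurableEquiv.piFinSuccAbove (fun _ : Fin (m + 1) => ℝ) i).symm z))
      (volume.prod volume) := (hmp.integrable_comp_emb (MeasurableEquiv.measurableEmbedding _)).2 hi
  rw [Measure.volume_eq_prod, integral_prod_symm _ hi']
  refine integral_eq_zero_of_ae ?_
  filter_upwards [hi'.prod_left_ae, ae_ne_zero (n := m)] with y hy hy0
  have hup : ∀ t, Function.update (i.insertNth (0 : ℝ) y : Fin (m + 1) → ℝ) i t =
      (MeasurableEquiv.piFinSuccAbove (fun _ : Fin (m + 1) => ℝ) i).symm (t, y) := by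
    intro t
    rw [Fin.update_insertNth]; rfl
  have hne : ∀ k ≠ i, (i.insertNth (0 : ℝ) y : Fin (m + 1) → ℝ) k ≠ 0 := by
    intro k hk
    obtain ⟨l, rfl⟩ := Fin.exists_succAbove_eq hk
    simpa using hy0 l
  obtain ⟨h1, h2⟩ := hd _ hne
  simp only [hup] at h1 h2
  refine integral_deriv_eq_zero (B := B) (fun t ht => ?_) h1 h2 hy
  refine hB _ ?_
  rw [← hup]; simpa using ht

/-! ### Powers of the positive and negative parts -/

/-- The complex power `(max (σ t) 0) ^ s`. -/
def pw (σ : ℝ) (s : ℂ) (t : ℝ) : ℂ := ((sgnPart σ t : ℝ) : ℂ) ^ s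

lemma sgnPart_nonneg (σ t : ℝ) : 0 ≤ sgnPart σ t := le_max_right _ _

lemma sgnPart_le {σ : ℝ} (hσ : σ = 1 ∨ σ = -1) (t : ℝ) : sgnPart σ t ≤ |t| := by
  rcases hσ with rfl | rfl
  · simp [sgnPart, le_abs_self]
  · simp [sgnPart, neg_le_abs]

lemma norm_pw (σ : ℝ) {s : ℂ} (hs : s.re ≠ 0) (t : ℝ) : ‖pw σ s t‖ = sgnPart σ t ^ s.re :=
  Complex.norm_cpow_eq_rpow_re_of_nonneg (sgnPart_nonneg σ t) hs

lemma norm_pw_le {σ : ℝ} (hσ : σ = 1 ∨ σ = -1) {s : ℂ} (hs : 0 < s.re) (t : ℝ) :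
    ‖pw σ s t‖ ≤ |t| ^ s.re := by
  rw [norm_pw σ hs.ne']
  exact Real.rpow_le_rpow (sgnPart_nonneg σ t) (sgnPart_le hσ t) hs.le

lemma continuous_pw (σ : ℝ) {s : ℂ} (hs : 0 < s.re) : Continuous (pw σ s) := by
  have h1 : Continuous (fun t : ℝ => sgnPart σ t) := by unfold sgnPart; fun_prop
  exact (Complex.continuous_ofReal_cpow_const hs).comp h1

/-- Since the real part of the exponent exceeds `1`, the power is differentiable also at `0`. -/
lemma hasDerivAt_pw {σ : ℝ} (hσ : σ = 1 ∨ σ = -1) {s : ℂ} (hs : 1 < s.re) (t : ℝ) :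
    HasDerivAt (pw σ s) (s * σ * pw σ (s - 1) t) t := by
  have hs0 : s ≠ 0 := by rintro rfl; simp at hs; linarith
  have hs1 : s - 1 ≠ 0 := by
    intro h
    have := congrArg Complex.re h
    simp at this; linarith
  have hσ2 : |σ| = 1 := by rcases hσ with rfl | rfl <;> simp
  rcases lt_trichotomy (σ * t) 0 with h | h | h
  · have h0 : pw σ (s - 1) t = 0 := by
      simp [pw, sgnPart, max_eq_right h.le, Complex.zero_cpow hs1]
    rw [h0, mul_zero]
    refine (hasDerivAt_const t (0 : ℂ)).congr_of_eventuallyEq ?_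
    have : ∀ᶠ u in 𝓝 t, σ * u < 0 :=
      ((continuous_const.mul continuous_id).tendsto t).eventually_lt_const h
    filter_upwards [this] with u hu
    simp [pw, sgnPart, max_eq_right hu.le, Complex.zero_cpow hs0]
  · have ht : t = 0 := by
      rcases mul_eq_zero.1 h with h | h
      · rw [h] at hσ2; simp at hσ2
      · exact h
    subst ht
    have h0 : pw σ (s - 1) 0 = 0 := by simp [pw, sgnPart, Complex.zero_cpow hs1]
    have h0' : pw σ s 0 = 0 := by simp [pw, sgnPart, Complex.zero_cpow hs0]
    rw [h0, mul_zero, hasDerivAt_iff_isLittleO]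
    simp only [h0', sub_zero, smul_zero]
    refine Asymptotics.isLittleO_iff.2 fun ε hε => ?_
    have hlim : Tendsto (fun u : ℝ => |u| ^ (s.re - 1)) (𝓝 0) (𝓝 0) := by
      have : Continuous (fun u : ℝ => |u| ^ (s.re - 1)) :=
        continuous_abs.rpow_const fun _ => Or.inr (by linarith)
      have h2 := this.tendsto 0
      simpa [Real.zero_rpow (by linarith : s.re - 1 ≠ 0)] using h2
    filter_upwards [hlim.eventually_lt_const hε] with u hu
    refine (norm_pw_le hσ (by linarith) u).trans ?_
    rcases eq_or_ne u 0 with rfl | hu0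
    · simp [Real.zero_rpow (by linarith : s.re ≠ 0)]
    · have : |u| ^ s.re = |u| ^ (s.re - 1) * |u| := by
        rw [← Real.rpow_add_one (abs_ne_zero.2 hu0)]; congr 1; ring
      rw [this, Real.norm_eq_abs]
      exact mul_le_mul_of_nonneg_right hu.le (abs_nonneg _)
  · have e : pw σ (s - 1) t = ((σ * t : ℝ) : ℂ) ^ (s - 1) := by
      simp [pw, sgnPart, max_eq_left h.le]
    have h1 : HasDerivAt (fun u : ℝ => ((σ * u : ℝ) : ℂ)) (σ : ℂ) t := by
      have := ((hasDerivAt_id t).const_mul σ).ofReal_comp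
      simpa using this
    have h2 : HasDerivAt (fun u : ℝ => ((σ * u : ℝ) : ℂ) ^ s)
        (s * ((σ * t : ℝ) : ℂ) ^ (s - 1) * σ) t :=
      by
        have h0 := (Complex.hasStrictDerivAt_cpow_const (c := s)
          (Complex.ofReal_mem_slitPlane.2 h)).hasDerivAt
        exact HasDerivAt.comp t h0 h1
    have h3 : HasDerivAt (pw σ s) (s * ((σ * t : ℝ) : ℂ) ^ (s - 1) * σ) t := by
      refine h2.congr_of_eventuallyEq ?_
      have : ∀ᶠ u in 𝓝 t, 0 < σ * u :=
        ((continuous_const.mul continuous_id).tendsto t).eventually_const_lt h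
      filter_upwards [this] with u hu
      simp [pw, sgnPart, max_eq_left hu.le]
    rw [e, mul_right_comm]; exact h3

lemma pw_mul_self {σ : ℝ} (hσ : σ = 1 ∨ σ = -1) {s : ℂ} (hs : 0 < s.re) (t : ℝ) :
    pw σ s t * t = σ * pw σ (s + 1) t := by
  have hs0 : s ≠ 0 := by rintro rfl; simp at hs
  have hs1 : s + 1 ≠ 0 := by
    intro h
    have := congrArg Complex.re h
    simp at this; linarith
  rcases le_or_gt (σ * t) 0 with h | h
  · simp [pw, sgnPart, max_eq_right h, Complex.zero_cpow hs0, Complex.zero_cpow hs1]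
  · have e : sgnPart σ t = σ * t := max_eq_left h.le
    have ht : (t : ℂ) = σ * ((σ * t : ℝ) : ℂ) := by
      rcases hσ with rfl | rfl <;> simp
    simp only [pw, e]
    rw [Complex.cpow_add _ _ (by exact_mod_cast h.ne'), Complex.cpow_one]
    conv_lhs => rw [ht]
    ring

/-! ### Integrals of amplitudes against powers of `f` -/

/-- `Ψ` vanishes off the closed box of half-width `r'`. -/
def SuppIn {n : ℕ} {E : Type*} [Zero E] (r' : ℝ) (Ψ : (Fin n → ℝ) → E) : Prop :=
  ∀ x, (∃ i, r' < |x i|) → Ψ x = 0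

/-- An admissible amplitude of weight `ω`. -/
def Adm {n : ℕ} (r r' : ℝ) (ω Ψ : (Fin n → ℝ) → ℝ) : Prop := SS r ω Ψ ∧ SuppIn r' Ψ

/-- The integral `∫ f_± ^ s Ψ`. -/
def FF {n : ℕ} (σ : ℝ) (f : (Fin n → ℝ) → ℝ) (s : ℂ) (Ψ : (Fin n → ℝ) → ℝ) : ℂ :=
  ∫ x, pw σ s (f x) * (Ψ x : ℂ)

section Integrals

variable {n : ℕ} {r r' : ℝ}

lemma hasDerivAt_line {Ψ : (Fin n → ℝ) → ℝ} {x : Fin n → ℝ} (h : DifferentiableAt ℝ Ψ x)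
    (i : Fin n) : HasDerivAt (fun t => Ψ (Function.update x i t)) (Dd i Ψ x) (x i) := by
  have h1 := hasDerivAt_update x i (x i)
  have h2 : HasFDerivAt Ψ (fderiv ℝ Ψ x) (Function.update x i (x i)) := by
    rw [Function.update_eq_self]; exact h.hasFDerivAt
  exact h2.comp_hasDerivAt (x i) h1

lemma SuppIn.dd {Ψ : (Fin n → ℝ) → ℝ} (h : SuppIn r' Ψ) (i : Fin n) : SuppIn r' (Dd i Ψ) := by
  rintro x ⟨k, hk⟩
  have h1 : Ψ =ᶠ[𝓝 x] fun _ => 0 := by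
    have : ∀ᶠ y : Fin n → ℝ in 𝓝 x, r' < |y k| :=
      ((continuous_apply k).abs.tendsto x).eventually_const_lt hk
    filter_upwards [this] with y hy using h y ⟨k, hy⟩
  rw [Dd_congr h1, Dd_const]

lemma SuppIn.ed {Ψ : (Fin n → ℝ) → ℝ} (h : SuppIn r' Ψ) (i : Fin n) : SuppIn r' (Ed i Ψ) :=
  fun x hx => by rw [Ed, h.dd i x hx, mul_zero]

lemma SuppIn.ae_mem {E : Type*} [Zero E] (hr : r' < r) {Ψ : (Fin n → ℝ) → E} (h : SuppIn r' Ψ) :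
    ∀ᵐ x, x ∈ Wx r ∨ Ψ x = 0 := by
  filter_upwards [ae_ne_zero (n := n)] with x hx
  by_cases hb : ∀ i, |x i| ≤ r'
  · exact Or.inl ⟨fun i => (hb i).trans_lt hr, hx⟩
  · push Not at hb
    exact Or.inr (h x hb)

lemma SuppIn.eq_indicator {E : Type*} [Zero E] (hr : r' < r) {Ψ : (Fin n → ℝ) → E}
    (h : SuppIn r' Ψ) : Ψ =ᵐ[volume] (Wx r).indicator Ψ := by
  filter_upwards [h.ae_mem hr] with x hx
  by_cases hW : x ∈ Wx r
  · rw [Set.indicator_of_mem hW]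
  · rw [Set.indicator_of_notMem hW]; exact hx.resolve_left hW

lemma measurableSet_Wx : MeasurableSet (Wx r : Set (Fin n → ℝ)) := (isOpen_Wx r).measurableSet

lemma volume_Wx_lt_top : volume (Wx r : Set (Fin n → ℝ)) < ⊤ := by
  have : (Wx r : Set (Fin n → ℝ)) ⊆ Set.pi Set.univ fun _ => Set.Icc (-r) r :=
    fun x hx i _ => abs_le.1 (hx.1 i).le
  exact (measure_mono this).trans_lt (isCompact_univ_pi fun _ => isCompact_Icc).measure_lt_top

lemma SuppIn.aesm {H : (Fin n → ℝ) → ℂ} (hr : r' < r) (h : SuppIn r' H)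
    (hc : ContinuousOn H (Wx r)) : AEStronglyMeasurable H volume := by
  refine AEStronglyMeasurable.congr ?_ (h.eq_indicator hr).symm
  exact (aestronglyMeasurable_indicator_iff measurableSet_Wx).2
    (hc.aestronglyMeasurable measurableSet_Wx)

lemma SuppIn.integrable_of_le {H : (Fin n → ℝ) → ℂ} (hr : r' < r) (h : SuppIn r' H)
    (hc : ContinuousOn H (Wx r)) {G : (Fin n → ℝ) → ℝ} (hG : IntegrableOn G (Wx r))
    (hb : ∀ x ∈ Wx r, ‖H x‖ ≤ G x) : Integrable H := by
  refine Integrable.mono' (hG.integrable_indicator measurableSet_Wx) (h.aesm hr hc) ?_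
  filter_upwards [h.ae_mem hr] with x hx
  by_cases hW : x ∈ Wx r
  · rw [Set.indicator_of_mem hW]; exact hb x hW
  · rw [Set.indicator_of_notMem hW, hx.resolve_left hW, norm_zero]

lemma SuppIn.integrable_of_bdd {H : (Fin n → ℝ) → ℂ} (hr : r' < r) (h : SuppIn r' H)
    (hc : ContinuousOn H (Wx r)) {C : ℝ} (hb : ∀ x ∈ Wx r, ‖H x‖ ≤ C) : Integrable H :=
  h.integrable_of_le hr hc (integrableOn_const (C := C) volume_Wx_lt_top.ne) hb

/-- Integration by parts for the Euler field `x_i ∂_i`: the vanishing factor `x_i` makes a bounded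
function continuous across the hyperplane `x_i = 0`. -/
lemma integral_euler_eq_zero (i : Fin n) {H H' : (Fin n → ℝ) → ℂ} (hr : r' < r) (h : SuppIn r' H)
    (hd : ∀ x ∈ Wx r, HasDerivAt (fun t => H (Function.update x i t)) (H' x) (x i))
    (hs : SuppIn r' H') {C : ℝ} (hb : ∀ x ∈ Wx r, ‖H x‖ ≤ C)
    (hi : Integrable fun x => H x + x i * H' x) : ∫ x, (H x + x i * H' x) = 0 := by
  refine integral_partial_eq_zero i (h := fun x => x i * H x) (B := |r'| + 1) ?_ ?_ hi
  · intro x hx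
    rw [h x ⟨i, by linarith [le_abs_self r']⟩, mul_zero]
  · intro x hx
    by_cases hxr : ∃ k, k ≠ i ∧ r' < |x k|
    · obtain ⟨k, hk, hkr⟩ := hxr
      have h0 : ∀ t, H (Function.update x i t) = 0 := fun t => h _ ⟨k, by simpa [hk] using hkr⟩
      have h0' : ∀ t, H' (Function.update x i t) = 0 := fun t => hs _ ⟨k, by simpa [hk] using hkr⟩
      simp only [h0, h0', mul_zero, add_zero]
      exact ⟨continuous_const, fun t _ => hasDerivAt_const t _⟩
    · push Not at hxr
      have hW : ∀ t : ℝ, t ≠ 0 → |t| < r → Function.update x i t ∈ Wx r := by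
        intro t ht htr
        refine ⟨fun k => ?_, fun k => ?_⟩ <;> by_cases hk : k = i
        · subst hk; simpa using htr
        · simpa [hk] using (hxr k hk).trans_lt hr
        · subst hk; simpa using ht
        · simpa [hk] using hx k hk
      have hD : ∀ t ≠ 0, HasDerivAt (fun t => ((Function.update x i t) i : ℂ) * H (Function.update x i t))
          (H (Function.update x i t) + (Function.update x i t) i * H' (Function.update x i t)) t := by
        intro t ht
        simp only [Function.update_self]
        have h1 : HasDerivAt (fun t : ℝ => (t : ℂ)) 1 t := by
          simpa using (hasDerivAt_id t).ofReal_comp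
        have h2 : HasDerivAt (fun t => H (Function.update x i t)) (H' (Function.update x i t)) t := by
          by_cases htr : |t| < r
          · have := hd _ (hW t ht htr)
            simpa using this
          · push Not at htr
            have hz : ∀ᶠ u in 𝓝 t, H (Function.update x i u) = 0 := by
              have : ∀ᶠ u in 𝓝 t, r' < |u| :=
                (continuous_abs.tendsto t).eventually_const_lt (hr.trans_le htr)
              filter_upwards [this] with u hu
              exact h _ ⟨i, by simpa using hu⟩
            rw [hs (Function.update x i t) ⟨i, by simpa using hr.trans_le htr⟩]
            exact (hasDerivAt_const t (0 : ℂ)).congr_of_eventuallyEq hz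
        have := h1.mul h2
        rw [one_mul] at this
        exact this
      refine ⟨continuous_iff_continuousAt.2 fun t => ?_, hD⟩
      by_cases ht : t = 0
      · subst ht
        by_cases hr0 : 0 < r
        · simp only [Function.update_self]
          refine ContinuousAt.congr_of_eventuallyEq (f := fun t : ℝ => (t : ℂ) * H (Function.update x i t)) ?_ (Eventually.of_forall fun t => rfl)
          have hlim : Tendsto (fun t : ℝ => |t| * |C|) (𝓝 0) (𝓝 0) := by
            have hc : Continuous fun t : ℝ => |t| * |C| := by fun_prop
            simpa using hc.tendsto 0
          rw [ContinuousAt, Complex.ofReal_zero, zero_mul]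
          refine squeeze_zero_norm' ?_ hlim
          have : ∀ᶠ u : ℝ in 𝓝 0, |u| < r :=
            (continuous_abs.tendsto (0 : ℝ)).eventually_lt_const (by simpa using hr0)
          filter_upwards [this] with u hu
          by_cases hu0 : u = 0
          · simp [hu0]
          · rw [norm_mul, Complex.norm_real, Real.norm_eq_abs]
            exact mul_le_mul_of_nonneg_left ((hb _ (hW u hu0 hu)).trans (le_abs_self C)) (abs_nonneg _)
        · have : ∀ t, H (Function.update x i t) = 0 := fun t =>
            h _ ⟨i, by have := abs_nonneg ((Function.update x i t) i); push Not at hr0; linarith⟩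
          simp only [this, mul_zero]; exact continuousAt_const
      · exact (hD t ht).continuousAt

end Integrals

/-! ### Integration by parts along the logarithmic gradient -/

section Regularize

variable {n : ℕ} {V : Finset (Fin n → ℕ)} {g : (Fin n → ℕ) → (Fin n → ℝ) → ℝ} {r r' c : ℝ}
  {σ : ℝ} {G Ψ : (Fin n → ℝ) → ℝ}

lemma mV_pos (hV : V.Nonempty) {x : Fin n → ℝ} (hx : ∀ i, x i ≠ 0) : 0 < mV V x :=
  Finset.sum_pos (fun v _ => abs_pos.2 (mon_ne_zero v hx)) hV

lemma abs_mon_le_mV {v : Fin n → ℕ} (hv : v ∈ V) (x : Fin n → ℝ) : |mon v x| ≤ mV V x :=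
  Finset.single_le_sum (f := fun v => |mon v x|) (fun _ _ => abs_nonneg _) hv

lemma Base.ss_fV (B : Base V g r c) : SS r (mV V) (fV V g) :=
  SS.sum (Ψ := fun v x => mon v x * g v x) fun v hv =>
    ((SS.mon v).mul (SS.of_contDiff (B.smooth v))).mono zero_le_one fun x _ => by
      rw [mul_one, one_mul]; exact abs_mon_le_mV hv x

lemma Base.fV_le (B : Base V g r c) : ∃ C : ℝ, 1 ≤ C ∧ ∀ x ∈ Wx r, |fV V g x| ≤ C * mV V x := by
  obtain ⟨C, hC, h⟩ := B.ss_fV.bound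
  exact ⟨max C 1, le_max_right _ _, fun x hx => (h x hx).trans
    (mul_le_mul_of_nonneg_right (le_max_left _ _) (mV_nonneg V x))⟩

/-- The weight `G m⁻ᵏ`. -/
def wt (V : Finset (Fin n → ℕ)) (G : (Fin n → ℝ) → ℝ) (k : ℕ) (x : Fin n → ℝ) : ℝ :=
  G x * (mV V x)⁻¹ ^ k

/-- The factor `f ^ s` compensates the negative power of `mV` in the weight of the amplitude. -/
lemma Base.pw_mul_le (B : Base V g r c) (hσ : σ = 1 ∨ σ = -1) {k : ℕ} {C : ℝ}
    (hG : ∀ x ∈ Wx r, 0 ≤ G x)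
    (hΨ : ∀ x ∈ Wx r, |Ψ x| ≤ C * wt V G k x) : ∃ D : ℝ, ∀ s : ℂ, 0 < s.re → k ≤ s.re →
      ∀ x ∈ Wx r, ‖pw σ s (fV V g x) * (Ψ x : ℂ)‖ ≤ D * G x := by
  obtain ⟨Cf, hCf, hf⟩ := B.fV_le
  refine ⟨Cf ^ k * |C|, fun s hs hsk x hx => ?_⟩
  have hm := mV_pos B.ne hx.2
  have h1 : ‖pw σ s (fV V g x)‖ ≤ (Cf * mV V x) ^ k := by
    refine (norm_pw_le hσ hs _).trans ?_
    refine (Real.rpow_le_rpow_of_exponent_ge' (abs_nonneg _) (B.small x hx.1)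
      (Nat.cast_nonneg k) hsk).trans ?_
    rw [Real.rpow_natCast]
    exact pow_le_pow_left₀ (abs_nonneg _) (hf x hx) k
  have h2 : |Ψ x| ≤ |C| * wt V G k x := (hΨ x hx).trans
    (mul_le_mul_of_nonneg_right (le_abs_self C)
      (mul_nonneg (hG x hx) (pow_nonneg (inv_nonneg.2 hm.le) k)))
  rw [norm_mul, Complex.norm_real, Real.norm_eq_abs]
  refine (mul_le_mul h1 h2 (abs_nonneg _) (by positivity)).trans_eq ?_
  rw [wt, mul_pow, inv_pow]
  field_simp

lemma Base.continuousOn_pw_mul (B : Base V g r c) {s : ℂ} (hs : 0 < s.re)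
    (hΨ : ∀ x ∈ Wx r, DifferentiableAt ℝ Ψ x) :
    ContinuousOn (fun x => pw σ s (fV V g x) * (Ψ x : ℂ)) (Wx r) := by
  have h1 : ContinuousOn (fun x => (Ψ x : ℂ)) (Wx r) := fun x hx =>
    (Complex.continuous_ofReal.continuousAt.comp (hΨ x hx).continuousAt).continuousWithinAt
  exact ((continuous_pw σ hs).comp (contDiff_fV B.smooth).continuous).continuousOn.mul h1

lemma Base.integrable (B : Base V g r c) (hσ : σ = 1 ∨ σ = -1) (hr : r' < r) {k : ℕ} {K : ℝ}
    (hG : ∀ x ∈ Wx r, 0 ≤ G x) (hGK : ∀ x ∈ Wx r, G x ≤ K)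
    (hΨ : Adm r r' (wt V G k) Ψ) {s : ℂ} (hs : 0 < s.re) (hsk : k ≤ s.re) :
    Integrable fun x => pw σ s (fV V g x) * (Ψ x : ℂ) := by
  obtain ⟨C, hC, h⟩ := hΨ.1.bound
  obtain ⟨D, hD⟩ := B.pw_mul_le hσ hG h
  refine SuppIn.integrable_of_bdd (r' := r') (C := |D| * K) hr
    (fun x hx => by rw [hΨ.2 x hx, Complex.ofReal_zero, mul_zero])
    (B.continuousOn_pw_mul hs fun x hx => hΨ.1.diff hx) fun x hx => ?_
  refine (hD s hs hsk x hx).trans ?_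
  exact (mul_le_mul_of_nonneg_right (le_abs_self D) (hG x hx)).trans
    (mul_le_mul_of_nonneg_left (hGK x hx) (abs_nonneg D))

/-- The coefficients of a field `∑ i, Φ i x_i ∂_i` whose derivative of `f` is `Ψ`. Since the
logarithmic gradient of `f` is comparable to the scale `m`, they are smaller than `Ψ` by a
factor `m⁻¹` only. -/
lemma Base.exists_field (B : Base V g r c) {k : ℕ} (hΨ : Adm r r' (wt V G k) Ψ) :
    ∃ Φ : Fin n → (Fin n → ℝ) → ℝ, (∀ i, Adm r r' (wt V G (k + 1)) (Φ i)) ∧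
      ∀ x ∈ Wx r, ∑ i, Φ i x * Ed i (fV V g) x = Ψ x := by
  set q : (Fin n → ℝ) → ℝ := fun x => ∑ i, Ed i (fV V g) x * Ed i (fV V g) x with hq
  have hqS : SS r (fun x => mV V x * mV V x) q :=
    SS.sum (Ψ := fun i x => Ed i (fV V g) x * Ed i (fV V g) x) fun i _ =>
      (B.ss_fV.Ed i).mul (B.ss_fV.Ed i)
  have hn : 0 < ((n : ℝ) + 1) := by positivity
  have hqlow : ∀ x ∈ Wx r, c ^ 2 / (n + 1) * (mV V x * mV V x) ≤ |q x| := by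
    intro x hx
    have h1 := B.low x hx
    have h2 := sq_sum_le_card_mul_sum_sq (s := Finset.univ) (f := fun i => |Ed i (fV V g) x|)
    have h3 : ∑ i, |Ed i (fV V g) x| ^ 2 = q x :=
      Finset.sum_congr rfl fun i _ => by rw [sq_abs, sq]
    rw [h3, Finset.card_univ, Fintype.card_fin] at h2
    have h4 : (c * mV V x) ^ 2 ≤ n * q x :=
      (pow_le_pow_left₀ (mul_nonneg B.c_pos.le (mV_nonneg V x)) h1 2).trans h2
    have h5 : 0 ≤ q x := Finset.sum_nonneg fun i _ => mul_self_nonneg _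
    rw [abs_of_nonneg h5, div_mul_eq_mul_div, div_le_iff₀ hn]
    nlinarith
  have hmpos : ∀ x ∈ Wx r, 0 < mV V x := fun x hx => mV_pos B.ne hx.2
  have hqi := hqS.inv (c := c ^ 2 / (n + 1)) (by have := B.c_pos; positivity)
    (fun x hx => mul_pos (hmpos x hx) (hmpos x hx)) hqlow
  refine ⟨fun i x => Ψ x * (Ed i (fV V g) x * (q x)⁻¹), fun i => ⟨?_, ?_⟩, fun x hx => ?_⟩
  · refine (hΨ.1.mul ((B.ss_fV.Ed i).mul hqi)).mono zero_le_one fun x hx => ?_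
    have := hmpos x hx
    rw [one_mul, wt, wt, pow_succ, mul_assoc, mul_inv]
    refine le_of_eq ?_
    field_simp
  · intro x hx
    simp [hΨ.2 x hx]
  · have hq0 : q x ≠ 0 := by
      have h1 := hqlow x hx
      have h2 := mul_pos (hmpos x hx) (hmpos x hx)
      have := B.c_pos
      exact abs_pos.1 ((by positivity : 0 < c ^ 2 / (n + 1) * (mV V x * mV V x)).trans_le h1)
    have : ∀ i, Ψ x * (Ed i (fV V g) x * (q x)⁻¹) * Ed i (fV V g) x =
        Ψ x * (q x)⁻¹ * (Ed i (fV V g) x * Ed i (fV V g) x) := fun i => by ring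
    simp only [this]
    rw [← Finset.mul_sum]
    change Ψ x * (q x)⁻¹ * q x = Ψ x
    field_simp

/-- The Euler identity `∫ (1 + x_i ∂_i) (f_± ^ (w + 1) Φ) = 0`, expanded. -/
lemma Base.euler (B : Base V g r c) (hσ : σ = 1 ∨ σ = -1) (hr : r' < r) {k : ℕ} {K : ℝ}
    (hG : ∀ x ∈ Wx r, 0 ≤ G x) (hGK : ∀ x ∈ Wx r, G x ≤ K) (i : Fin n)
    {Φ : (Fin n → ℝ) → ℝ} (hΦ : Adm r r' (wt V G (k + 1)) Φ) {w : ℂ} (hw : 0 < w.re)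
    (hwk : k ≤ w.re) :
    Integrable (fun x => pw σ (w + 1) (fV V g x) * ((Φ x + Ed i Φ x : ℝ) : ℂ)) ∧
    Integrable (fun x => pw σ w (fV V g x) * ((Φ x * Ed i (fV V g) x : ℝ) : ℂ)) ∧
    (∫ x, pw σ (w + 1) (fV V g x) * ((Φ x + Ed i Φ x : ℝ) : ℂ)) +
      (w + 1) * σ * ∫ x, pw σ w (fV V g x) * ((Φ x * Ed i (fV V g) x : ℝ) : ℂ) = 0 := by
  have hA : Adm r r' (wt V G (k + 1)) (fun x => Φ x + Ed i Φ x) :=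
    ⟨hΦ.1.add (hΦ.1.Ed i), fun x hx => by
      simp only [hΦ.2 x hx, hΦ.2.ed i x hx, add_zero]⟩
  set f := fV V g with hf
  have hw1 : (w + 1).re = w.re + 1 := by simp
  have hw1' : 1 < (w + 1).re := by rw [hw1]; linarith
  have hk1 : ((k + 1 : ℕ) : ℝ) ≤ (w + 1).re := by rw [hw1]; push_cast; linarith
  have hI1 : Integrable fun x => pw σ (w + 1) (f x) * ((Φ x + Ed i Φ x : ℝ) : ℂ) :=
    B.integrable hσ hr hG hGK hA (by linarith) hk1
  have hE : Adm r r' (wt V G k) (fun x => Φ x * Ed i f x) := by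
    refine ⟨(hΦ.1.mul (B.ss_fV.Ed i)).mono zero_le_one fun x hx => ?_, fun x hx => by
      simp only [hΦ.2 x hx, zero_mul]⟩
    have := mV_pos B.ne hx.2
    rw [one_mul, wt, wt, pow_succ]
    refine le_of_eq ?_
    field_simp
  have hI2 : Integrable fun x => pw σ w (f x) * ((Φ x * Ed i f x : ℝ) : ℂ) :=
    B.integrable hσ hr hG hGK hE hw hwk
  refine ⟨hI1, hI2, ?_⟩
  obtain ⟨C, hC, hb⟩ := hΦ.1.bound
  obtain ⟨D, hD⟩ := B.pw_mul_le hσ hG hb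
  have e : ∀ x : Fin n → ℝ, pw σ (w + 1) (f x) * (Φ x : ℂ) + x i *
      ((w + 1) * σ * pw σ w (f x) * (Dd i f x : ℂ) * (Φ x : ℂ) +
        pw σ (w + 1) (f x) * (Dd i Φ x : ℂ)) =
      pw σ (w + 1) (f x) * ((Φ x + Ed i Φ x : ℝ) : ℂ) +
        (w + 1) * σ * (pw σ w (f x) * ((Φ x * Ed i f x : ℝ) : ℂ)) := by
    intro x
    simp only [Ed]; push_cast; ring
  have h0 := integral_euler_eq_zero i (H := fun x => pw σ (w + 1) (f x) * (Φ x : ℂ))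
    (H' := fun x => (w + 1) * σ * pw σ w (f x) * (Dd i f x : ℂ) * (Φ x : ℂ) +
        pw σ (w + 1) (f x) * (Dd i Φ x : ℂ)) (C := |D| * K) hr
    (fun x hx => by simp [hΦ.2 x hx]) (fun x hx => ?_)
    (fun x hx => by simp [hΦ.2 x hx, hΦ.2.dd i x hx]) (fun x hx => ?_) ?_
  · simp only [e] at h0
    rw [integral_add hI1 (hI2.const_mul _), integral_const_mul] at h0
    exact h0
  · have h1 := hasDerivAt_line (Ψ := f)
      (((contDiff_fV (V := V) B.smooth).differentiable (by simp)) x) i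
    have h2 := (hasDerivAt_line (hΦ.1.diff hx) i).ofReal_comp
    have h3 := hasDerivAt_pw hσ hw1' (f (Function.update x i (x i)))
    have h4 := HasDerivAt.scomp (x i) h3 h1
    simp only [Function.comp_def] at h4
    have h5 := h4.mul h2
    simp only [Function.update_eq_self, add_sub_cancel_right, Complex.real_smul] at h5
    refine h5.congr_deriv ?_
    ring
  · refine (hD (w + 1) (by linarith) hk1 x hx).trans ?_
    exact (mul_le_mul_of_nonneg_right (le_abs_self D) (hG x hx)).trans
      (mul_le_mul_of_nonneg_left (hGK x hx) (abs_nonneg D))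
  · simp only [e]
    exact hI1.add (hI2.const_mul _)

/-- One integration by parts raises the exponent by `1` at the cost of a factor `m⁻¹` in the
amplitude. -/
lemma Base.reg_step (B : Base V g r c) (hσ : σ = 1 ∨ σ = -1) (hr : r' < r) {k : ℕ} {K : ℝ}
    (hG : ∀ x ∈ Wx r, 0 ≤ G x) (hGK : ∀ x ∈ Wx r, G x ≤ K) (hΨ : Adm r r' (wt V G k) Ψ) :
    ∃ Ψ', Adm r r' (wt V G (k + 1)) Ψ' ∧ ∀ w : ℂ, 0 < w.re → k ≤ w.re →
      (w + 1) * FF σ (fV V g) w Ψ = FF σ (fV V g) (w + 1) Ψ' := by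
  obtain ⟨Φ, hΦ, hsum⟩ := B.exists_field hΨ
  have hA : ∀ i, Adm r r' (wt V G (k + 1)) (fun x => Φ i x + Ed i (Φ i) x) := fun i =>
    ⟨(hΦ i).1.add ((hΦ i).1.Ed i), fun x hx => by
      simp only [(hΦ i).2 x hx, (hΦ i).2.ed i x hx, add_zero]⟩
  refine ⟨fun x => -σ * ∑ i, (Φ i x + Ed i (Φ i) x), ⟨?_, ?_⟩, fun w hw hwk => ?_⟩
  · exact (SS.sum (Ψ := fun i x => Φ i x + Ed i (Φ i) x) fun i _ => (hA i).1).const_mul (-σ)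
  · intro x hx
    have : ∑ i, (Φ i x + Ed i (Φ i) x) = 0 := Finset.sum_eq_zero fun i _ => (hA i).2 x hx
    simp only [this, mul_zero]
  set f := fV V g with hf
  have hw1 : (w + 1).re = w.re + 1 := by simp
  have hw1' : 1 < (w + 1).re := by rw [hw1]; linarith
  have hk1 : ((k + 1 : ℕ) : ℝ) ≤ (w + 1).re := by rw [hw1]; push_cast; linarith
  have hσ2 : (σ : ℂ) * σ = 1 := by rcases hσ with rfl | rfl <;> simp
  have hI1 := fun i => (B.euler hσ hr hG hGK i (hΦ i) hw hwk).1
  have hI0 : Integrable fun x => pw σ w (f x) * (Ψ x : ℂ) := B.integrable hσ hr hG hGK hΨ hw hwk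
  have hI2 := fun i => (B.euler hσ hr hG hGK i (hΦ i) hw hwk).2.1
  have key := fun i => (B.euler hσ hr hG hGK i (hΦ i) hw hwk).2.2
  have h1 : FF σ f w Ψ = ∑ i, ∫ x, pw σ w (f x) * ((Φ i x * Ed i f x : ℝ) : ℂ) := by
    rw [← integral_finset_sum _ fun i _ => hI2 i]
    refine integral_congr_ae ?_
    filter_upwards [hΨ.2.ae_mem hr, ae_ne_zero (n := n)] with x hx hx0
    rw [← Finset.mul_sum, ← Complex.ofReal_sum]
    by_cases hW : x ∈ Wx r
    · rw [hsum x hW]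
    · have hb : ∃ i, r' < |x i| := by
        by_contra hcon
        push Not at hcon
        exact hW ⟨fun i => (hcon i).trans_lt hr, hx0⟩
      rw [hΨ.2 x hb, Finset.sum_eq_zero fun i _ => by rw [(hΦ i).2 x hb, zero_mul]]
  have h2 : FF σ f (w + 1) (fun x => -σ * ∑ i, (Φ i x + Ed i (Φ i) x)) =
      -σ * ∑ i, ∫ x, pw σ (w + 1) (f x) * ((Φ i x + Ed i (Φ i) x : ℝ) : ℂ) := by
    rw [← integral_finset_sum _ fun i _ => hI1 i, ← integral_const_mul]
    refine integral_congr_ae (Eventually.of_forall fun x => ?_)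
    beta_reduce
    rw [← Finset.mul_sum, ← Complex.ofReal_sum]
    push_cast; ring
  have h3 : (∑ i, ∫ x, pw σ (w + 1) (f x) * ((Φ i x + Ed i (Φ i) x : ℝ) : ℂ)) +
      (w + 1) * σ * ∑ i, ∫ x, pw σ w (f x) * ((Φ i x * Ed i f x : ℝ) : ℂ) = 0 := by
    rw [Finset.mul_sum, ← Finset.sum_add_distrib]
    exact Finset.sum_eq_zero fun i _ => key i
  rw [h1, h2]
  linear_combination (σ : ℂ) * h3 -
    (w + 1) * (∑ i, ∫ x, pw σ w (f x) * ((Φ i x * Ed i f x : ℝ) : ℂ)) * hσ2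

/-- The exponent raised by `N`, at the cost of a factor `mV⁻¹` for each step. -/
lemma Base.reg (B : Base V g r c) (hσ : σ = 1 ∨ σ = -1) (hr : r' < r) {k : ℕ} {K : ℝ}
    (hG : ∀ x ∈ Wx r, 0 ≤ G x) (hGK : ∀ x ∈ Wx r, G x ≤ K) (hΨ : Adm r r' (wt V G k) Ψ) (N : ℕ) :
    ∃ Ψ', Adm r r' (wt V G (k + N)) Ψ' ∧ ∀ s : ℂ, 0 < s.re →
      (∏ i ∈ Finset.range N, (s + k + i + 1)) * FF σ (fV V g) (s + k) Ψ =
        FF σ (fV V g) (s + k + N) Ψ' := by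
  induction N with
  | zero => exact ⟨Ψ, by simpa using hΨ, fun s _ => by simp⟩
  | succ N ih =>
    obtain ⟨Ψ₁, h1, e1⟩ := ih
    obtain ⟨Ψ₂, h2, e2⟩ := B.reg_step hσ hr hG hGK h1
    refine ⟨Ψ₂, h2, fun s hs => ?_⟩
    have hre : (s + k + N).re = s.re + k + N := by simp
    have hk0 : (0 : ℝ) ≤ k := Nat.cast_nonneg k
    have hN0 : (0 : ℝ) ≤ N := Nat.cast_nonneg N
    have := e2 (s + k + N) (by rw [hre]; linarith) (by rw [hre]; push_cast; linarith)
    rw [Finset.prod_range_succ, mul_right_comm, e1 s hs]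
    push_cast
    rw [← add_assoc (s + k) (N : ℂ) 1, ← this]
    ring

end Regularize

/-! ### Holomorphy of the integrals -/

section Holomorphy

variable {n : ℕ} {V : Finset (Fin n → ℕ)} {g : (Fin n → ℕ) → (Fin n → ℝ) → ℝ} {r r' c : ℝ}
  {σ : ℝ} {G Ψ : (Fin n → ℝ) → ℝ}

lemma FF_eq_setIntegral (hr : r' < r) (hΨ : SuppIn r' Ψ) (f : (Fin n → ℝ) → ℝ) (s : ℂ) :
    FF σ f s Ψ = ∫ x in Wx r, pw σ s (f x) * (Ψ x : ℂ) := by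
  refine (setIntegral_eq_integral_of_ae_compl_eq_zero ?_).symm
  filter_upwards [hΨ.ae_mem hr] with x hx hn
  rw [hx.resolve_left hn, Complex.ofReal_zero, mul_zero]

lemma hasDerivAt_pw_exponent {s : ℂ} (hs : 0 < s.re) (t : ℝ) :
    HasDerivAt (fun s => pw σ s t) (pw σ s t * (Real.log (sgnPart σ t) : ℂ)) s := by
  have hs0 : s ≠ 0 := by rintro rfl; simp at hs
  have h := (hasDerivAt_id s).const_cpow (c := ((sgnPart σ t : ℝ) : ℂ)) (Or.inr hs0)
  rw [Complex.ofReal_log (sgnPart_nonneg σ t)]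
  simpa [pw] using h

lemma Base.rpow_bound (B : Base V g r c) {k : ℕ} (hG : ∀ x ∈ Wx r, 0 ≤ G x)
    (hΨ : SS r (wt V G k) Ψ) : ∃ C : ℝ, 0 ≤ C ∧ ∃ Cf : ℝ, 1 ≤ Cf ∧ ∀ b : ℝ, 0 ≤ b → ∀ x ∈ Wx r,
      |fV V g x| ^ b * |Ψ x| ≤ C * Cf ^ b * (mV V x ^ (b - k) * G x) := by
  obtain ⟨Cf, hCf, hf⟩ := B.fV_le
  obtain ⟨C, hC, h⟩ := hΨ.bound
  refine ⟨C, hC, Cf, hCf, fun b hb x hx => ?_⟩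
  have hm := mV_pos B.ne hx.2
  have h1 : |fV V g x| ^ b ≤ Cf ^ b * mV V x ^ b := by
    rw [← Real.mul_rpow (by linarith) hm.le]
    exact Real.rpow_le_rpow (abs_nonneg _) (hf x hx) hb
  refine (mul_le_mul h1 (h x hx) (abs_nonneg _) (by positivity)).trans_eq ?_
  rw [wt, Real.rpow_sub hm, Real.rpow_natCast, inv_pow]
  field_simp

lemma Base.norm_FF_le (B : Base V g r c) (hσ : σ = 1 ∨ σ = -1) (hr : r' < r) {k : ℕ}
    (hG : ∀ x ∈ Wx r, 0 ≤ G x) (hΨ : Adm r r' (wt V G k) Ψ) :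
    ∃ C : ℝ, 0 ≤ C ∧ ∃ Cf : ℝ, 1 ≤ Cf ∧ ∀ s : ℂ, 0 < s.re + k →
      IntegrableOn (fun x => mV V x ^ s.re * G x) (Wx r) →
      ‖FF σ (fV V g) (s + k) Ψ‖ ≤ C * Cf ^ (s.re + k) * ∫ x in Wx r, mV V x ^ s.re * G x := by
  obtain ⟨C, hC, Cf, hCf, h⟩ := B.rpow_bound hG hΨ.1
  refine ⟨C, hC, Cf, hCf, fun s hs hint => ?_⟩
  have hre : (s + k).re = s.re + k := by simp
  rw [FF_eq_setIntegral hr hΨ.2, ← integral_const_mul]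
  refine norm_integral_le_of_norm_le (hint.const_mul _)
    (ae_restrict_of_forall_mem measurableSet_Wx fun x hx => ?_)
  rw [norm_mul, Complex.norm_real, Real.norm_eq_abs]
  have h1 := norm_pw_le hσ (s := s + k) (by rw [hre]; exact hs) (fV V g x)
  rw [hre] at h1
  refine (mul_le_mul_of_nonneg_right h1 (abs_nonneg _)).trans ?_
  have := h (s.re + k) hs.le x hx
  rwa [add_sub_cancel_right] at this

lemma Base.aesm_restrict (B : Base V g r c) {s : ℂ} (hs : 0 < s.re)
    (hΨ : ∀ x ∈ Wx r, DifferentiableAt ℝ Ψ x) :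
    AEStronglyMeasurable (fun x => pw σ s (fV V g x) * (Ψ x : ℂ)) (volume.restrict (Wx r)) :=
  (B.continuousOn_pw_mul hs hΨ).aestronglyMeasurable measurableSet_Wx

/-- The integral is holomorphic in the half-plane where its majorant `m ^ Re s · G` is
integrable. -/
lemma Base.differentiableAt_FF (B : Base V g r c) (hσ : σ = 1 ∨ σ = -1) (hr : r' < r) {k : ℕ}
    (hG : ∀ x ∈ Wx r, 0 ≤ G x) (hΨ : Adm r r' (wt V G k) Ψ) {c₀ : ℝ} (hk : -(k : ℝ) ≤ c₀)
    (hint : ∀ c' > c₀, IntegrableOn (fun x => mV V x ^ c' * G x) (Wx r)) {s : ℂ}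
    (hs : c₀ < s.re) : DifferentiableAt ℂ (fun s => FF σ (fV V g) (s + k) Ψ) s := by
  obtain ⟨C, hC, Cf, hCf, hb⟩ := B.rpow_bound hG hΨ.1
  simp only [FF_eq_setIntegral hr hΨ.2]
  set δ := (s.re - c₀) / 3 with hδ
  have hδ0 : 0 < δ := by rw [hδ]; linarith
  set c' := c₀ + δ with hc'
  have hc'k : 0 < c' + k := by rw [hc']; linarith
  have hre : ∀ z : ℂ, (z + k).re = z.re + k := fun z => by simp
  have hball : ∀ z ∈ Metric.ball s δ, c' + δ ≤ z.re := by
    intro z hz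
    have h1 : |(z - s).re| ≤ ‖z - s‖ := Complex.abs_re_le_norm _
    have h2 : ‖z - s‖ < δ := by rwa [Metric.mem_ball, dist_eq_norm] at hz
    have h3 := neg_abs_le (z - s).re
    rw [Complex.sub_re] at h1 h3
    rw [hc']
    linarith
  have hpos : ∀ z ∈ Metric.ball s δ, 0 < (z + k).re := fun z hz => by
    rw [hre]; linarith [hball z hz]
  have hs' : s ∈ Metric.ball s δ := Metric.mem_ball_self hδ0
  have hdom : ∀ z ∈ Metric.ball s δ, ∀ x ∈ Wx r,
      ‖pw σ (z + k) (fV V g x) * (Ψ x : ℂ)‖ ≤ C * Cf ^ (c' + k) * (mV V x ^ c' * G x) := by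
    intro z hz x hx
    rw [norm_mul, Complex.norm_real, Real.norm_eq_abs]
    have h1 := hb (c' + k) hc'k.le x hx
    rw [add_sub_cancel_right] at h1
    refine le_trans (mul_le_mul_of_nonneg_right ?_ (abs_nonneg _)) h1
    refine (norm_pw_le hσ (hpos z hz) _).trans ?_
    refine Real.rpow_le_rpow_of_exponent_ge' (abs_nonneg _) (B.small x hx.1) hc'k.le ?_
    rw [hre]; linarith [hball z hz]
  have hmaj : Integrable (fun x => C * Cf ^ (c' + k) * (mV V x ^ c' * G x))
      (volume.restrict (Wx r)) := (hint c' (by rw [hc']; linarith)).const_mul _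
  have hdiff := fun x (hx : x ∈ Wx r) => hΨ.1.diff hx
  refine (hasDerivAt_integral_of_dominated_loc_of_deriv_le (μ := volume.restrict (Wx r)) (s := Metric.ball s δ)
    (F := fun z x => pw σ (z + k) (fV V g x) * (Ψ x : ℂ))
    (F' := fun z x => pw σ (z + k) (fV V g x) * (Real.log (sgnPart σ (fV V g x)) : ℂ) * (Ψ x : ℂ))
    (bound := fun x => 1 / δ * (C * Cf ^ (c' + k) * (mV V x ^ c' * G x)))
    (Metric.ball_mem_nhds s hδ0) ?_ ?_ ?_ ?_ ?_ ?_).2.differentiableAt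
  · filter_upwards [Metric.ball_mem_nhds s hδ0] with z hz
    exact B.aesm_restrict (hpos z hz) hdiff
  · exact hmaj.mono' (B.aesm_restrict (hpos s hs') hdiff)
      (ae_restrict_of_forall_mem measurableSet_Wx (hdom s hs'))
  · have h1 : Measurable fun x => ((Real.log (sgnPart σ (fV V g x)) : ℝ) : ℂ) := by
      refine Complex.measurable_ofReal.comp (Real.measurable_log.comp ?_)
      have : Continuous fun x => sgnPart σ (fV V g x) := by
        have := (contDiff_fV (V := V) B.smooth).continuous
        unfold sgnPart; fun_prop
      exact this.measurable
    have h2 := (B.aesm_restrict (σ := σ) (hpos s hs') hdiff).mul h1.aestronglyMeasurable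
    refine h2.congr (Eventually.of_forall fun x => ?_)
    simp only [Pi.mul_apply]; ring
  · refine ae_restrict_of_forall_mem measurableSet_Wx fun x hx z hz => ?_
    have h1 := hb (c' + k) hc'k.le x hx
    rw [add_sub_cancel_right] at h1
    rw [norm_mul, norm_mul, Complex.norm_real, Complex.norm_real, Real.norm_eq_abs, Real.norm_eq_abs,
      norm_pw σ (hpos z hz).ne']
    refine le_trans ?_ (mul_le_mul_of_nonneg_left h1 (by positivity))
    rw [← mul_assoc]
    refine mul_le_mul_of_nonneg_right ?_ (abs_nonneg _)
    set u := sgnPart σ (fV V g x) with hu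
    have hu0 : 0 ≤ u := sgnPart_nonneg _ _
    have hu1 : u ≤ |fV V g x| := sgnPart_le hσ _
    rcases hu0.eq_or_lt with h0 | h0
    · rw [← h0, Real.log_zero, abs_zero, mul_zero]; positivity
    · have hule : u ≤ 1 := hu1.trans (B.small x hx.1)
      have e1 : u ^ (z + k).re ≤ u ^ (c' + k) * u ^ δ := by
        rw [← Real.rpow_add h0]
        refine Real.rpow_le_rpow_of_exponent_ge h0 hule ?_
        rw [hre]; linarith [hball z hz]
      have e2 := (Real.abs_log_mul_self_rpow_lt u δ h0 hule hδ0).le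
      rw [abs_mul, abs_of_pos (Real.rpow_pos_of_pos h0 δ)] at e2
      have e3 : u ^ (c' + k) ≤ |fV V g x| ^ (c' + k) := Real.rpow_le_rpow hu0 hu1 hc'k.le
      calc u ^ (z + k).re * |Real.log u| ≤ u ^ (c' + k) * u ^ δ * |Real.log u| :=
            mul_le_mul_of_nonneg_right e1 (abs_nonneg _)
        _ = u ^ (c' + k) * (|Real.log u| * u ^ δ) := by ring
        _ ≤ |fV V g x| ^ (c' + k) * (1 / δ) := mul_le_mul e3 e2 (by positivity) (by positivity)
        _ = _ := by ring
  · exact hmaj.const_mul _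
  · refine ae_restrict_of_forall_mem measurableSet_Wx fun x hx z hz => ?_
    have h1 := hasDerivAt_pw_exponent (σ := σ) (hpos z hz) (fV V g x)
    have h2 := HasDerivAt.comp z h1 ((hasDerivAt_id z).add_const (k : ℂ))
    rw [mul_one] at h2
    exact h2.mul_const _

end Holomorphy

/-! ### Meromorphic continuation -/

section Continuation

/-- The logarithmic coordinates `-log |x_i|`. -/
def lg {n : ℕ} (x : Fin n → ℝ) (i : Fin n) : ℝ := -Real.log |x i|

lemma abs_mon_eq_exp {n : ℕ} (v : Fin n → ℕ) {x : Fin n → ℝ} (hx : ∀ i, x i ≠ 0) :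
    |mon v x| = Real.exp (-dotR (lg x) (cv v)) := by
  have h := mon_mul_exp v (fun _ => 1) (lg x)
  have e : (fun i => 1 * Real.exp (-lg x i)) = fun i => |x i| := by
    funext i
    rw [lg, neg_neg, Real.exp_log (abs_pos.2 (hx i)), one_mul]
  rw [e] at h
  rw [abs_mon, h]
  simp [mon]

lemma lg_nonneg {n : ℕ} {r : ℝ} (hr : r < 1) {x : Fin n → ℝ} (hx : x ∈ Wx r) (i : Fin n) :
    0 ≤ lg x i :=
  neg_nonneg.2 (Real.log_nonpos (abs_nonneg _) ((hx.1 i).trans hr).le)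

lemma exp_NN_le_mV {n : ℕ} {V : Finset (Fin n → ℕ)} (hV : V.Nonempty) {x : Fin n → ℝ}
    (hx : ∀ i, x i ≠ 0) : Real.exp (-NN V (lg x)) ≤ mV V x := by
  obtain ⟨v, hv, e⟩ := exists_NN hV (lg x)
  rw [e, ← abs_mon_eq_exp v hx]
  exact abs_mon_le_mV hv x

lemma mV_le_exp_NN {n : ℕ} {V : Finset (Fin n → ℕ)} {x : Fin n → ℝ}
    (hx : ∀ i, x i ≠ 0) : mV V x ≤ V.card * Real.exp (-NN V (lg x)) := by
  rw [← nsmul_eq_mul]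
  refine Finset.sum_le_card_nsmul _ _ _ fun v hv => ?_
  rw [abs_mon_eq_exp v hx]
  exact Real.exp_le_exp.2 (neg_le_neg (NN_le hv _))

/-- A smooth amplitude supported in the closed box of half-width `r'`. -/
def Amp {n : ℕ} (r' : ℝ) (φ : (Fin n → ℝ) → ℝ) : Prop := ContDiff ℝ (⊤ : ℕ∞) φ ∧ SuppIn r' φ

/-- `s ↦ FF σ f s Ψ` has a meromorphic continuation to `Re s > -R`. -/
def Mer {n : ℕ} (σ : ℝ) (f : (Fin n → ℝ) → ℝ) (R : ℕ) (Ψ : (Fin n → ℝ) → ℝ) : Prop :=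
  ∃ M : ℂ → ℂ, MeromorphicOn M {s : ℂ | -(R : ℝ) < s.re} ∧
    ∃ c₀ : ℝ, ∀ s : ℂ, c₀ < s.re → M s = FF σ f s Ψ

variable {n : ℕ} {V : Finset (Fin n → ℕ)} {g : (Fin n → ℕ) → (Fin n → ℝ) → ℝ} {r r' c : ℝ}
  {σ : ℝ} {φ ψ : (Fin n → ℝ) → ℝ}

lemma Amp.mul (h : Amp r' φ) (hψ : ContDiff ℝ (⊤ : ℕ∞) ψ) : Amp r' (fun x => ψ x * φ x) :=
  ⟨hψ.mul h.1, fun x hx => by simp only [h.2 x hx, mul_zero]⟩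

lemma Amp.dd (h : Amp r' φ) (i : Fin n) : Amp r' (Dd i φ) := ⟨contDiff_Dd i h.1, h.2.dd i⟩

lemma Amp.add (h : Amp r' φ) (h' : Amp r' ψ) : Amp r' (fun x => φ x + ψ x) :=
  ⟨h.1.add h'.1, fun x hx => by simp only [h.2 x hx, h'.2 x hx, mul_zero, add_zero]⟩

lemma Amp.sum {ι : Type*} {s : Finset ι} {φ : ι → (Fin n → ℝ) → ℝ} (h : ∀ k ∈ s, Amp r' (φ k)) :
    Amp r' (fun x => ∑ k ∈ s, φ k x) :=
  ⟨ContDiff.sum fun k hk => (h k hk).1, fun x hx => Finset.sum_eq_zero fun k hk => (h k hk).2 x hx⟩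

lemma Amp.adm (h : Amp r' φ) : Adm r r' (wt V (fun _ => 1) 0) φ :=
  ⟨(SS.of_contDiff h.1).mono zero_le_one fun x _ => by simp [wt], h.2⟩

lemma Base.integrable_amp (B : Base V g r c) (hσ : σ = 1 ∨ σ = -1) (hr : r' < r) (h : Amp r' φ)
    {s : ℂ} (hs : 0 < s.re) : Integrable fun x => pw σ s (fV V g x) * (φ x : ℂ) :=
  B.integrable hσ hr (G := fun _ => 1) (K := 1) (fun _ _ => zero_le_one) (fun _ _ => le_rfl)
    h.adm hs (by simpa using hs.le)

lemma Base.FF_add (B : Base V g r c) (hσ : σ = 1 ∨ σ = -1) (hr : r' < r) (h : Amp r' φ)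
    (h' : Amp r' ψ) {s : ℂ} (hs : 0 < s.re) :
    FF σ (fV V g) s (fun x => φ x + ψ x) = FF σ (fV V g) s φ + FF σ (fV V g) s ψ := by
  simp only [FF]
  rw [← integral_add (B.integrable_amp hσ hr h hs) (B.integrable_amp hσ hr h' hs)]
  congr 1; funext x; push_cast; ring

lemma FF_const_mul (f : (Fin n → ℝ) → ℝ) (s : ℂ) (b : ℝ) (φ : (Fin n → ℝ) → ℝ) :
    FF σ f s (fun x => b * φ x) = b * FF σ f s φ := by
  simp only [FF]
  rw [← integral_const_mul]
  congr 1; funext x; push_cast; ring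

lemma Base.FF_sum (B : Base V g r c) (hσ : σ = 1 ∨ σ = -1) (hr : r' < r) {ι : Type*}
    {t : Finset ι} {φ : ι → (Fin n → ℝ) → ℝ} (h : ∀ k ∈ t, Amp r' (φ k)) {s : ℂ} (hs : 0 < s.re) :
    FF σ (fV V g) s (fun x => ∑ k ∈ t, φ k x) = ∑ k ∈ t, FF σ (fV V g) s (φ k) := by
  simp only [FF]
  rw [← integral_finset_sum _ fun k hk => B.integrable_amp hσ hr (h k hk) hs]
  congr 1; funext x; rw [← Finset.mul_sum]; push_cast; rfl

lemma Mer.const_mul {f : (Fin n → ℝ) → ℝ} {R : ℕ} (h : Mer σ f R φ) (b : ℝ) :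
    Mer σ f R (fun x => b * φ x) := by
  obtain ⟨M, hM, c₀, e⟩ := h
  refine ⟨fun s => b * M s, (MeromorphicOn.const _).mul hM, c₀, fun s hs => ?_⟩
  rw [FF_const_mul]; simp only [e s hs]

lemma Base.mer_add (B : Base V g r c) (hσ : σ = 1 ∨ σ = -1) (hr : r' < r) (h : Amp r' φ)
    (h' : Amp r' ψ) {R : ℕ} (m : Mer σ (fV V g) R φ) (m' : Mer σ (fV V g) R ψ) :
    Mer σ (fV V g) R (fun x => φ x + ψ x) := by
  obtain ⟨M, hM, c₀, e⟩ := m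
  obtain ⟨M', hM', c₀', e'⟩ := m'
  refine ⟨fun s => M s + M' s, hM.add hM', max 0 (max c₀ c₀'), fun s hs => ?_⟩
  simp only [max_lt_iff] at hs
  simp only [B.FF_add hσ hr h h' hs.1, e s hs.2.1, e' s hs.2.2]

lemma Base.mer_sum (B : Base V g r c) (hσ : σ = 1 ∨ σ = -1) (hr : r' < r) {ι : Type*}
    {t : Finset ι} {φ : ι → (Fin n → ℝ) → ℝ} (h : ∀ k ∈ t, Amp r' (φ k)) {R : ℕ}
    (m : ∀ k ∈ t, Mer σ (fV V g) R (φ k)) : Mer σ (fV V g) R (fun x => ∑ k ∈ t, φ k x) := by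
  induction t using Finset.induction_on with
  | empty => exact ⟨fun _ => 0, MeromorphicOn.const _, 0, fun s _ => by simp [FF]⟩
  | insert a t ha ih =>
    simp only [Finset.sum_insert ha]
    refine B.mer_add hσ hr (h a (Finset.mem_insert_self a t))
      (Amp.sum fun k hk => h k (Finset.mem_insert_of_mem hk)) (m a (Finset.mem_insert_self a t))
      (ih (fun k hk => h k (Finset.mem_insert_of_mem hk)) fun k hk => m k (Finset.mem_insert_of_mem hk))

lemma exists_mV_le (V : Finset (Fin n → ℕ)) (hr : r < 1) : ∀ x ∈ Wx r, mV V x ≤ V.card := by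
  intro x hx
  have h := Finset.sum_le_card_nsmul V (fun v => |mon v x|) 1 fun v _ => by
    rw [abs_mon]
    exact Finset.prod_le_one (fun i _ => pow_nonneg (abs_nonneg _) _) fun i _ =>
      pow_le_one₀ (abs_nonneg _) ((hx.1 i).trans hr).le
  rw [nsmul_eq_mul, mul_one] at h
  exact h

/-- The Euler identity for a smooth amplitude. -/
lemma Base.euler_amp (B : Base V g r c) (hσ : σ = 1 ∨ σ = -1) (hr : r' < r) (h : Amp r' φ)
    (i : Fin n) {w : ℂ} (hw : 0 < w.re) :
    FF σ (fV V g) (w + 1) (fun x => φ x + Ed i φ x) +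
      (w + 1) * σ * FF σ (fV V g) w (fun x => φ x * Ed i (fV V g) x) = 0 := by
  refine (B.euler hσ hr (G := mV V) (k := 0) (K := V.card) (fun x _ => mV_nonneg V x)
    (exists_mV_le V B.r_lt) i ⟨?_, h.2⟩ hw (by simpa using hw.le)).2.2
  refine (SS.of_contDiff h.1).mono zero_le_one fun x hx => ?_
  have := mV_pos B.ne hx.2
  simp [wt, this.ne']

/-- When the monomial is dominated by `m ^ R`, integration by parts along the gradient gives the
continuation. -/
lemma Base.mer_base (B : Base V g r c) (hσ : σ = 1 ∨ σ = -1) (hr : r' < r) (R : ℕ)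
    (β : Fin n → ℕ) (hβ : ∀ u : Fin n → ℝ, (∀ i, 0 ≤ u i) → R * NN V u ≤ dotR u (cv β))
    (h : Amp r' φ) : Mer σ (fV V g) R (fun x => mon β x * φ x) := by
  have hmpos : ∀ x ∈ Wx r, 0 < mV V x := fun x hx => mV_pos B.ne hx.2
  have hle : ∀ x ∈ Wx r, |mon β x| ≤ mV V x ^ R := fun x hx => by
    rw [abs_mon_eq_exp β hx.2]
    refine le_trans ?_ (pow_le_pow_left₀ (Real.exp_pos _).le (exp_NN_le_mV B.ne hx.2) R)
    rw [← Real.exp_nat_mul]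
    refine Real.exp_le_exp.2 ?_
    have := hβ (lg x) (lg_nonneg B.r_lt hx)
    linarith
  set K : ℝ := (V.card : ℝ) with hK
  have hΨ : Adm r r' (wt V (fun x => mV V x ^ R) 0) (fun x => mon β x * φ x) := by
    refine ⟨((SS.mon β).mul (SS.of_contDiff h.1)).mono zero_le_one fun x hx => ?_, fun x hx => by
      simp only [h.2 x hx, mul_zero]⟩
    simpa [wt] using hle x hx
  obtain ⟨Ψ', hΨ', e⟩ := B.reg hσ hr (K := K ^ R) (fun x _ => pow_nonneg (mV_nonneg V x) R)
    (fun x hx => pow_le_pow_left₀ (mV_nonneg V x) (exists_mV_le V B.r_lt x hx) R) hΨ R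
  have hΨ1 : Adm r r' (wt V (fun _ => 1) 0) Ψ' := by
    refine ⟨hΨ'.1.mono zero_le_one fun x hx => ?_, hΨ'.2⟩
    have := hmpos x hx
    simp [wt]
    field_simp
    exact le_rfl
  have hP : ∀ s : ℂ, 0 < s.re → (∏ i ∈ Finset.range R, (s + i + 1)) ≠ 0 := by
    intro s hs
    refine Finset.prod_ne_zero_iff.2 fun i _ h0 => ?_
    have := congrArg Complex.re h0
    simp at this
    have hi : (0 : ℝ) ≤ i := Nat.cast_nonneg i
    linarith
  refine ⟨fun s => FF σ (fV V g) (s + R) Ψ' / ∏ i ∈ Finset.range R, (s + i + 1), ?_, 0,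
    fun s hs => ?_⟩
  · refine MeromorphicOn.div ?_ ?_
    · refine AnalyticOnNhd.meromorphicOn ?_
      refine DifferentiableOn.analyticOnNhd (fun s hs => ?_) (isOpen_lt continuous_const Complex.continuous_re)
      have hre : 0 < (s + R).re := by simp at hs ⊢; linarith
      have h1 := B.differentiableAt_FF hσ hr (G := fun _ => 1) (fun _ _ => zero_le_one) hΨ1
        (c₀ := 0) (by simp) (fun c' hc' => by
          simp only [mul_one]
          have hcm : Continuous (mV V) := by
            unfold mV mon; fun_prop
          refine Measure.integrableOn_of_bounded (M := K ^ c') volume_Wx_lt_top.ne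
            ((hcm.rpow_const fun _ => Or.inr hc'.le).aestronglyMeasurable) ?_
          refine ae_restrict_of_forall_mem measurableSet_Wx fun x hx => ?_
          rw [Real.norm_eq_abs, abs_of_nonneg (Real.rpow_nonneg (mV_nonneg V x) _)]
          exact Real.rpow_le_rpow (mV_nonneg V x) (exists_mV_le V B.r_lt x hx) hc'.le)
        (s := s + R) hre
      simp only [Nat.cast_zero, add_zero] at h1
      exact (h1.comp s ((differentiableAt_id).add_const _)).differentiableWithinAt
    · intro s _
      have : AnalyticAt ℂ (fun s : ℂ => ∏ i ∈ Finset.range R, (s + i + 1)) s := by fun_prop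
      exact this.meromorphicAt
  · have h1 := e s hs
    simp only [Nat.cast_zero, add_zero] at h1
    rw [div_eq_iff (hP s hs), ← h1, mul_comm]

end Continuation

section Continuation2

variable {n : ℕ} {V : Finset (Fin n → ℕ)} {g : (Fin n → ℕ) → (Fin n → ℝ) → ℝ} {r r' c : ℝ}
  {σ : ℝ} {φ ψ : (Fin n → ℝ) → ℝ}

lemma Mer.const_mul' {f : (Fin n → ℝ) → ℝ} {R : ℕ} (b : ℝ) (h : b ≠ 0 → Mer σ f R φ) :
    Mer σ f R (fun x => b * φ x) := by
  by_cases hb : b = 0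
  · subst hb
    exact ⟨fun _ => 0, MeromorphicOn.const _, 0, fun s _ => by rw [FF_const_mul]; simp⟩
  · exact (h hb).const_mul b

lemma FF_mul_self (hσ : σ = 1 ∨ σ = -1) (f : (Fin n → ℝ) → ℝ) {s : ℂ} (hs : 0 < s.re)
    (Ψ : (Fin n → ℝ) → ℝ) : FF σ f s (fun x => f x * Ψ x) = σ * FF σ f (s + 1) Ψ := by
  simp only [FF]
  rw [← integral_const_mul]
  congr 1; funext x
  have := pw_mul_self hσ hs (f x)
  push_cast
  rw [← mul_assoc, this]; ring

lemma Amp.const_mul (h : Amp r' φ) (b : ℝ) : Amp r' (fun x => b * φ x) :=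
  h.mul contDiff_const

lemma Amp.mon (h : Amp r' φ) (β : Fin n → ℕ) : Amp r' (fun x => mon β x * φ x) :=
  h.mul (contDiff_mon β)

/-- The functional equation attached to a weight `w`: the field `∑ i, w i x_i ∂_i` multiplies the
part of `f` of lowest weight by its weight, and strictly raises the weight of everything else. -/
lemma Base.mer_step (B : Base V g r c) (hσ : σ = 1 ∨ σ = -1) (hr : r' < r) {R : ℕ}
    {β : Fin n → ℕ} {w : Fin n → ℝ} (hw : ∀ i, 0 ≤ w i) (hN : 0 < NN V w) (h : Amp r' φ)
    (hA : ∀ i, 0 < w i → Mer σ (fV V g) R (fun x => mon (β + Pi.single i 1) x * Dd i φ x))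
    (hB1 : ∀ v ∈ V, NN V w < dotR w (cv v) →
      Mer σ (fV V g) (R + 1) (fun x => mon (β + v) x * (g v x * φ x)))
    (hB2 : ∀ v ∈ V, ∀ i, 0 < w i →
      Mer σ (fV V g) (R + 1) (fun x => mon (β + v + Pi.single i 1) x * (Dd i (g v) x * φ x))) :
    Mer σ (fV V g) R (fun x => mon β x * φ x) := by
  set f := fV V g with hf
  set N := NN V w with hNdef
  set b := ∑ i, w i + dotR w (cv β) with hb
  have hb0 : 0 ≤ b := add_nonneg (Finset.sum_nonneg fun i _ => hw i)
    (dotR_nonneg hw (cv_nonneg β))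
  have aA : ∀ i, Amp r' (fun x => w i * (mon (β + Pi.single i 1) x * Dd i φ x)) := fun i =>
    ((h.dd i).mon _).const_mul _
  have aB1 : ∀ v, Amp r' (fun x => (dotR w (cv v) - N) * (mon (β + v) x * (g v x * φ x))) :=
    fun v => ((h.mul (B.smooth v)).mon _).const_mul _
  have aB2 : ∀ v i, Amp r' (fun x => w i * (mon (β + v + Pi.single i 1) x * (Dd i (g v) x * φ x))) :=
    fun v i => ((h.mul (contDiff_Dd i (B.smooth v))).mon _).const_mul _
  have aB2' : ∀ v, Amp r' (fun x => ∑ i, w i *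
      (mon (β + v + Pi.single i 1) x * (Dd i (g v) x * φ x))) := fun v => Amp.sum fun i _ => aB2 v i
  have aB3 : ∀ v, Amp r' (fun x => (dotR w (cv v) - N) * (mon (β + v) x * (g v x * φ x)) +
      ∑ i, w i * (mon (β + v + Pi.single i 1) x * (Dd i (g v) x * φ x))) :=
    fun v => (aB1 v).add (aB2' v)
  set A : (Fin n → ℝ) → ℝ := fun x => ∑ i, w i * (mon (β + Pi.single i 1) x * Dd i φ x) with hAdef
  set Q : (Fin n → ℝ) → ℝ := fun x => ∑ v ∈ V, ((dotR w (cv v) - N) *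
    (mon (β + v) x * (g v x * φ x)) +
      ∑ i, w i * (mon (β + v + Pi.single i 1) x * (Dd i (g v) x * φ x))) with hQdef
  have aA' : Amp r' A := Amp.sum fun i _ => aA i
  have aQ' : Amp r' Q := Amp.sum fun v _ => aB3 v
  have mA : Mer σ f R A := B.mer_sum hσ hr (fun i _ => aA i) fun i _ => Mer.const_mul' (w i) fun hne =>
    hA i (lt_of_le_of_ne (hw i) (Ne.symm hne))
  have mQ : Mer σ f (R + 1) Q := B.mer_sum hσ hr (fun v _ => aB3 v) fun v hv =>
    B.mer_add hσ hr (aB1 v) (aB2' v)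
      (Mer.const_mul' _ fun hne => hB1 v hv (lt_of_le_of_ne (NN_le hv w) fun h => hne (by
        exact sub_eq_zero.2 h.symm)))
      (B.mer_sum hσ hr (fun i _ => aB2 v i) fun i _ => Mer.const_mul' (w i) fun hne =>
        hB2 v hv i (lt_of_le_of_ne (hw i) (Ne.symm hne)))
  have aΨ : Amp r' (fun x => mon β x * φ x) := h.mon β
  set Ψ : (Fin n → ℝ) → ℝ := fun x => mon β x * φ x with hΨ
  have hdm : ∀ (v : Fin n → ℕ) x, DifferentiableAt ℝ (mon v) x := fun v x =>
    (contDiff_mon (k := 1) v).differentiable (by simp) x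
  have hEΨ : ∀ i x, Ed i Ψ x = cv β i * Ψ x + mon (β + Pi.single i 1) x * Dd i φ x := by
    intro i x
    have h1 := Ed_mon i β x
    rw [Ed] at h1
    rw [Ed, hΨ, Dd_mul (hdm β x) (h.1.differentiable (by simp) x), mon_add, mon_single]
    simp only [cv]
    linear_combination φ x * h1
  have e1 : ∀ x, ∑ i, w i * (Ψ x + Ed i Ψ x) = b * Ψ x + A x := by
    intro x
    simp only [hEΨ, hAdef, hb, dotR, add_mul, Finset.sum_mul, ← Finset.sum_add_distrib]
    exact Finset.sum_congr rfl fun i _ => by ring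
  have e2 : ∀ x, ∑ i, w i * (Ψ x * Ed i f x) = N * (f x * Ψ x) + Q x := by
    intro x
    have h1 : ∀ i, w i * (Ψ x * Ed i f x) = ∑ v ∈ V, (w i * cv v i * (mon (β + v) x * (g v x * φ x)) +
        w i * (mon (β + v + Pi.single i 1) x * (Dd i (g v) x * φ x))) := by
      intro i
      rw [hf, Ed_fV B.smooth, Finset.mul_sum, Finset.mul_sum]
      refine Finset.sum_congr rfl fun v _ => ?_
      simp only [mon_add, mon_single, hΨ, cv, Ed]
      ring
    simp only [h1]
    rw [Finset.sum_comm]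
    simp only [hQdef, hf, fV]
    rw [Finset.sum_mul, Finset.mul_sum, ← Finset.sum_add_distrib]
    refine Finset.sum_congr rfl fun v _ => ?_
    rw [Finset.sum_add_distrib, ← Finset.sum_mul]
    simp only [hΨ, mon_add, dotR]
    ring
  have key : ∀ s : ℂ, 0 < s.re → (b + (s + 1) * N) * FF σ f (s + 1) Ψ =
      -FF σ f (s + 1) A - (s + 1) * σ * FF σ f s Q := by
    intro s hs
    have hs1 : 0 < (s + 1).re := by simp; linarith
    have k1 : ∑ i, (w i : ℂ) * (FF σ f (s + 1) (fun x => Ψ x + Ed i Ψ x) +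
        (s + 1) * σ * FF σ f s (fun x => Ψ x * Ed i f x)) = 0 :=
      Finset.sum_eq_zero fun i _ => by rw [B.euler_amp hσ hr aΨ i hs, mul_zero]
    have aE : ∀ i, Amp r' (Ed i Ψ) := fun i => by
      have := (aΨ.dd i).mul (contDiff_apply ℝ ℝ i)
      exact this
    have k2 : FF σ f (s + 1) (fun x => ∑ i, w i * (Ψ x + Ed i Ψ x)) =
        ∑ i, (w i : ℂ) * FF σ f (s + 1) (fun x => Ψ x + Ed i Ψ x) := by
      rw [hf, B.FF_sum hσ hr (φ := fun i x => w i * (Ψ x + Ed i Ψ x))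
        (fun i _ => (aΨ.add (aE i)).const_mul _) hs1]
      exact Finset.sum_congr rfl fun i _ => FF_const_mul _ _ _ _
    have k3 : FF σ f s (fun x => ∑ i, w i * (Ψ x * Ed i f x)) =
        ∑ i, (w i : ℂ) * FF σ f s (fun x => Ψ x * Ed i f x) := by
      rw [hf, B.FF_sum hσ hr (φ := fun i x => w i * (Ψ x * Ed i f x)) (fun i _ => ?_) hs]
      · exact Finset.sum_congr rfl fun i _ => FF_const_mul _ _ _ _
      · have := (aΨ.mul (contDiff_Ed i (contDiff_fV (V := V) B.smooth))).const_mul (w i)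
        simpa only [mul_comm (Ψ _)] using this
    simp only [e1] at k2
    simp only [e2] at k3
    rw [hf, B.FF_add hσ hr (aΨ.const_mul b) aA' hs1, FF_const_mul] at k2
    rw [hf, B.FF_add hσ hr ((aΨ.mul (contDiff_fV (V := V) B.smooth)).const_mul N) aQ' hs, FF_const_mul,
      FF_mul_self hσ _ hs] at k3
    simp only [mul_add, Finset.sum_add_distrib] at k1
    have k4 : ∑ i, (w i : ℂ) * ((s + 1) * σ * FF σ f s (fun x => Ψ x * Ed i f x)) =
        (s + 1) * σ * ∑ i, (w i : ℂ) * FF σ f s (fun x => Ψ x * Ed i f x) := by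
      rw [Finset.mul_sum]; exact Finset.sum_congr rfl fun i _ => by ring
    rw [k4, ← k3, ← k2] at k1
    have hσ2 : (σ : ℂ) * σ = 1 := by rcases hσ with rfl | rfl <;> simp
    linear_combination k1 - (s + 1) * N * FF σ f (s + 1) Ψ * hσ2
  obtain ⟨M1, hM1, c1, e1'⟩ := mA
  obtain ⟨M2, hM2, c2, e2'⟩ := mQ
  refine ⟨fun s => (-M1 s - s * σ * M2 (s - 1)) / (b + s * N), ?_, max 1 (max c1 (c2 + 1)),
    fun s hs => ?_⟩
  · intro s hs
    have m1 := hM1 s hs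
    have m2 : MeromorphicAt (fun s => M2 (s - 1)) s := by
      have h3 : MeromorphicAt M2 (s - 1) := hM2 _ (by
        simp only [Set.mem_setOf_eq, Complex.sub_re, Complex.one_re] at hs ⊢
        push_cast; linarith)
      exact MeromorphicAt.comp_analyticAt (f := M2) (g := fun s : ℂ => s - 1) (x := s) h3 (by fun_prop)
    have m3 : MeromorphicAt (fun s : ℂ => s * σ) s :=
      (by fun_prop : AnalyticAt ℂ (fun s : ℂ => s * σ) s).meromorphicAt
    have m4 : MeromorphicAt (fun s : ℂ => b + s * N) s :=
      (by fun_prop : AnalyticAt ℂ (fun s : ℂ => (b : ℂ) + s * N) s).meromorphicAt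
    exact (m1.neg.sub (m3.mul m2)).div m4
  · simp only [max_lt_iff] at hs
    have hden : (b + s * N : ℂ) ≠ 0 := by
      intro h0
      have := congrArg Complex.re h0
      simp at this
      nlinarith
    have := key (s - 1) (by simp; linarith)
    rw [sub_add_cancel] at this
    rw [div_eq_iff hden, e1' s hs.2.1, e2' (s - 1) (by simp; linarith [hs.2.2]), mul_comm _ (_ + _), this]

lemma exists_pos_le (s : Finset ℝ) : ∃ δ > 0, ∀ a ∈ s, 0 < a → δ ≤ a := by
  induction s using Finset.induction_on with
  | empty => exact ⟨1, one_pos, by simp⟩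
  | insert a s ha ih =>
    obtain ⟨δ, hδ, h⟩ := ih
    by_cases h0 : 0 < a
    · refine ⟨min δ a, lt_min hδ h0, fun b hb hb0 => ?_⟩
      rcases Finset.mem_insert.1 hb with rfl | hb
      · exact min_le_right _ _
      · exact (min_le_left _ _).trans (h b hb hb0)
    · refine ⟨δ, hδ, fun b hb hb0 => ?_⟩
      rcases Finset.mem_insert.1 hb with rfl | hb
      · exact absurd hb0 h0
      · exact h b hb hb0

/-- Meromorphic continuation to every half-plane. The induction is on the total deficit of the
weights `⟨w, β⟩` below `R N(w)` for the finitely many test vectors `w`; each functional equation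
lowers it. -/
lemma Base.mer (B : Base V g r c) (hσ : σ = 1 ∨ σ = -1) (hr : r' < r) (R : ℕ) (h : Amp r' φ) :
    Mer σ (fV V g) R φ := by
  obtain ⟨F, hF0, hF⟩ := exists_test_vectors B.ne
  obtain ⟨δ, hδ, hδ'⟩ := exists_pos_le (((F ×ˢ (Finset.univ : Finset (Fin n))).image fun p => p.1 p.2) ∪
    ((F ×ˢ V).image fun p => dotR p.1 (cv p.2) - NN V p.1))
  have hδ1 : ∀ w ∈ F, ∀ i, 0 < w i → δ ≤ w i := fun w hw i hi =>
    hδ' _ (Finset.mem_union_left _ (Finset.mem_image.2 ⟨(w, i), by simp [hw], rfl⟩)) hi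
  have hδ2 : ∀ w ∈ F, ∀ v ∈ V, NN V w < dotR w (cv v) → δ ≤ dotR w (cv v) - NN V w :=
    fun w hw v hv hlt => hδ' _ (Finset.mem_union_right _ (Finset.mem_image.2
      ⟨(w, v), by simp [hw, hv], rfl⟩)) (sub_pos.2 hlt)
  set d : ℕ → (Fin n → ℕ) → (Fin n → ℝ) → ℝ := fun R β w => R * NN V w - dotR w (cv β) with hd
  set D : ℕ → (Fin n → ℕ) → ℕ := fun R β => ∑ w ∈ F, ⌈d R β w / δ⌉₊ with hD
  have hlt : ∀ R β R' β', (∀ w ∈ F, d R' β' w ≤ d R β w) →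
      ∀ w ∈ F, 0 < d R β w → d R' β' w ≤ d R β w - δ → D R' β' < D R β := by
    intro R β R' β' hle w hw h0 h1
    refine Finset.sum_lt_sum (fun w hw => Nat.ceil_mono (by gcongr; exact hle w hw)) ⟨w, hw, ?_⟩
    have h2 : d R' β' w / δ ≤ d R β w / δ - 1 := by
      rw [div_le_iff₀ hδ, sub_mul, div_mul_cancel₀ _ hδ.ne', one_mul]; exact h1
    have h3 : 0 < ⌈d R β w / δ⌉₊ := Nat.ceil_pos.2 (div_pos h0 hδ)
    have h4 : ⌈d R' β' w / δ⌉₊ ≤ ⌈d R β w / δ⌉₊ - 1 := by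
      rw [← Nat.ceil_sub_one]; exact Nat.ceil_mono h2
    omega
  have hcv : ∀ v v' : Fin n → ℕ, cv (v + v') = cv v + cv v' := fun v v' => by
    funext i; simp [cv]
  have hcs : ∀ (w : Fin n → ℝ) (i : Fin n), dotR w (cv (Pi.single i 1)) = w i := by
    intro w i
    have : cv (Pi.single i 1 : Fin n → ℕ) = Pi.single i (1 : ℝ) := by
      funext k
      rcases eq_or_ne k i with rfl | hk
      · simp [cv]
      · simp [cv, hk]
    rw [this, dotR_single_right]
  have main : ∀ k R β, D R β = k → ∀ φ, Amp r' φ →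
      Mer σ (fV V g) R (fun x => mon β x * φ x) := by
    intro k
    induction k using Nat.strong_induction_on with
    | _ k ih =>
    intro R β hk φ h
    by_cases hall : ∀ w ∈ F, d R β w ≤ 0
    · exact B.mer_base hσ hr R β (hF (cv β) R fun w hw => sub_nonpos.1 (hall w hw)) h
    · push Not at hall
      obtain ⟨w, hw, hw0⟩ := hall
      have hN : 0 < NN V w := by
        by_contra hcon
        have h1 : R * NN V w ≤ 0 := mul_nonpos_of_nonneg_of_nonpos (Nat.cast_nonneg R) (not_lt.1 hcon)
        have h2 := dotR_nonneg (hF0 w hw) (cv_nonneg β)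
        simp only [hd] at hw0
        linarith
      refine B.mer_step hσ hr (hF0 w hw) hN h (fun i hi => ?_) (fun v hv hv0 => ?_) (fun v hv i hi => ?_)
      · refine ih _ ?_ R _ rfl _ (h.dd i)
        rw [← hk]
        refine hlt _ _ _ _ (fun w' hw' => ?_) w hw hw0 ?_
        · simp only [hd, hcv, dotR_add_right, hcs]
          linarith [hF0 w' hw' i]
        · simp only [hd, hcv, dotR_add_right, hcs]
          linarith [hδ1 w hw i hi]
      · refine ih _ ?_ (R + 1) _ rfl _ (h.mul (B.smooth v))
        rw [← hk]
        refine hlt _ _ _ _ (fun w' hw' => ?_) w hw hw0 ?_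
        · simp only [hd, hcv, dotR_add_right, hcs]
          push_cast
          linarith [NN_le hv w']
        · simp only [hd, hcv, dotR_add_right, hcs]
          push_cast
          linarith [hδ2 w hw v hv hv0]
      · refine ih _ ?_ (R + 1) _ rfl _ (h.mul (contDiff_Dd i (B.smooth v)))
        rw [← hk]
        refine hlt _ _ _ _ (fun w' hw' => ?_) w hw hw0 ?_
        · simp only [hd, hcv, dotR_add_right, hcs]
          push_cast
          linarith [NN_le hv w', hF0 w' hw' i]
        · simp only [hd, hcv, dotR_add_right, hcs]
          push_cast
          linarith [NN_le hv w, hδ1 w hw i hi]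
  have := main _ R 0 rfl φ h
  simpa [mon_zero] using this

end Continuation2


/-! ### Symbols whose derivative in one variable is controlled -/

/-- Symbols `Ψ` of weight `ω` for which `∂_j Ψ` is a symbol of weight `ω κ`. -/
def KS {n : ℕ} (r : ℝ) (j : Fin n) (κ ω Ψ : (Fin n → ℝ) → ℝ) : Prop :=
  SS r ω Ψ ∧ SS r (fun x => ω x * κ x) (Dd j Ψ)

section KSymbols

variable {n : ℕ} {r : ℝ} {j : Fin n} {κ ω ω' Ψ Φ : (Fin n → ℝ) → ℝ}

lemma KS.congr (h : KS r j κ ω Ψ) (e : Set.EqOn Φ Ψ (Wx r)) : KS r j κ ω Φ :=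
  ⟨h.1.congr e, h.2.congr fun _ hx => Dd_congr (eventuallyEq_of_eqOn_Wx e hx)⟩

lemma KS.mono (hκ : ∀ x ∈ Wx r, 1 ≤ κ x) (h : KS r j κ ω Ψ) {D : ℝ} (hD : 0 ≤ D)
    (hω : ∀ x ∈ Wx r, ω x ≤ D * ω' x) : KS r j κ ω' Ψ :=
  ⟨h.1.mono hD hω, h.2.mono hD fun x hx => by
    rw [← mul_assoc]
    exact mul_le_mul_of_nonneg_right (hω x hx) (zero_le_one.trans (hκ x hx))⟩

lemma KS.add (h : KS r j κ ω Ψ) (h' : KS r j κ ω Φ) : KS r j κ ω (fun x => Ψ x + Φ x) :=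
  ⟨h.1.add h'.1, (h.2.add h'.2).congr fun _ hx => Dd_add (h.1.diff hx) (h'.1.diff hx)⟩

lemma KS.mul (h : KS r j κ ω Ψ) (h' : KS r j κ ω' Φ) :
    KS r j κ (fun x => ω x * ω' x) (fun x => Ψ x * Φ x) := by
  refine ⟨h.1.mul h'.1, (((h.2.mul h'.1).mono zero_le_one fun x _ => ?_).add
    ((h.1.mul h'.2).mono zero_le_one fun x _ => ?_)).congr
    fun x hx => Dd_mul (h.1.diff hx) (h'.1.diff hx)⟩
  · exact le_of_eq (by ring)
  · exact le_of_eq (by ring)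

lemma KS.of_SS (hκ : ∀ x ∈ Wx r, 1 ≤ κ x) (h : SS r ω Ψ) (h0 : ∀ x ∈ Wx r, Dd j Ψ x = 0) :
    KS r j κ ω Ψ :=
  ⟨h, (SS.zero).congr h0⟩

lemma KS.of_contDiff (hκ : ∀ x ∈ Wx r, 1 ≤ κ x) (h : ContDiff ℝ (⊤ : ℕ∞) Ψ) :
    KS r j κ (fun _ => 1) Ψ :=
  ⟨SS.of_contDiff h, (SS.of_contDiff (contDiff_Dd j h)).mono zero_le_one fun x hx => by
    simpa using hκ x hx⟩

lemma KS.sum {ι : Type*} {s : Finset ι} {Ψ : ι → (Fin n → ℝ) → ℝ}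
    (h : ∀ k ∈ s, KS r j κ ω (Ψ k)) : KS r j κ ω (fun x => ∑ k ∈ s, Ψ k x) :=
  ⟨SS.sum fun k hk => (h k hk).1, (SS.sum fun k hk => (h k hk).2).congr
    fun _ hx => Dd_sum fun k hk => (h k hk).1.diff hx⟩

lemma KS.inv (h : KS r j κ ω Ψ) {c : ℝ} (hc : 0 < c) (hω : ∀ x ∈ Wx r, 0 < ω x)
    (hlow : ∀ x ∈ Wx r, c * ω x ≤ |Ψ x|) : KS r j κ (fun x => (ω x)⁻¹) (fun x => (Ψ x)⁻¹) := by
  have h1 := h.1.inv hc hω hlow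
  refine ⟨h1, ((h.2.neg.mul (h1.mul h1)).mono zero_le_one fun x hx => ?_).congr
    fun x hx => Dd_inv (h.1.diff hx)
      (abs_pos.1 ((mul_pos hc (hω x hx)).trans_le (hlow x hx)))⟩
  have := (hω x hx).ne'
  exact le_of_eq (by field_simp)

end KSymbols

/-! ### The scales attached to the unstable variable -/

/-- The monomial `x ^ v` with the variable `x_j` removed. -/
def xh {n : ℕ} (j : Fin n) (v : Fin n → ℕ) : (Fin n → ℝ) → ℝ := mon (Function.update v j 0)

/-- Square sum of the monomials not involving `x_j`. -/
def a2 {n : ℕ} (V : Finset (Fin n → ℕ)) (j : Fin n) (x : Fin n → ℝ) : ℝ :=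
  ∑ v ∈ V.filter (fun v => v j = 0), xh j v x ^ 2

/-- Square sum of the coefficients of `x_j` coming from the face `τ`. -/
def b2 {n : ℕ} (V : Finset (Fin n → ℕ)) (τ : Set (Fin n → ℝ)) (j : Fin n) (x : Fin n → ℝ) : ℝ :=
  ∑ v ∈ V1 V τ j, xh j v x ^ 2

/-- The square of the scale `|x_j| + a / b` on which `f` varies in the variable `x_j`. -/
def mu2 {n : ℕ} (V : Finset (Fin n → ℕ)) (τ : Set (Fin n → ℝ)) (j : Fin n) (x : Fin n → ℝ) : ℝ :=
  x j ^ 2 + a2 V j x * (b2 V τ j x)⁻¹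

/-- The exponents off the face `τ` which involve `x_j`. -/
def VB {n : ℕ} (V : Finset (Fin n → ℕ)) (τ : Set (Fin n → ℝ)) (j : Fin n) : Finset (Fin n → ℕ) :=
  V.filter fun v => 1 ≤ v j ∧ cv v ∉ τ

/-- The squared ratio, at the scale `√mu2`, of the monomial `x ^ v` to the monomials on `τ`. -/
def tv {n : ℕ} (V : Finset (Fin n → ℕ)) (τ : Set (Fin n → ℝ)) (j : Fin n) (v : Fin n → ℕ)
    (x : Fin n → ℝ) : ℝ := xh j v x ^ 2 * mu2 V τ j x ^ (v j - 1) * (b2 V τ j x)⁻¹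

/-- The squared size of everything that keeps `∂_j f` from being comparable to `√b2`. -/
def Th {n : ℕ} (V : Finset (Fin n → ℕ)) (τ : Set (Fin n → ℝ)) (j : Fin n) (x : Fin n → ℝ) : ℝ :=
  mu2 V τ j x + ∑ v ∈ VB V τ j, tv V τ j v x

/-- The cost of a derivative in `x_j`. -/
def kap {n : ℕ} (V : Finset (Fin n → ℕ)) (τ : Set (Fin n → ℝ)) (j : Fin n) (x : Fin n → ℝ) : ℝ :=
  √(Th V τ j x) * (√(mu2 V τ j x))⁻¹

/-- The factor gained by integrating by parts once in `x_j`. -/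
def gn {n : ℕ} (V : Finset (Fin n → ℕ)) (τ : Set (Fin n → ℝ)) (j : Fin n) (x : Fin n → ℝ) : ℝ :=
  √(Th V τ j x) * (√(1 + Th V τ j x))⁻¹

section Scales

variable {n : ℕ} {V : Finset (Fin n → ℕ)} {τ : Set (Fin n → ℝ)} {j : Fin n} {x : Fin n → ℝ}

lemma mon_eq_xh (v : Fin n → ℕ) (x : Fin n → ℝ) : mon v x = x j ^ v j * xh j v x := by
  rw [xh, mon_split j v, mon_split j (Function.update v j 0)]
  simp only [Function.update_self, pow_zero, one_mul]
  congr 1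
  refine Finset.prod_congr rfl fun k hk => ?_
  rw [Function.update_of_ne (Finset.ne_of_mem_erase hk)]

lemma Dd_xh (v : Fin n → ℕ) (x : Fin n → ℝ) : Dd j (xh j v) x = 0 := by
  rw [xh, Dd_mon]; simp

lemma contDiff_xh (v : Fin n → ℕ) : ContDiff ℝ (⊤ : ℕ∞) (xh j v) := contDiff_mon _

lemma xh_ne_zero (v : Fin n → ℕ) (hx : ∀ i ≠ j, x i ≠ 0) : xh j v x ≠ 0 := by
  rw [xh, mon, Finset.prod_ne_zero_iff]
  intro i _
  rcases eq_or_ne i j with rfl | hi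
  · simp
  · exact pow_ne_zero _ (hx i hi)

lemma Dd_mon_xh (v : Fin n → ℕ) (x : Fin n → ℝ) :
    Dd j (mon v) x = v j * (x j ^ (v j - 1) * xh j v x) := by
  rw [Dd_mon, mon_eq_xh (j := j)]
  simp only [Pi.sub_apply, Pi.single_eq_same]
  suffices h : Function.update (v - Pi.single j 1) j 0 = Function.update v j 0 by rw [xh, xh, h]
  funext k
  rcases eq_or_ne k j with rfl | hk
  · simp
  · simp [Function.update_of_ne hk, Pi.single_eq_of_ne hk]

lemma a2_nonneg : 0 ≤ a2 V j x := Finset.sum_nonneg fun _ _ => sq_nonneg _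

lemma b2_pos (hne : (V1 V τ j).Nonempty) (hx : ∀ i ≠ j, x i ≠ 0) : 0 < b2 V τ j x :=
  Finset.sum_pos (fun v _ => by have := xh_ne_zero v hx; positivity) hne

lemma b2_nonneg : 0 ≤ b2 V τ j x := Finset.sum_nonneg fun _ _ => sq_nonneg _

lemma sq_le_mu2 : x j ^ 2 ≤ mu2 V τ j x :=
  le_add_of_nonneg_right (mul_nonneg a2_nonneg (inv_nonneg.2 b2_nonneg))

lemma mu2_nonneg : 0 ≤ mu2 V τ j x := (sq_nonneg _).trans sq_le_mu2

lemma mu2_pos (hx : x j ≠ 0) : 0 < mu2 V τ j x :=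
  (by positivity : 0 < x j ^ 2).trans_le sq_le_mu2

lemma tv_nonneg (v : Fin n → ℕ) : 0 ≤ tv V τ j v x :=
  mul_nonneg (mul_nonneg (sq_nonneg _) (pow_nonneg mu2_nonneg _)) (inv_nonneg.2 b2_nonneg)

lemma mu2_le_Th : mu2 V τ j x ≤ Th V τ j x :=
  le_add_of_nonneg_right (Finset.sum_nonneg fun v _ => tv_nonneg v)

lemma Th_nonneg : 0 ≤ Th V τ j x := mu2_nonneg.trans mu2_le_Th

lemma tv_le_Th {v : Fin n → ℕ} (hv : v ∈ VB V τ j) : tv V τ j v x ≤ Th V τ j x :=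
  (Finset.single_le_sum (f := fun v => tv V τ j v x) (fun v _ => tv_nonneg v) hv).trans
    (le_add_of_nonneg_left mu2_nonneg)

lemma sqrt_Th_le : √(Th V τ j x) ≤ 1 + Th V τ j x := by
  nlinarith [Real.sq_sqrt (Th_nonneg (V := V) (τ := τ) (j := j) (x := x)),
    sq_nonneg (√(Th V τ j x) - 1), Th_nonneg (V := V) (τ := τ) (j := j) (x := x)]

lemma abs_le_mu : |x j| ≤ √(mu2 V τ j x) := Real.abs_le_sqrt sq_le_mu2

lemma one_le_kap (hx : x j ≠ 0) : 1 ≤ kap V τ j x := by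
  have h : 0 < √(mu2 V τ j x) := Real.sqrt_pos.2 (mu2_pos hx)
  rw [kap, ← div_eq_mul_inv, one_le_div h]
  exact Real.sqrt_le_sqrt mu2_le_Th

lemma gn_nonneg : 0 ≤ gn V τ j x := by rw [gn]; positivity

lemma gn_le_one : gn V τ j x ≤ 1 := by
  rw [gn, ← div_eq_mul_inv]
  exact div_le_one_of_le₀ (Real.sqrt_le_sqrt (by linarith)) (Real.sqrt_nonneg _)

lemma abs_xh_V1 {v : Fin n → ℕ} (hv : v ∈ V1 V τ j) : |xh j v x| ≤ √(b2 V τ j x) :=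
  Real.abs_le_sqrt (Finset.single_le_sum (f := fun v => xh j v x ^ 2)
    (fun v _ => sq_nonneg _) hv)

lemma abs_xh_V0 (hb : 0 < b2 V τ j x) {v : Fin n → ℕ} (hv : v ∈ V) (hvj : v j = 0) :
    |xh j v x| ≤ √(b2 V τ j x) * √(mu2 V τ j x) := by
  rw [← Real.sqrt_mul b2_nonneg]
  refine Real.abs_le_sqrt ?_
  have h1 : xh j v x ^ 2 ≤ a2 V j x :=
    Finset.single_le_sum (f := fun v => xh j v x ^ 2) (fun v _ => sq_nonneg _)
      (Finset.mem_filter.2 ⟨hv, hvj⟩)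
  rw [mu2, mul_add, mul_comm (a2 V j x), mul_inv_cancel_left₀ hb.ne']
  have := mul_nonneg hb.le (sq_nonneg (x j))
  linarith

lemma sq_xh_VB (hb : 0 < b2 V τ j x) (v : Fin n → ℕ) :
    xh j v x ^ 2 * mu2 V τ j x ^ (v j - 1) = b2 V τ j x * tv V τ j v x := by
  rw [tv]; field_simp

lemma abs_xh_VB (hb : 0 < b2 V τ j x) {v : Fin n → ℕ} (hv : v ∈ VB V τ j) :
    |xh j v x| * √(mu2 V τ j x) ^ (v j - 1) ≤ √(b2 V τ j x) * √(Th V τ j x) := by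
  have h0 : 0 ≤ |xh j v x| * √(mu2 V τ j x) ^ (v j - 1) := by positivity
  rw [← Real.sqrt_mul b2_nonneg, ← abs_of_nonneg h0]
  refine Real.abs_le_sqrt ?_
  rw [mul_pow, sq_abs, ← pow_mul, mul_comm (v j - 1), pow_mul, Real.sq_sqrt mu2_nonneg,
    sq_xh_VB hb]
  exact mul_le_mul_of_nonneg_left (tv_le_Th hv) hb.le

/-- Every exponent is free of `x_j`, or linear in `x_j` on the face, or off the face. -/
lemma mem_classes (hτ : ∀ y ∈ τ, y j ≤ 1) {v : Fin n → ℕ} (hv : v ∈ V) :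
    v j = 0 ∨ v ∈ V1 V τ j ∨ v ∈ VB V τ j := by
  rcases Nat.eq_zero_or_pos (v j) with h | h
  · exact Or.inl h
  · right
    by_cases hc : cv v ∈ τ
    · left
      have h1 : (v j : ℝ) ≤ 1 := hτ _ hc
      have h2 : v j ≤ 1 := by exact_mod_cast h1
      exact Finset.mem_filter.2 ⟨hv, le_antisymm h2 h, hc⟩
    · exact Or.inr (Finset.mem_filter.2 ⟨hv, h, hc⟩)

end Scales


section UnstableSymbols

variable {n : ℕ} {V : Finset (Fin n → ℕ)} {τ : Set (Fin n → ℝ)} {j : Fin n}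
  {g : (Fin n → ℕ) → (Fin n → ℝ) → ℝ} {r r' c : ℝ} {φ : (Fin n → ℝ) → ℝ}

lemma Dd_eq_zero_of_indep {Ψ : (Fin n → ℝ) → ℝ} (h : ∀ x t, Ψ (Function.update x j t) = Ψ x)
    (x : Fin n → ℝ) : Dd j Ψ x = 0 := by
  by_cases hd : DifferentiableAt ℝ Ψ x
  · have h1 := hasDerivAt_line hd j
    simp only [h] at h1
    exact h1.unique (hasDerivAt_const _ _)
  · rw [Dd, fderiv_zero_of_not_differentiableAt hd]; rfl

lemma xh_update (v : Fin n → ℕ) (x : Fin n → ℝ) (t : ℝ) :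
    xh j v (Function.update x j t) = xh j v x := by
  rw [xh, mon, mon]
  refine Finset.prod_congr rfl fun k _ => ?_
  rcases eq_or_ne k j with rfl | hk
  · simp
  · rw [Function.update_of_ne hk]

lemma a2_update (x : Fin n → ℝ) (t : ℝ) : a2 V j (Function.update x j t) = a2 V j x := by
  simp only [a2, xh_update]

lemma b2_update (x : Fin n → ℝ) (t : ℝ) : b2 V τ j (Function.update x j t) = b2 V τ j x := by
  simp only [b2, xh_update]

lemma one_le_kap_Wx : ∀ x ∈ Wx r, 1 ≤ kap V τ j x := fun _ hx => one_le_kap (hx.2 j)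

lemma b2_pos_Wx (hne : (V1 V τ j).Nonempty) : ∀ x ∈ Wx r, 0 < b2 V τ j x :=
  fun _ hx => b2_pos hne fun i _ => hx.2 i

lemma ss_xj : SS r (fun x => |x j|) (fun x => x j) :=
  ((SS.mon (Pi.single j 1)).congr fun x _ => (mon_single j x).symm).mono zero_le_one
    fun x _ => by rw [mon_single, one_mul]

lemma ss_xh (v : Fin n → ℕ) : SS r (fun x => |xh j v x|) (xh j v) := SS.mon _

lemma ss_sum_sq (s : Finset (Fin n → ℕ)) :
    SS r (fun x => ∑ v ∈ s, xh j v x ^ 2) (fun x => ∑ v ∈ s, xh j v x ^ 2) :=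
  SS.sum fun v hv => ((ss_xh v).pow 2).mono zero_le_one fun x _ => by
    rw [sq_abs, one_mul]
    exact Finset.single_le_sum (f := fun v => xh j v x ^ 2) (fun v _ => sq_nonneg _) hv

lemma ss_b2 : SS r (b2 V τ j) (b2 V τ j) := ss_sum_sq _

lemma ss_b2_inv (hne : (V1 V τ j).Nonempty) :
    SS r (fun x => (b2 V τ j x)⁻¹) (fun x => (b2 V τ j x)⁻¹) :=
  ss_b2.inv one_pos (b2_pos_Wx hne) fun x _ => by rw [one_mul]; exact le_abs_self _

lemma ss_mu2 (hne : (V1 V τ j).Nonempty) : SS r (mu2 V τ j) (mu2 V τ j) := by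
  refine ((ss_xj.pow 2).mono zero_le_one fun x _ => ?_).add
    (((ss_sum_sq _).mul (ss_b2_inv hne)).mono zero_le_one fun x _ => ?_)
  · rw [sq_abs, one_mul]; exact sq_le_mu2
  · rw [one_mul]; exact le_add_of_nonneg_left (sq_nonneg _)

lemma ss_tv (hne : (V1 V τ j).Nonempty) (v : Fin n → ℕ) : SS r (tv V τ j v) (tv V τ j v) := by
  refine ((((ss_xh v).pow 2).mul ((ss_mu2 hne).pow (v j - 1))).mul (ss_b2_inv hne)).mono
    zero_le_one fun x _ => ?_
  rw [sq_abs, one_mul, tv]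

lemma ss_Th (hne : (V1 V τ j).Nonempty) : SS r (Th V τ j) (Th V τ j) := by
  refine ((ss_mu2 hne).mono zero_le_one fun x _ => ?_).add
    (SS.sum fun v hv => (ss_tv hne v).mono zero_le_one fun x _ => ?_)
  · rw [one_mul]; exact mu2_le_Th
  · rw [one_mul]; exact tv_le_Th hv

lemma Dd_mu2 (hne : (V1 V τ j).Nonempty) {x : Fin n → ℝ} (hx : x ∈ Wx r) :
    Dd j (mu2 V τ j) x = 2 * x j := by
  have h1 : SS r (fun x => a2 V j x * (b2 V τ j x)⁻¹) (fun x => a2 V j x * (b2 V τ j x)⁻¹) :=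
    (ss_sum_sq _).mul (ss_b2_inv hne)
  have h2 := Dd_add (i := j) ((ss_xj (j := j).pow 2).diff hx) (h1.diff hx)
  refine h2.trans ?_
  rw [Dd_eq_zero_of_indep (Ψ := fun x => a2 V j x * (b2 V τ j x)⁻¹)
    (fun x t => by simp only [a2_update, b2_update]), Dd_pow (ss_xj.diff hx), Dd_coord]
  simp

/-- A derivative in `x_j` of `Th` costs only the factor `kap`. -/
lemma ks_Th (hne : (V1 V τ j).Nonempty) :
    KS r j (kap V τ j) (fun x => 1 + Th V τ j x) (Th V τ j) := by
  have hle : ∀ x ∈ Wx r, √(mu2 V τ j x) * √(mu2 V τ j x) = mu2 V τ j x ∧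
      0 < √(mu2 V τ j x) ∧ √(Th V τ j x) * √(Th V τ j x) = Th V τ j x ∧
      (1 + Th V τ j x) * kap V τ j x * √(mu2 V τ j x) = (1 + Th V τ j x) * √(Th V τ j x) := by
    intro x hx
    have h := Real.sqrt_pos.2 (mu2_pos (V := V) (τ := τ) (hx.2 j))
    refine ⟨Real.mul_self_sqrt mu2_nonneg, h, Real.mul_self_sqrt Th_nonneg, ?_⟩
    rw [kap]; field_simp
  refine ⟨(ss_Th hne).mono zero_le_one fun x _ => by linarith, ?_⟩
  have h1 : SS r (fun x => (1 + Th V τ j x) * kap V τ j x) (fun x => 2 * x j) := by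
    refine (ss_xj.const_mul 2).mono zero_le_one fun x hx => ?_
    obtain ⟨h1, h2, h3, h4⟩ := hle x hx
    refine le_of_mul_le_mul_right ?_ h2
    have h5 := abs_le_mu (V := V) (τ := τ) (j := j) (x := x)
    have h6 := mu2_le_Th (V := V) (τ := τ) (j := j) (x := x)
    have h7 := sqrt_Th_le (V := V) (τ := τ) (j := j) (x := x)
    have h8 := Real.sqrt_nonneg (Th V τ j x)
    rw [one_mul, h4]
    nlinarith [mul_le_mul_of_nonneg_right h5 h2.le, mul_le_mul_of_nonneg_right h7 h8]
  have h2 : ∀ v ∈ VB V τ j, SS r (fun x => (1 + Th V τ j x) * kap V τ j x)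
      (fun x => ((v j - 1 : ℕ) : ℝ) * (xh j v x ^ 2 * mu2 V τ j x ^ (v j - 1 - 1) *
        (b2 V τ j x)⁻¹ * (2 * x j))) := by
    intro v hv
    rcases Nat.eq_zero_or_pos (v j - 1) with h0 | h0
    · exact SS.zero.congr fun x _ => by simp [h0]
    · refine (((((((ss_xh v).pow 2).mul ((ss_mu2 hne).pow (v j - 1 - 1))).mul
        (ss_b2_inv hne)).mul (ss_xj.const_mul 2))).const_mul _).mono zero_le_one fun x hx => ?_
      obtain ⟨h1, h2, h3, h4⟩ := hle x hx
      refine le_of_mul_le_mul_right ?_ h2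
      have hb := b2_pos_Wx (r := r) hne x hx
      have h5 := abs_le_mu (V := V) (τ := τ) (j := j) (x := x)
      have h7 := sqrt_Th_le (V := V) (τ := τ) (j := j) (x := x)
      have h8 := Real.sqrt_nonneg (Th V τ j x)
      have h9 := tv_le_Th (x := x) hv
      rw [one_mul, h4, sq_abs]
      have hm := mu2_nonneg (V := V) (τ := τ) (j := j) (x := x)
      calc xh j v x ^ 2 * mu2 V τ j x ^ (v j - 1 - 1) * (b2 V τ j x)⁻¹ * |x j| * √(mu2 V τ j x)
          ≤ xh j v x ^ 2 * mu2 V τ j x ^ (v j - 1 - 1) * (b2 V τ j x)⁻¹ * √(mu2 V τ j x) *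
            √(mu2 V τ j x) := by gcongr
        _ = tv V τ j v x := by
          rw [mul_assoc _ (√_) (√_), h1, tv]
          conv_rhs => rw [show v j - 1 = v j - 1 - 1 + 1 by omega, pow_succ]
          ring
        _ ≤ _ := by nlinarith [mul_le_mul_of_nonneg_right h7 h8]
  refine (h1.add (SS.sum h2)).congr fun x hx => ?_
  refine (Dd_add ((ss_mu2 hne).diff hx)
    ((SS.sum (s := VB V τ j) (ω := Th V τ j) fun v hv => (ss_tv hne v).mono zero_le_one fun x _ => by
      rw [one_mul]; exact tv_le_Th hv).diff hx)).trans ?_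
  rw [Dd_mu2 hne hx]
  congr 1
  refine (Dd_sum fun v _ => (ss_tv hne v).diff hx).trans (Finset.sum_congr rfl fun v _ => ?_)
  have e1 : tv V τ j v = fun x => (xh j v x ^ 2 * (b2 V τ j x)⁻¹) * mu2 V τ j x ^ (v j - 1) := by
    funext x; rw [tv]; ring
  rw [e1, Dd_mul ((((ss_xh v).pow 2).mul (ss_b2_inv hne)).diff hx) (((ss_mu2 hne).pow _).diff hx),
    Dd_eq_zero_of_indep (Ψ := fun x => xh j v x ^ 2 * (b2 V τ j x)⁻¹)
      (fun x t => by simp only [xh_update, b2_update]),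
    Dd_pow ((ss_mu2 hne).diff hx), Dd_mu2 hne hx]
  ring

/-- The monomials of `∂_j f` have size at most `√b2 * (1 + Th)`, and a derivative in `x_j` costs the
factor `kap`. -/
lemma ks_term (hne : (V1 V τ j).Nonempty) {v : Fin n → ℕ} (hv : v ∈ V1 V τ j ∨ v ∈ VB V τ j) :
    KS r j (kap V τ j) (fun x => √(b2 V τ j x) * (1 + Th V τ j x))
      (fun x => x j ^ (v j - 1) * xh j v x) := by
  have hb1 : ∀ x, √(b2 V τ j x) ≤ √(b2 V τ j x) * (1 + Th V τ j x) := fun x =>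
    le_mul_of_one_le_right (Real.sqrt_nonneg _) (by linarith [Th_nonneg (V := V) (τ := τ) (j := j) (x := x)])
  have hpow : ∀ (x : Fin n → ℝ) k, |x j| ^ k ≤ √(mu2 V τ j x) ^ k := fun x k =>
    pow_le_pow_left₀ (abs_nonneg _) abs_le_mu k
  refine ⟨((ss_xj.pow _).mul (ss_xh v)).mono zero_le_one fun x hx => ?_, ?_⟩
  · rw [one_mul]
    rcases hv with hv | hv
    · rw [show v j - 1 = 0 by simp [(Finset.mem_filter.1 hv).2.1], pow_zero, one_mul]
      exact (abs_xh_V1 hv).trans (hb1 x)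
    · calc |x j| ^ (v j - 1) * |xh j v x| ≤ √(mu2 V τ j x) ^ (v j - 1) * |xh j v x| := by
            gcongr; exact abs_le_mu
        _ = |xh j v x| * √(mu2 V τ j x) ^ (v j - 1) := mul_comm _ _
        _ ≤ _ := (abs_xh_VB (b2_pos_Wx hne x hx) hv).trans (by gcongr; exact sqrt_Th_le)
  · have e : Set.EqOn (Dd j fun x => x j ^ (v j - 1) * xh j v x)
        (fun x => ((v j - 1 : ℕ) : ℝ) * (x j ^ (v j - 1 - 1) * xh j v x)) (Wx r) := by
      intro x hx
      simp only
      rw [Dd_mul ((ss_xj.pow _).diff hx) ((ss_xh v).diff hx), Dd_xh, Dd_pow (ss_xj.diff hx), Dd_coord]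
      simp only [if_true]
      ring
    refine SS.congr ?_ e
    rcases Nat.eq_zero_or_pos (v j - 1) with h0 | h0
    · exact SS.zero.congr fun x _ => by simp [h0]
    · have hv' : v ∈ VB V τ j := by
        rcases hv with hv | hv
        · have := (Finset.mem_filter.1 hv).2.1
          omega
        · exact hv
      refine (((ss_xj.pow _).mul (ss_xh v)).const_mul _).mono zero_le_one fun x hx => ?_
      have h := Real.sqrt_pos.2 (mu2_pos (V := V) (τ := τ) (hx.2 j))
      refine le_of_mul_le_mul_right ?_ h
      calc |x j| ^ (v j - 1 - 1) * |xh j v x| * √(mu2 V τ j x)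
          ≤ √(mu2 V τ j x) ^ (v j - 1 - 1) * |xh j v x| * √(mu2 V τ j x) := by
            gcongr; exact abs_le_mu
        _ = |xh j v x| * √(mu2 V τ j x) ^ (v j - 1) := by
            conv_rhs => rw [show v j - 1 = v j - 1 - 1 + 1 by omega, pow_succ]
            ring
        _ ≤ √(b2 V τ j x) * √(Th V τ j x) := abs_xh_VB (b2_pos_Wx hne x hx) hv'
        _ ≤ √(b2 V τ j x) * (1 + Th V τ j x) * √(Th V τ j x) := by gcongr; exact hb1 x
        _ = _ := by rw [kap]; field_simp

end UnstableSymbols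


section UnstableSymbols2

variable {n : ℕ} {V : Finset (Fin n → ℕ)} {τ : Set (Fin n → ℝ)} {j : Fin n}
  {g : (Fin n → ℕ) → (Fin n → ℝ) → ℝ} {r r' c : ℝ} {φ : (Fin n → ℝ) → ℝ}

/-- The cofactor of `x_j ^ (v_j - 1) * xh j v` in `∂_j (x ^ v g_v)`. -/
def gj {n : ℕ} (g : (Fin n → ℕ) → (Fin n → ℝ) → ℝ) (j : Fin n) (v : Fin n → ℕ)
    (x : Fin n → ℝ) : ℝ := v j * g v x + x j * Dd j (g v) x

lemma contDiff_gj (I : Inst V g r c τ j) (v : Fin n → ℕ) : ContDiff ℝ (⊤ : ℕ∞) (gj g j v) :=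
  (contDiff_const.mul (I.smooth v)).add ((contDiff_apply ℝ ℝ j).mul (contDiff_Dd j (I.smooth v)))

lemma disjoint_V1_VB : Disjoint (V1 V τ j) (VB V τ j) :=
  Finset.disjoint_left.2 fun _ h1 h2 =>
    (Finset.mem_filter.1 h2).2.2 (Finset.mem_filter.1 h1).2.2

/-- The `x_j`-derivative: the exponents free of `x_j` do not contribute. -/
lemma Dd_fV_eq (I : Inst V g r c τ j) (hτ : ∀ y ∈ τ, y j ≤ 1) {x : Fin n → ℝ} (hx : x ∈ Wx r) :
    Dd j (fV V g) x = ∑ v ∈ V1 V τ j ∪ VB V τ j, (x j ^ (v j - 1) * xh j v x) * gj g j v x := by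
  rw [Dd_fV I.smooth]
  symm
  have hsub : V1 V τ j ∪ VB V τ j ⊆ V :=
    Finset.union_subset (Finset.filter_subset _ _) (Finset.filter_subset _ _)
  refine Finset.sum_subset_zero_on_sdiff hsub (fun v hv => ?_) fun v hv => ?_
  · rw [Finset.mem_sdiff] at hv
    have h0 : v j = 0 := by
      rcases mem_classes hτ hv.1 with h | h | h
      · exact h
      · exact absurd (Finset.mem_union_left _ h) hv.2
      · exact absurd (Finset.mem_union_right _ h) hv.2
    rw [Dd_mon_xh, h0, I.indep v hv.1 (by omega) x (Wx_subset_bx r hx)]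
    simp
  · have h1 : 1 ≤ v j := by
      rcases Finset.mem_union.1 hv with h | h
      · exact ((Finset.mem_filter.1 h).2.1).ge
      · exact (Finset.mem_filter.1 h).2.1
    have e : x j ^ v j = x j ^ (v j - 1) * x j := by
      rw [← pow_succ, Nat.sub_add_cancel h1]
    rw [Dd_mon_xh, mon_eq_xh (j := j), e, gj]
    ring

lemma ks_P (I : Inst V g r c τ j) (hτ : ∀ y ∈ τ, y j ≤ 1) :
    KS r j (kap V τ j) (fun x => √(b2 V τ j x) * (1 + Th V τ j x)) (Dd j (fV V g)) :=
  KS.congr (KS.sum fun v hv => KS.mono one_le_kap_Wx ((ks_term I.ne1 (Finset.mem_union.1 hv)).mul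
    (KS.of_contDiff one_le_kap_Wx (contDiff_gj I v))) zero_le_one fun x _ => by simp)
    fun _ hx => Dd_fV_eq I hτ hx

/-- The denominator `(∂_j f)² + b² Θ²`. -/
def Qf {n : ℕ} (V : Finset (Fin n → ℕ)) (g : (Fin n → ℕ) → (Fin n → ℝ) → ℝ)
    (τ : Set (Fin n → ℝ)) (j : Fin n) (x : Fin n → ℝ) : ℝ :=
  Dd j (fV V g) x * Dd j (fV V g) x + b2 V τ j x * (Th V τ j x * Th V τ j x)

lemma ks_Q (I : Inst V g r c τ j) (hτ : ∀ y ∈ τ, y j ≤ 1) :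
    KS r j (kap V τ j) (fun x => b2 V τ j x * (1 + Th V τ j x) ^ 2) (Qf V g τ j) := by
  refine (((ks_P I hτ).mul (ks_P I hτ)).mono one_le_kap_Wx zero_le_one fun x _ => ?_).add
    (((KS.of_SS one_le_kap_Wx ss_b2 fun x _ => Dd_eq_zero_of_indep b2_update x).mul
      ((ks_Th I.ne1).mul (ks_Th I.ne1))).mono one_le_kap_Wx zero_le_one fun x _ => ?_)
  · have := Real.mul_self_sqrt (b2_nonneg (V := V) (τ := τ) (j := j) (x := x))
    refine le_of_eq ?_
    linear_combination (1 + Th V τ j x) ^ 2 * this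
  · exact le_of_eq (by ring)

/-- On the face the derivative is at least `√b2`, by instability; the remaining part of the
derivative is at most `√b2 √Th`. -/
lemma Dd_low (I : Inst V g r c τ j) (hτ : ∀ y ∈ τ, y j ≤ 1) : ∃ C : ℝ, 0 ≤ C ∧ ∀ x ∈ Wx r,
    c * √(b2 V τ j x) ≤ |Dd j (fV V g) x| + C * (√(b2 V τ j x) * √(Th V τ j x)) := by
  choose C hC hCb using fun v => (SS.of_contDiff (r := r) (contDiff_gj I v)).bound
  refine ⟨∑ v ∈ VB V τ j, C v, Finset.sum_nonneg fun v _ => hC v, fun x hx => ?_⟩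
  have hb := b2_pos_Wx (r := r) I.ne1 x hx
  rw [Dd_fV_eq I hτ hx, Finset.sum_union disjoint_V1_VB]
  have e1 : ∑ v ∈ V1 V τ j, (x j ^ (v j - 1) * xh j v x) * gj g j v x =
      ∑ v ∈ V1 V τ j, xh j v x * g v x := by
    refine Finset.sum_congr rfl fun v hv => ?_
    obtain ⟨hvV, hv1, -⟩ := Finset.mem_filter.1 hv
    rw [gj, I.indep v hvV hv1.le x (Wx_subset_bx r hx), hv1]
    simp
  have h1 : c * √(b2 V τ j x) ≤ |∑ v ∈ V1 V τ j, xh j v x * g v x| := by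
    have h2 := I.low1 x hx
    have h3 : ∑ v ∈ V1 V τ j, |mon v x| = |x j| * ∑ v ∈ V1 V τ j, |xh j v x| := by
      rw [Finset.mul_sum]
      refine Finset.sum_congr rfl fun v hv => ?_
      rw [mon_eq_xh (j := j), (Finset.mem_filter.1 hv).2.1, pow_one, abs_mul]
    have h4 : ∑ v ∈ V1 V τ j, mon v x * g v x = x j * ∑ v ∈ V1 V τ j, xh j v x * g v x := by
      rw [Finset.mul_sum]
      refine Finset.sum_congr rfl fun v hv => ?_
      rw [mon_eq_xh (j := j), (Finset.mem_filter.1 hv).2.1, pow_one, mul_assoc]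
    rw [h3, h4, abs_mul, mul_left_comm] at h2
    refine le_trans ?_ (le_of_mul_le_mul_left h2 (abs_pos.2 (hx.2 j)))
    refine mul_le_mul_of_nonneg_left ?_ I.c_pos.le
    rw [Real.sqrt_le_left (Finset.sum_nonneg fun _ _ => abs_nonneg _)]
    refine le_trans (le_of_eq ?_)
      (Finset.sum_sq_le_sq_sum_of_nonneg (s := V1 V τ j) fun v _ => abs_nonneg (xh j v x))
    simp only [b2, sq_abs]
  have h2 : |∑ v ∈ VB V τ j, (x j ^ (v j - 1) * xh j v x) * gj g j v x| ≤
      (∑ v ∈ VB V τ j, C v) * (√(b2 V τ j x) * √(Th V τ j x)) := by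
    rw [Finset.sum_mul]
    refine (Finset.abs_sum_le_sum_abs _ _).trans (Finset.sum_le_sum fun v hv => ?_)
    rw [abs_mul, mul_comm]
    refine mul_le_mul (by simpa using hCb v x hx) ?_ (abs_nonneg _) (hC v)
    rw [abs_mul, abs_pow, mul_comm]
    refine le_trans ?_ (abs_xh_VB hb hv)
    gcongr
    exact abs_le_mu
  rw [e1]
  have h3 := abs_sub_abs_le_abs_sub (∑ v ∈ V1 V τ j, xh j v x * g v x)
    (-∑ v ∈ VB V τ j, (x j ^ (v j - 1) * xh j v x) * gj g j v x)
  rw [abs_neg, sub_neg_eq_add] at h3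
  linarith

/-- The denominator `Qf` is bounded below by its size, by `Dd_low`. -/
lemma Q_low (I : Inst V g r c τ j) (hτ : ∀ y ∈ τ, y j ≤ 1) : ∃ C : ℝ, 0 < C ∧ ∀ x ∈ Wx r,
    C * (b2 V τ j x * (1 + Th V τ j x) ^ 2) ≤ Qf V g τ j x := by
  obtain ⟨C, hC, h⟩ := Dd_low I hτ
  have hc := I.c_pos
  set D : ℝ := 2 * C ^ 2 / c ^ 2 with hD
  have hK : 0 < 8 / c ^ 2 + 2 * D ^ 2 + 2 := by positivity
  refine ⟨(8 / c ^ 2 + 2 * D ^ 2 + 2)⁻¹, inv_pos.2 hK, fun x hx => ?_⟩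
  rw [inv_mul_le_iff₀ hK, Qf]
  have hx := h x hx
  have hT := Th_nonneg (V := V) (τ := τ) (j := j) (x := x)
  have hB := b2_nonneg (V := V) (τ := τ) (j := j) (x := x)
  set T := Th V τ j x
  set B := b2 V τ j x
  set P := Dd j (fV V g) x
  have h1 : c ^ 2 * B ≤ 2 * (P * P) + 2 * C ^ 2 * (B * T) := by
    have e1 : (c * √B) ^ 2 = c ^ 2 * B := by rw [mul_pow, Real.sq_sqrt hB]
    have e2 : (C * (√B * √T)) ^ 2 = C ^ 2 * (B * T) := by
      rw [mul_pow, mul_pow, Real.sq_sqrt hB, Real.sq_sqrt hT]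
    have e3 : (c * √B) ^ 2 ≤ (|P| + C * (√B * √T)) ^ 2 :=
      pow_le_pow_left₀ (by positivity) hx 2
    have e4 : |P| ^ 2 = P * P := by rw [sq_abs]; ring
    nlinarith [sq_nonneg (|P| - C * (√B * √T))]
  have h2 : B ≤ 2 / c ^ 2 * (P * P) + D * (B * T) := by
    rw [hD]
    have : 2 / c ^ 2 * (P * P) + 2 * C ^ 2 / c ^ 2 * (B * T) =
        (2 * (P * P) + 2 * C ^ 2 * (B * T)) / c ^ 2 := by ring
    rw [this, le_div_iff₀ (by positivity)]
    linarith
  have h3 : B ≤ 4 / c ^ 2 * (P * P) + D ^ 2 * (B * T ^ 2) := by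
    have e : D * (B * T) ≤ B / 2 + D ^ 2 * (B * T ^ 2) / 2 := by
      have := mul_nonneg hB (sq_nonneg (1 - D * T))
      nlinarith
    have e5 : 4 / c ^ 2 * (P * P) = 2 * (2 / c ^ 2 * (P * P)) := by ring
    linarith
  have h4 : B * (1 + T) ^ 2 ≤ 2 * B + 2 * (B * T ^ 2) := by
    nlinarith [mul_nonneg hB (sq_nonneg (1 - T))]
  have h5 : 0 ≤ 8 / c ^ 2 * (B * T ^ 2) := by positivity
  have h6 : 0 ≤ (2 * D ^ 2 + 2) * (P * P) := mul_nonneg (by positivity) (mul_self_nonneg _)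
  have h7 : 8 / c ^ 2 * (P * P) = 2 * (4 / c ^ 2 * (P * P)) := by ring
  nlinarith

lemma mV_le_scale (hne : (V1 V τ j).Nonempty) (hτ : ∀ y ∈ τ, y j ≤ 1) {x : Fin n → ℝ}
    (hx : x ∈ Wx r) :
    mV V x ≤ V.card * (√(b2 V τ j x) * √(mu2 V τ j x) * √(1 + Th V τ j x)) := by
  rw [mV, ← nsmul_eq_mul]
  refine Finset.sum_le_card_nsmul _ _ _ fun v hv => ?_
  have hb := b2_pos_Wx (r := r) hne x hx
  have h1 : 1 ≤ √(1 + Th V τ j x) :=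
    Real.one_le_sqrt.2 (by linarith [Th_nonneg (V := V) (τ := τ) (j := j) (x := x)])
  have h2 : √(Th V τ j x) ≤ √(1 + Th V τ j x) := Real.sqrt_le_sqrt (by linarith)
  have h3 := abs_le_mu (V := V) (τ := τ) (j := j) (x := x)
  rw [mon_eq_xh (j := j), abs_mul, abs_pow]
  rcases mem_classes hτ hv with h | h | h
  · rw [h, pow_zero, one_mul]
    exact (abs_xh_V0 hb hv h).trans (le_mul_of_one_le_right (by positivity) h1)
  · rw [(Finset.mem_filter.1 h).2.1, pow_one]
    refine le_trans ?_ (le_mul_of_one_le_right (by positivity) h1)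
    rw [mul_comm]
    gcongr
    exact abs_xh_V1 h
  · have h5 : 1 ≤ v j := (Finset.mem_filter.1 h).2.1
    calc |x j| ^ v j * |xh j v x| ≤ √(mu2 V τ j x) ^ v j * |xh j v x| := by gcongr
      _ = √(mu2 V τ j x) * (|xh j v x| * √(mu2 V τ j x) ^ (v j - 1)) := by
        conv_lhs => rw [show v j = v j - 1 + 1 by omega, pow_succ]
        ring
      _ ≤ √(mu2 V τ j x) * (√(b2 V τ j x) * √(Th V τ j x)) :=
        mul_le_mul_of_nonneg_left (abs_xh_VB hb h) (Real.sqrt_nonneg _)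
      _ ≤ √(mu2 V τ j x) * (√(b2 V τ j x) * √(1 + Th V τ j x)) := by gcongr
      _ = _ := by ring

/-- The amplitude `φ ∂_j f / Q` whose `x_j`-derivative is integrated by parts. -/
def Hf {n : ℕ} (V : Finset (Fin n → ℕ)) (g : (Fin n → ℕ) → (Fin n → ℝ) → ℝ)
    (τ : Set (Fin n → ℝ)) (j : Fin n) (φ : (Fin n → ℝ) → ℝ) (x : Fin n → ℝ) : ℝ :=
  φ x * (Dd j (fV V g) x * (Qf V g τ j x)⁻¹)

/-- The remainder `φ - ∂_j f * Hf`, written so that its size is visible; the two agree where `Qf` does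
not vanish. -/
def Rf {n : ℕ} (V : Finset (Fin n → ℕ)) (g : (Fin n → ℕ) → (Fin n → ℝ) → ℝ)
    (τ : Set (Fin n → ℝ)) (j : Fin n) (φ : (Fin n → ℝ) → ℝ) (x : Fin n → ℝ) : ℝ :=
  φ x * (b2 V τ j x * (Th V τ j x * Th V τ j x) * (Qf V g τ j x)⁻¹)

lemma weight_pos (hne : (V1 V τ j).Nonempty) :
    ∀ x ∈ Wx r, 0 < b2 V τ j x * (1 + Th V τ j x) ^ 2 := fun x hx => by
  have h1 := b2_pos_Wx (r := r) hne x hx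
  have h2 := Th_nonneg (V := V) (τ := τ) (j := j) (x := x)
  positivity

lemma ks_Qinv (I : Inst V g r c τ j) (hτ : ∀ y ∈ τ, y j ≤ 1) :
    KS r j (kap V τ j) (fun x => (b2 V τ j x * (1 + Th V τ j x) ^ 2)⁻¹)
      (fun x => (Qf V g τ j x)⁻¹) := by
  obtain ⟨C, hC, h⟩ := Q_low I hτ
  exact (ks_Q I hτ).inv hC (weight_pos I.ne1) fun x hx => (h x hx).trans (le_abs_self _)

lemma ss_H (I : Inst V g r c τ j) (hτ : ∀ y ∈ τ, y j ≤ 1) (h : ContDiff ℝ (⊤ : ℕ∞) φ) :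
    KS r j (kap V τ j) (fun x => 1 * (√(b2 V τ j x) * (1 + Th V τ j x) *
      (b2 V τ j x * (1 + Th V τ j x) ^ 2)⁻¹)) (Hf V g τ j φ) :=
  (KS.of_contDiff one_le_kap_Wx h).mul ((ks_P I hτ).mul (ks_Qinv I hτ))

/-- The amplitude produced by the derivative has the gain `gn` and the weight `mV⁻¹`: the cost `kap` of
the derivative is converted into these two factors by `mV_le_scale`. -/
lemma adm_DH (I : Inst V g r c τ j) (hτ : ∀ y ∈ τ, y j ≤ 1) (h : Amp r' φ) :
    Adm r r' (wt V (gn V τ j) 1) (Dd j (Hf V g τ j φ)) := by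
  refine ⟨(ss_H I hτ h.1).2.mono (Nat.cast_nonneg V.card) fun x hx => ?_, SuppIn.dd ?_ j⟩
  · have hb := Real.sqrt_pos.2 (b2_pos_Wx (r := r) I.ne1 x hx)
    have hm := mV_pos I.ne hx.2
    have hT := Th_nonneg (V := V) (τ := τ) (j := j) (x := x)
    have hmu := Real.sqrt_pos.2 (mu2_pos (V := V) (τ := τ) (hx.2 j))
    have e1 := Real.mul_self_sqrt (b2_nonneg (V := V) (τ := τ) (j := j) (x := x))
    have e2 := Real.mul_self_sqrt (by linarith : 0 ≤ 1 + Th V τ j x)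
    have hs : 0 < √(1 + Th V τ j x) := Real.sqrt_pos.2 (by linarith)
    have hsc := mV_le_scale I.ne1 hτ hx
    beta_reduce
    rw [wt, pow_one, kap, gn, show V.card * (√(Th V τ j x) * (√(1 + Th V τ j x))⁻¹ *
      (mV V x)⁻¹) = V.card * (√(Th V τ j x) * (√(1 + Th V τ j x))⁻¹) * (mV V x)⁻¹ by ring,
      le_mul_inv_iff₀ hm]
    have e3 : 1 * (√(b2 V τ j x) * (1 + Th V τ j x) * (b2 V τ j x * (1 + Th V τ j x) ^ 2)⁻¹) *
        (√(Th V τ j x) * (√(mu2 V τ j x))⁻¹) = √(Th V τ j x) / (√(b2 V τ j x) *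
          √(mu2 V τ j x) * (√(1 + Th V τ j x) * √(1 + Th V τ j x))) := by
      rw [e2]
      nth_rw 2 [← e1]
      have : (1 + Th V τ j x) ≠ 0 := by linarith
      field_simp
    rw [e3, div_mul_eq_mul_div, div_le_iff₀ (by positivity)]
    calc √(Th V τ j x) * mV V x
        ≤ √(Th V τ j x) * (V.card * (√(b2 V τ j x) * √(mu2 V τ j x) * √(1 + Th V τ j x))) := by
          gcongr
      _ = _ := by field_simp
  · intro x hx
    rw [Hf, h.2 x hx, zero_mul]

/-- The remainder amplitude has size `gn ^ 4`, hence at most `gn`. -/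
lemma adm_R (I : Inst V g r c τ j) (hτ : ∀ y ∈ τ, y j ≤ 1) (h : Amp r' φ) :
    Adm r r' (wt V (gn V τ j) 0) (Rf V g τ j φ) := by
  refine ⟨((SS.of_contDiff h.1).mul ((ss_b2.mul ((ss_Th I.ne1).mul (ss_Th I.ne1))).mul
    (ks_Qinv I hτ).1)).mono zero_le_one fun x hx => ?_, ?_⟩
  · have hb := b2_pos_Wx (r := r) I.ne1 x hx
    have hT := Th_nonneg (V := V) (τ := τ) (j := j) (x := x)
    have hs : 0 < √(1 + Th V τ j x) := Real.sqrt_pos.2 (by linarith)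
    have e2 := Real.mul_self_sqrt (by linarith : 0 ≤ 1 + Th V τ j x)
    have e1 := Real.mul_self_sqrt hT
    have e3 : 1 * (b2 V τ j x * (Th V τ j x * Th V τ j x) *
        (b2 V τ j x * (1 + Th V τ j x) ^ 2)⁻¹) = gn V τ j x ^ 4 := by
      rw [gn, mul_pow, inv_pow, show √(Th V τ j x) ^ 4 = Th V τ j x * Th V τ j x by
        rw [← Real.sq_sqrt hT]; simp only [Real.sqrt_sq (Real.sqrt_nonneg _)]; ring]
      rw [show √(1 + Th V τ j x) ^ 4 = (√(1 + Th V τ j x) * √(1 + Th V τ j x)) ^ 2 by ring, e2]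
      field_simp
    rw [e3, wt, pow_zero, one_mul, mul_one]
    exact pow_le_of_le_one gn_nonneg gn_le_one (by norm_num)
  · intro x hx
    rw [Rf, h.2 x hx, zero_mul]

end UnstableSymbols2


/-! ### Integration by parts in the unstable variable -/

section UnstableParts

variable {n : ℕ} {V : Finset (Fin n → ℕ)} {τ : Set (Fin n → ℝ)} {j : Fin n}
  {g : (Fin n → ℕ) → (Fin n → ℝ) → ℝ} {r r' c σ : ℝ} {φ : (Fin n → ℝ) → ℝ}

lemma continuous_Th_line (x : Fin n → ℝ) :
    Continuous fun t => Th V τ j (Function.update x j t) := by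
  simp only [Th, tv, mu2, a2_update, b2_update, xh_update, Function.update_self]
  fun_prop

lemma continuous_Qf_line (I : Inst V g r c τ j) (x : Fin n → ℝ) :
    Continuous fun t => Qf V g τ j (Function.update x j t) := by
  have h1 : Continuous fun t => Dd j (fV V g) (Function.update x j t) :=
    (contDiff_Dd j (contDiff_fV (V := V) I.smooth)).continuous.comp (continuous_const.update j continuous_id)
  have h2 := continuous_Th_line (V := V) (τ := τ) (j := j) x
  simp only [Qf, b2_update]
  exact (h1.mul h1).add (continuous_const.mul (h2.mul h2))

/-- The lower bound for the denominator persists on the hyperplane `x_j = 0`. -/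
lemma Qf_pos_line (I : Inst V g r c τ j) (hτ : ∀ y ∈ τ, y j ≤ 1) {x : Fin n → ℝ}
    (hx : ∀ k ≠ j, x k ≠ 0) (hr0 : 0 < r) (hxr : ∀ k ≠ j, |x k| < r) :
    0 < Qf V g τ j (Function.update x j 0) := by
  obtain ⟨C, hC, h⟩ := Q_low I hτ
  have hb : 0 < b2 V τ j x := b2_pos I.ne1 hx
  have hc : Continuous fun t => Qf V g τ j (Function.update x j t) -
      C * (b2 V τ j x * (1 + Th V τ j (Function.update x j t)) ^ 2) :=
    (continuous_Qf_line I x).sub (continuous_const.mul (continuous_const.mul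
      ((continuous_const.add (continuous_Th_line x)).pow 2)))
  have h0 : 0 ≤ Qf V g τ j (Function.update x j 0) -
      C * (b2 V τ j x * (1 + Th V τ j (Function.update x j 0)) ^ 2) := by
    refine ge_of_tendsto ((hc.tendsto 0).mono_left (nhdsWithin_le_nhds (s := {(0 : ℝ)}ᶜ))) ?_
    have h1 : ∀ᶠ u : ℝ in 𝓝 0, |u| < r :=
      (continuous_abs.tendsto (0 : ℝ)).eventually_lt_const (by simpa using hr0)
    filter_upwards [h1.filter_mono nhdsWithin_le_nhds, self_mem_nhdsWithin] with t ht ht0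
    have hW : Function.update x j t ∈ Wx r := by
      refine ⟨fun k => ?_, fun k => ?_⟩ <;> by_cases hk : k = j
      · subst hk; simpa using ht
      · simpa [hk] using hxr k hk
      · subst hk; simpa using ht0
      · simpa [hk] using hx k hk
    have := h _ hW
    rw [b2_update] at this
    linarith
  have h2 := Th_nonneg (V := V) (τ := τ) (j := j) (x := Function.update x j 0)
  have : 0 < C * (b2 V τ j x * (1 + Th V τ j (Function.update x j 0)) ^ 2) := by positivity
  linarith

lemma suppIn_Hf (h : Amp r' φ) : SuppIn r' (Hf V g τ j φ) := fun x hx => by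
  rw [Hf, h.2 x hx, zero_mul]

/-- Along lines in the direction `x_j`, the amplitude is continuous across `x_j = 0`. -/
lemma Hf_line (I : Inst V g r c τ j) (hτ : ∀ y ∈ τ, y j ≤ 1) (hr : r' < r) (h : Amp r' φ)
    {x : Fin n → ℝ} (hx : ∀ k ≠ j, x k ≠ 0) :
    Continuous (fun t => Hf V g τ j φ (Function.update x j t)) ∧
      ∀ t ≠ 0, HasDerivAt (fun t => Hf V g τ j φ (Function.update x j t))
        (Dd j (Hf V g τ j φ) (Function.update x j t)) t := by
  have hs := suppIn_Hf (V := V) (g := g) (τ := τ) (j := j) h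
  by_cases hxr : ∃ k, k ≠ j ∧ r' < |x k|
  · obtain ⟨k, hk, hkr⟩ := hxr
    have h0 : ∀ t, Hf V g τ j φ (Function.update x j t) = 0 := fun t =>
      hs _ ⟨k, by simpa [hk] using hkr⟩
    have h0' : ∀ t, Dd j (Hf V g τ j φ) (Function.update x j t) = 0 := fun t =>
      hs.dd j _ ⟨k, by simpa [hk] using hkr⟩
    simp only [h0, h0']
    exact ⟨continuous_const, fun t _ => hasDerivAt_const t _⟩
  · push Not at hxr
    have hD : ∀ t ≠ 0, HasDerivAt (fun t => Hf V g τ j φ (Function.update x j t))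
        (Dd j (Hf V g τ j φ) (Function.update x j t)) t := by
      intro t ht
      by_cases htr : |t| < r
      · have hW : Function.update x j t ∈ Wx r := by
          refine ⟨fun k => ?_, fun k => ?_⟩ <;> by_cases hk : k = j
          · subst hk; simpa using htr
          · simpa [hk] using (hxr k hk).trans_lt hr
          · subst hk; simpa using ht
          · simpa [hk] using hx k hk
        have := hasDerivAt_line ((ss_H I hτ h.1).1.diff hW) j
        simpa using this
      · push Not at htr
        have hz : ∀ᶠ u in 𝓝 t, Hf V g τ j φ (Function.update x j u) = 0 := by
          have : ∀ᶠ u in 𝓝 t, r' < |u| :=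
            (continuous_abs.tendsto t).eventually_const_lt (hr.trans_le htr)
          filter_upwards [this] with u hu
          exact hs _ ⟨j, by simpa using hu⟩
        rw [hs.dd j (Function.update x j t) ⟨j, by simpa using hr.trans_le htr⟩]
        exact (hasDerivAt_const t (0 : ℝ)).congr_of_eventuallyEq hz
    refine ⟨continuous_iff_continuousAt.2 fun t => ?_, hD⟩
    by_cases ht : t = 0
    · subst ht
      have hu : Continuous fun t : ℝ => Function.update x j t :=
        continuous_const.update j continuous_id
      have h1 : Continuous fun t => Dd j (fV V g) (Function.update x j t) :=
        (contDiff_Dd j (contDiff_fV (V := V) I.smooth)).continuous.comp hu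
      have h2 : Continuous fun t => φ (Function.update x j t) := h.1.continuous.comp hu
      exact h2.continuousAt.mul (h1.continuousAt.mul ((continuous_Qf_line I x).continuousAt.inv₀
        (Qf_pos_line I hτ hx I.r_pos fun k hk => (hxr k hk).trans_lt hr).ne'))
    · exact (hD t ht).continuousAt

/-- The result of integrating by parts once in the unstable variable. -/
lemma unstable_parts (I : Inst V g r c τ j) (hτ : ∀ y ∈ τ, y j ≤ 1) (hσ : σ = 1 ∨ σ = -1)
    (hr : r' < r) (h : Amp r' φ) {s : ℂ} (hs : 0 < s.re) :
    (s + 1) * FF σ (fV V g) s φ = (s + 1) * FF σ (fV V g) s (Rf V g τ j φ) -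
      σ * FF σ (fV V g) (s + 1) (Dd j (Hf V g τ j φ)) := by
  have hG0 : ∀ x ∈ Wx r, 0 ≤ gn V τ j x := fun _ _ => gn_nonneg
  have hG1 : ∀ x ∈ Wx r, gn V τ j x ≤ 1 := fun _ _ => gn_le_one
  have hs1 : 0 < (s + 1).re := by simp; linarith
  have i1 := I.toBase.integrable_amp hσ hr h hs
  have i2 := I.toBase.integrable hσ hr hG0 hG1 (adm_R I hτ h) hs (by simpa using hs.le)
  have i3 := I.toBase.integrable hσ hr hG0 hG1 (adm_DH I hτ h) hs1 (by simp; linarith)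
  have hfd := contDiff_fV (V := V) I.smooth
  have hae : ∀ᵐ x : Fin n → ℝ, ((φ x : ℂ) - Rf V g τ j φ x) =
      (Dd j (fV V g) x : ℂ) * Hf V g τ j φ x := by
    filter_upwards [ae_ne_zero (n := n)] with x hx
    by_cases hxr : ∃ k, r' < |x k|
    · rw [Hf, Rf, h.2 x hxr]; simp
    · push Not at hxr
      have hW : x ∈ Wx r := ⟨fun i => (hxr i).trans_lt hr, hx⟩
      obtain ⟨C, hC, hQ⟩ := Q_low I hτ
      have hQ0 : Qf V g τ j x ≠ 0 :=
        ((mul_pos hC (weight_pos I.ne1 x hW)).trans_le (hQ x hW)).ne'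
      rw [← Complex.ofReal_sub, ← Complex.ofReal_mul, Hf, Rf]
      congr 1
      field_simp
      rw [Qf]; ring
  have hz : ∫ x, ((s + 1) * σ * pw σ s (fV V g x) * Dd j (fV V g) x * Hf V g τ j φ x +
      pw σ (s + 1) (fV V g x) * (Dd j (Hf V g τ j φ) x : ℂ)) = 0 := by
    refine integral_partial_eq_zero j (B := |r'| + 1)
      (h := fun x => pw σ (s + 1) (fV V g x) * (Hf V g τ j φ x : ℂ)) ?_ ?_ ?_
    · intro x hx
      rw [suppIn_Hf h x ⟨j, by linarith [le_abs_self r']⟩, Complex.ofReal_zero, mul_zero]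
    · intro x hx
      obtain ⟨hc, hd⟩ := Hf_line I hτ hr h hx
      have hu : Continuous fun t : ℝ => Function.update x j t :=
        continuous_const.update j continuous_id
      refine ⟨((continuous_pw σ hs1).comp (hfd.continuous.comp hu)).mul
        (Complex.continuous_ofReal.comp hc), fun t ht => ?_⟩
      have e1 : HasDerivAt (fun t => fV V g (Function.update x j t))
          (Dd j (fV V g) (Function.update x j t)) t := by
        have := hasDerivAt_line ((hfd.differentiable (by simp)) (Function.update x j t)) j
        simpa using this
      have e2 : HasDerivAt (pw σ (s + 1)) ((s + 1) * σ * pw σ (s + 1 - 1)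
          (fV V g (Function.update x j t))) (fV V g (Function.update x j t)) :=
        hasDerivAt_pw hσ (by simp; linarith) _
      rw [add_sub_cancel_right] at e2
      have e3 := (e2.scomp t e1).mul (hd t ht).ofReal_comp
      refine e3.congr_deriv ?_
      simp only [Function.comp, Complex.real_smul]
      ring
    · refine Integrable.add ?_ i3
      refine ((i1.sub i2).const_mul ((s + 1) * σ)).congr ?_
      filter_upwards [hae] with x hx
      simp only [Pi.sub_apply]
      rw [← mul_sub, hx]; ring
  have hsum : ∫ x, ((s + 1) * σ * pw σ s (fV V g x) * Dd j (fV V g) x * Hf V g τ j φ x +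
      pw σ (s + 1) (fV V g x) * (Dd j (Hf V g τ j φ) x : ℂ)) =
      (s + 1) * σ * (FF σ (fV V g) s φ - FF σ (fV V g) s (Rf V g τ j φ)) +
        FF σ (fV V g) (s + 1) (Dd j (Hf V g τ j φ)) := by
    have i4 : Integrable fun x => (s + 1) * σ * (pw σ s (fV V g x) * (φ x : ℂ) -
        pw σ s (fV V g x) * (Rf V g τ j φ x : ℂ)) := (i1.sub i2).const_mul _
    simp only [FF]
    rw [← integral_sub i1 i2, ← integral_const_mul, ← integral_add i4 i3]
    refine integral_congr_ae ?_
    filter_upwards [hae] with x hx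
    rw [← mul_sub, hx]; ring
  rw [hsum] at hz
  have hσ2 : (σ : ℂ) * σ = 1 := by rcases hσ with rfl | rfl <;> norm_num
  linear_combination (σ : ℂ) * hz - (s + 1) * (FF σ (fV V g) s φ -
    FF σ (fV V g) s (Rf V g τ j φ)) * hσ2

end UnstableParts


/-! ### Continuation past the expected pole -/

section Representation

variable {n : ℕ} {V : Finset (Fin n → ℕ)} {τ : Set (Fin n → ℝ)} {j : Fin n}
  {g : (Fin n → ℕ) → (Fin n → ℝ) → ℝ} {r r' c σ : ℝ} {φ : (Fin n → ℝ) → ℝ}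

/-- The integral expressed, up to a polynomial factor without zeros off the integers, by two
integrals which carry the gain `gn` and in which the exponent has been raised by at least `N`. -/
lemma representation (I : Inst V g r c τ j) (hτ : ∀ y ∈ τ, y j ≤ 1) (hσ : σ = 1 ∨ σ = -1)
    (hr : r' < r) (h : Amp r' φ) (N : ℕ) : ∃ Ψ₁ Ψ₂ : (Fin n → ℝ) → ℝ,
    Adm r r' (wt V (gn V τ j) N) Ψ₁ ∧ Adm r r' (wt V (gn V τ j) (1 + N)) Ψ₂ ∧
    ∀ s : ℂ, 0 < s.re →
      (s + 1) * (∏ i ∈ Finset.range N, (s + i + 1)) * (∏ i ∈ Finset.range N, (s + 1 + i + 1)) *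
          FF σ (fV V g) s φ =
        (s + 1) * (∏ i ∈ Finset.range N, (s + 1 + i + 1)) * FF σ (fV V g) (s + N) Ψ₁ -
          σ * (∏ i ∈ Finset.range N, (s + i + 1)) * FF σ (fV V g) (s + (1 + N : ℕ)) Ψ₂ := by
  have hG0 : ∀ x ∈ Wx r, 0 ≤ gn V τ j x := fun _ _ => gn_nonneg
  have hG1 : ∀ x ∈ Wx r, gn V τ j x ≤ 1 := fun _ _ => gn_le_one
  obtain ⟨Ψ₁, h1, e1⟩ := I.toBase.reg hσ hr hG0 hG1 (adm_R I hτ h) N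
  obtain ⟨Ψ₂, h2, e2⟩ := I.toBase.reg hσ hr hG0 hG1 (adm_DH I hτ h) N
  refine ⟨Ψ₁, Ψ₂, by simpa using h1, h2, fun s hs => ?_⟩
  have e0 := unstable_parts I hτ hσ hr h hs
  have e1 := e1 s hs
  have e2 := e2 s hs
  simp only [Nat.cast_zero, add_zero, Nat.cast_one] at e1 e2
  rw [show s + ((1 + N : ℕ) : ℂ) = s + 1 + N by push_cast; ring, ← e1, ← e2]
  linear_combination (∏ i ∈ Finset.range N, (s + i + 1)) *
    (∏ i ∈ Finset.range N, (s + 1 + i + 1)) * e0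

end Representation

/-! ### Integrals of exponentials of piecewise linear functions -/

section ExpIntegrals

lemma integral_exp_abs {c : ℝ} (hc : 0 < c) :
    Integrable (fun t : ℝ => Real.exp (-(c * |t|))) ∧ ∫ t : ℝ, Real.exp (-(c * |t|)) = 2 / c := by
  have h2 : ∫ x in Set.Ioi (0 : ℝ), Real.exp (-(c * x)) = 1 / c := by
    have := integral_exp_mul_Ioi (a := -c) (by linarith) 0
    simp only [neg_mul] at this
    rw [this]; simp
  have h3 := integral_comp_abs (f := fun x => Real.exp (-(c * x)))
  rw [h2, mul_one_div] at h3
  exact ⟨Integrable.of_integral_ne_zero (by rw [h3]; positivity), h3⟩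

lemma lintegral_exp_sum {n : ℕ} {c : Fin n → ℝ} (hc : ∀ i, 0 < c i) :
    ∫⁻ y : Fin n → ℝ, ENNReal.ofReal (Real.exp (-∑ i, c i * |y i|)) =
      ENNReal.ofReal (∏ i, 2 / c i) := by
  have e : ∀ y : Fin n → ℝ, Real.exp (-∑ i, c i * |y i|) = ∏ i, Real.exp (-(c i * |y i|)) :=
    fun y => by rw [← Finset.sum_neg_distrib, Real.exp_sum]
  have hi : Integrable fun y : Fin n → ℝ => ∏ i, Real.exp (-(c i * |y i|)) :=
    Integrable.fintype_prod fun i => (integral_exp_abs (hc i)).1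
  simp only [e]
  rw [← ofReal_integral_eq_lintegral_ofReal hi
    (Eventually.of_forall fun _ => Finset.prod_nonneg fun _ _ => (Real.exp_pos _).le),
    integral_fintype_prod_volume_eq_prod (fun i (t : ℝ) => Real.exp (-(c i * |t|)))]
  congr 1
  exact Finset.prod_congr rfl fun i _ => (integral_exp_abs (hc i)).2

/-- A linear change of variables reduces the integral to a product of one-dimensional ones. -/
lemma lintegral_exp_linear {n : ℕ} {b : Fin n → Fin n → ℝ} (hb : LinearIndependent ℝ b) :
    ∃ D : ℝ, 0 ≤ D ∧ ∀ c : Fin n → ℝ, (∀ i, 0 < c i) →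
      ∫⁻ u : Fin n → ℝ, ENNReal.ofReal (Real.exp (-∑ i, c i * |dotR u (b i)|)) =
        ENNReal.ofReal (D * ∏ i, 2 / c i) := by
  set M : Matrix (Fin n) (Fin n) ℝ := Matrix.of b
  have hM : IsUnit M := Matrix.linearIndependent_rows_iff_isUnit.1 hb
  have hdet : LinearMap.det (Matrix.toLin' M) ≠ 0 := by
    rw [LinearMap.det_toLin']
    exact ((Matrix.isUnit_iff_isUnit_det M).1 hM).ne_zero
  refine ⟨|(LinearMap.det (Matrix.toLin' M))⁻¹|, abs_nonneg _, fun c hc => ?_⟩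
  have hmeas : Measurable (Matrix.toLin' M) :=
    (LinearMap.continuous_of_finiteDimensional _).measurable
  have e : ∀ u : Fin n → ℝ, ENNReal.ofReal (Real.exp (-∑ i, c i * |dotR u (b i)|)) =
      (fun y : Fin n → ℝ => ENNReal.ofReal (Real.exp (-∑ i, c i * |y i|)))
        (Matrix.toLin' M u) := fun u => by
    have : ∀ i, Matrix.toLin' M u i = dotR u (b i) := fun i => by
      rw [Matrix.toLin'_apply, Matrix.mulVec, dotProduct, dotR]
      exact Finset.sum_congr rfl fun k _ => mul_comm _ _
    simp only [this]
  rw [lintegral_congr e, ← lintegral_map (f := fun y : Fin n → ℝ =>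
    ENNReal.ofReal (Real.exp (-∑ i, c i * |y i|))) (by fun_prop) hmeas, Real.map_linearMap_volume_pi_eq_smul_volume_pi hdet,
    lintegral_smul_measure, lintegral_exp_sum hc, smul_eq_mul,
    ← ENNReal.ofReal_mul (abs_nonneg _)]

/-- Logarithmic coordinates: the weight `exp (sm (lg x))` is the Jacobian, and there are `2 ^ n`
orthants. -/
lemma lintegral_Wx_le {n : ℕ} (r : ℝ) (E : (Fin n → ℝ) → ℝ) (hE : ∀ u, 0 ≤ E u) :
    ∫⁻ x in Wx r, ENNReal.ofReal (Real.exp (sm (lg x)) * E (lg x)) ≤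
      2 ^ n * ∫⁻ u, ENNReal.ofReal (E u) := by
  set sg : Bool → ℝ := fun b => if b then 1 else -1
  have hsg : ∀ b, |sg b| = 1 := fun b => by cases b <;> simp [sg]
  set T : (Fin n → Bool) → (Fin n → ℝ) → Fin n → ℝ := fun ε u i => sg (ε i) * Real.exp (-u i)
  set T' : (Fin n → Bool) → (Fin n → ℝ) → (Fin n → ℝ) →L[ℝ] (Fin n → ℝ) := fun ε u =>
    ContinuousLinearMap.pi fun i => (sg (ε i) * -Real.exp (-u i)) • ContinuousLinearMap.proj i
  have hlg : ∀ ε u, lg (T ε u) = u := fun ε u => by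
    funext i
    simp only [lg, T, abs_mul, hsg, one_mul, Real.abs_exp, Real.log_exp, neg_neg]
  have hT : ∀ ε u, HasFDerivAt (T ε) (T' ε u) u := fun ε u => by
    refine hasFDerivAt_pi.2 fun i => ?_
    have h1 : HasFDerivAt (fun u : Fin n → ℝ => u i) (ContinuousLinearMap.proj i) u :=
      (ContinuousLinearMap.proj (R := ℝ) (φ := fun _ : Fin n => ℝ) i).hasFDerivAt
    have h2 := (h1.neg.exp).const_mul (sg (ε i))
    refine h2.congr_fderiv ?_
    ext v
    simp
    ring
  have hinj : ∀ ε, Set.InjOn (T ε) Set.univ := fun ε u _ v _ huv => by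
    rw [← hlg ε u, ← hlg ε v, huv]
  have hdet : ∀ ε u, |(T' ε u).det| = Real.exp (-sm u) := fun ε u => by
    have : ((T' ε u : (Fin n → ℝ) →L[ℝ] (Fin n → ℝ)) : (Fin n → ℝ) →ₗ[ℝ] (Fin n → ℝ)) =
        Matrix.toLin' (Matrix.diagonal fun i => sg (ε i) * -Real.exp (-u i)) := by
      ext v i
      simp [T', Matrix.mulVec_diagonal]
    rw [ContinuousLinearMap.det, this, LinearMap.det_toLin', Matrix.det_diagonal, Finset.abs_prod,
      sm, ← Finset.sum_neg_distrib, Real.exp_sum]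
    exact Finset.prod_congr rfl fun i _ => by rw [abs_mul, hsg, abs_neg, Real.abs_exp, one_mul]
  have hcov : (Wx r : Set (Fin n → ℝ)) ⊆ ⋃ ε, T ε '' Set.univ := fun x hx => by
    refine Set.mem_iUnion.2 ⟨fun i => decide (0 < x i), lg x, Set.mem_univ _, ?_⟩
    funext i
    simp only [T, lg, neg_neg, sg]
    rw [Real.exp_log (abs_pos.2 (hx.2 i))]
    rcases lt_or_gt_of_ne (hx.2 i) with h | h
    · simp [h.le, not_lt.2 h.le, abs_of_neg h]
    · simp [h, abs_of_pos h]
  calc ∫⁻ x in Wx r, ENNReal.ofReal (Real.exp (sm (lg x)) * E (lg x))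
      ≤ ∫⁻ x in ⋃ ε, T ε '' Set.univ, ENNReal.ofReal (Real.exp (sm (lg x)) * E (lg x)) :=
        lintegral_mono_set hcov
    _ ≤ ∑' ε, ∫⁻ x in T ε '' Set.univ, ENNReal.ofReal (Real.exp (sm (lg x)) * E (lg x)) :=
        lintegral_iUnion_le _ _
    _ = ∑' _ : Fin n → Bool, ∫⁻ u, ENNReal.ofReal (E u) := by
        refine tsum_congr fun ε => ?_
        rw [lintegral_image_eq_lintegral_abs_det_fderiv_mul volume MeasurableSet.univ
          (fun u _ => (hT ε u).hasFDerivWithinAt) (hinj ε), Measure.restrict_univ]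
        refine lintegral_congr fun u => ?_
        rw [hlg, hdet, ← ENNReal.ofReal_mul (Real.exp_pos _).le, ← mul_assoc, ← Real.exp_add]
        simp
    _ = _ := by rw [tsum_fintype]; simp

end ExpIntegrals


section CoordBasis

variable {n : ℕ}

/-- A linearly independent set is completed to a basis by coordinate vectors. -/
lemma exists_coord_basis {s : Finset (Fin n → ℝ)} (hs : LinearIndepOn ℝ id (s : Set (Fin n → ℝ))) :
    ∃ b : Fin n → Fin n → ℝ, LinearIndependent ℝ b ∧
      (Finset.univ.filter fun k => b k ∈ s).card = s.card ∧
      ∀ k, b k ∈ s ∨ ∃ i, b k = Pi.single i 1 := by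
  set t : Set (Fin n → ℝ) := s ∪ Set.range fun i => Pi.single i (1 : ℝ)
  have hst : (s : Set (Fin n → ℝ)) ⊆ t := Set.subset_union_left
  set B := hs.extend hst
  have hBt : B ⊆ t := hs.extend_subset hst
  have hsB : (s : Set (Fin n → ℝ)) ⊆ B := hs.subset_extend hst
  have hBi : LinearIndepOn ℝ id B := hs.linearIndepOn_extend hst
  have hspan : ⊤ ≤ Submodule.span ℝ (Set.range ((↑) : B → Fin n → ℝ)) := by
    rw [Subtype.range_coe]
    have h1 : t ⊆ Submodule.span ℝ B := by
      have := hs.subset_span_extend hst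
      simpa using this
    have h2 : Submodule.span ℝ (Set.range fun i : Fin n => Pi.single i (1 : ℝ)) = ⊤ := by
      rw [← (Pi.basisFun ℝ (Fin n)).span_eq]
      congr 2
      funext i
      simp
    rw [← h2]
    exact Submodule.span_le.2 ((Set.subset_union_right).trans h1)
  have hBi' : LinearIndependent ℝ ((↑) : B → Fin n → ℝ) := hBi
  set bas : Module.Basis B ℝ (Fin n → ℝ) := Module.Basis.mk hBi' hspan
  haveI : Fintype B := FiniteDimensional.fintypeBasisIndex bas
  have hcard : Fintype.card B = n := by
    rw [← Module.finrank_eq_card_basis bas]; simp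
  set e : Fin n ≃ B := (Fintype.equivFinOfCardEq hcard).symm
  refine ⟨fun k => (e k : Fin n → ℝ), hBi'.comp e e.injective, ?_, fun k => ?_⟩
  · refine Finset.card_bij (fun k _ => (e k : Fin n → ℝ)) (fun k hk => (Finset.mem_filter.1 hk).2)
      (fun k _ l _ h => e.injective (Subtype.ext h)) fun v hv => ?_
    exact ⟨e.symm ⟨v, hsB hv⟩, by simpa using hv, by simp⟩
  · rcases hBt (e k).2 with h | ⟨i, hi⟩
    · exact Or.inl h
    · exact Or.inr ⟨i, hi.symm⟩

/-- Each direction missing from `s` costs a factor `η⁻¹`. -/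
lemma lintegral_face {s : Finset (Fin n → ℝ)} (hs : LinearIndepOn ℝ id (s : Set (Fin n → ℝ)))
    {δ : ℝ} (hδ : 0 < δ) : ∃ D : ℝ, 0 ≤ D ∧ ∀ η : ℝ, 0 < η →
      ∫⁻ u : Fin n → ℝ, ENNReal.ofReal
        (Real.exp (-(δ * ∑ b ∈ s, |dotR u b|) - η * ∑ i, |u i|)) ≤
        ENNReal.ofReal (D * η⁻¹ ^ (n - s.card)) := by
  obtain ⟨b, hb, hcard, hbs⟩ := exists_coord_basis hs
  obtain ⟨D, hD, h⟩ := lintegral_exp_linear hb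
  refine ⟨D * ((2 / δ) ^ s.card * 2 ^ (n - s.card)), by positivity, fun η hη => ?_⟩
  have hinj := hb.injective
  have hcard' : (Finset.univ.filter fun k => ¬ b k ∈ s).card = n - s.card := by
    have := Finset.card_filter_add_card_filter_not (s := (Finset.univ : Finset (Fin n)))
      (fun k => b k ∈ s)
    rw [hcard, Finset.card_univ, Fintype.card_fin] at this
    omega
  have h1 := h (fun k => if b k ∈ s then δ else η) fun k => by split_ifs <;> assumption
  have e1 : ∏ k, 2 / (if b k ∈ s then δ else η) =
      (2 / δ) ^ s.card * 2 ^ (n - s.card) * η⁻¹ ^ (n - s.card) := by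
    have : ∀ k, 2 / (if b k ∈ s then δ else η) = if b k ∈ s then 2 / δ else 2 / η := fun k => by
      split_ifs <;> rfl
    simp only [this]
    rw [Finset.prod_ite, Finset.prod_const, Finset.prod_const, hcard, hcard', div_eq_mul_inv 2 η,
      mul_pow, mul_assoc]
  rw [e1] at h1
  rw [mul_assoc D, ← h1]
  refine lintegral_mono fun u => ENNReal.ofReal_le_ofReal (Real.exp_le_exp.2 ?_)
  have e2 : ∑ k, (if b k ∈ s then δ else η) * |dotR u (b k)| =
      δ * ∑ k with b k ∈ s, |dotR u (b k)| + η * ∑ k with ¬ b k ∈ s, |dotR u (b k)| := by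
    have : ∀ k, (if b k ∈ s then δ else η) * |dotR u (b k)| =
        if b k ∈ s then δ * |dotR u (b k)| else η * |dotR u (b k)| := fun k => by
      split_ifs <;> rfl
    simp only [this]
    rw [Finset.sum_ite, Finset.mul_sum, Finset.mul_sum]
  have e3 : ∑ k with b k ∈ s, |dotR u (b k)| ≤ ∑ v ∈ s, |dotR u v| := by
    rw [← Finset.sum_image (f := fun v => |dotR u v|) (g := b) fun _ _ _ _ h => hinj h]
    exact Finset.sum_le_sum_of_subset_of_nonneg
      (fun v hv => by
        obtain ⟨k, hk, rfl⟩ := Finset.mem_image.1 hv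
        exact (Finset.mem_filter.1 hk).2) fun _ _ _ => abs_nonneg _
  have e4 : ∑ k with ¬ b k ∈ s, |dotR u (b k)| ≤ ∑ i, |u i| := by
    rw [← Finset.sum_image (f := fun v => |dotR u v|) (g := b) fun _ _ _ _ h => hinj h]
    have e5 : ∑ i, |u i| = ∑ v ∈ Finset.univ.image fun i : Fin n => (Pi.single i 1 : Fin n → ℝ),
        |dotR u v| := by
      rw [Finset.sum_image fun i _ k _ h => by
        by_contra hik
        have := congrFun h i
        rw [Pi.single_eq_same, Pi.single_eq_of_ne hik] at this
        exact one_ne_zero this]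
      exact Finset.sum_congr rfl fun i _ => by rw [dotR_single_right]
    rw [e5]
    refine Finset.sum_le_sum_of_subset_of_nonneg (fun v hv => ?_) fun _ _ _ => abs_nonneg _
    obtain ⟨k, hk, rfl⟩ := Finset.mem_image.1 hv
    obtain ⟨i, hi⟩ := (hbs k).resolve_left (Finset.mem_filter.1 hk).2
    exact Finset.mem_image.2 ⟨i, Finset.mem_univ _, hi.symm⟩
  rw [e2]
  have e6 := mul_le_mul_of_nonneg_left e3 hδ.le
  have e7 := mul_le_mul_of_nonneg_left e4 hη.le
  linarith

/-- The face spans its dimension: a linearly independent set of differences. -/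
lemma exists_face_basis {τ : Set (Fin n → ℝ)} {p : Fin n → ℝ} (hp : p ∈ τ) :
    ∃ s : Finset (Fin n → ℝ), LinearIndepOn ℝ id (s : Set (Fin n → ℝ)) ∧ s.card = faceDim τ ∧
      (∀ b ∈ s, p + b ∈ τ) ∧ Submodule.span ℝ (s : Set (Fin n → ℝ)) = vectorSpan ℝ τ := by
  obtain ⟨b, hb, hspan, hli⟩ := exists_linearIndependent ℝ ((· -ᵥ p) '' τ)
  rw [← vectorSpan_eq_span_vsub_set_right ℝ hp] at hspan
  have hfin : b.Finite := LinearIndependent.setFinite hli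
  refine ⟨hfin.toFinset, by rw [hfin.coe_toFinset]; exact hli, ?_, fun v hv => ?_, by simpa using hspan⟩
  · rw [faceDim, ← hspan]
    haveI := hfin.fintype
    rw [finrank_span_set_eq_card hli]
    congr 1
    ext; simp
  · obtain ⟨y, hy, rfl⟩ := hb (hfin.mem_toFinset.1 hv)
    simpa using hy

end CoordBasis


/-! ### Exponential bounds for the gain -/

/-- The defect of the functional `u` at the point `t₀ (1, …, 1)`. -/
def df {n : ℕ} (V : Finset (Fin n → ℕ)) (t₀ : ℝ) (u : Fin n → ℝ) : ℝ := t₀ * sm u - NN V u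

/-- The directions of decay of the gain: the unstable variable, and the exponents off the face
relative to its distinguished point. -/
def ldir {n : ℕ} (t₀ : ℝ) (j : Fin n) : Option (Fin n → ℕ) → Fin n → ℝ
  | none => Pi.single j 1
  | some v => cv v - fun _ => t₀

section Gain

variable {n : ℕ} {S : Set (Fin n → ℕ)} {V : Finset (Fin n → ℕ)} {τ : Set (Fin n → ℝ)} {j : Fin n}
  {t₀ r : ℝ}

lemma df_nonneg (h : Dom S V) (ht : (fun _ => t₀) ∈ newtonPolyhedron S) {u : Fin n → ℝ}
    (hu : ∀ i, 0 ≤ u i) : 0 ≤ df V t₀ u := by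
  have := h.NN_le_of_mem hu ht
  rw [dotR_const] at this
  rw [df]; linarith

lemma dotR_ldir_some (u : Fin n → ℝ) (v : Fin n → ℕ) :
    dotR u (ldir t₀ j (some v)) = dotR u (cv v) - t₀ * sm u := by
  rw [ldir, dotR_sub_right, dotR_const]

/-- The directions of decay are transversal to the face. -/
lemma ldir_not_mem (h : Dom S V) (hτ : IsFaceOf (newtonPolyhedron S) τ) (ht : (fun _ => t₀) ∈ τ)
    (hτj : ∀ y ∈ τ, y j ≤ 1) (ht0 : 0 < t₀) {o : Option (Fin n → ℕ)}
    (ho : o ∈ Finset.insertNone (VB V τ j)) : ldir t₀ j o ∉ vectorSpan ℝ τ := by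
  obtain ⟨w, hw, rfl⟩ := hτ
  have hker : ∀ y ∈ vectorSpan ℝ (traceFace (newtonPolyhedron S) w), dotR w y = 0 := by
    intro y hy
    rw [vectorSpan_def] at hy
    induction hy using Submodule.span_induction with
    | mem y hy =>
      obtain ⟨a, ha, b, hb, rfl⟩ := hy
      simp only [vsub_eq_sub]
      rw [dotR_sub_right, le_antisymm (ha.2 b hb.1) (hb.2 a ha.1), sub_self]
    | zero => simp [dotR]
    | add a b _ _ ha hb => rw [dotR_add_right, ha, hb, add_zero]
    | smul c a _ ha => rw [dotR_smul_right, ha, mul_zero]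
  intro hmem
  have h0 := hker _ hmem
  cases o with
  | none =>
    rw [ldir, dotR_single_right] at h0
    have hy : (fun _ => t₀) + (Pi.single j (2 : ℝ) : Fin n → ℝ) ∈
        traceFace (newtonPolyhedron S) w := by
      refine ⟨h.mem_of_le ht.1 fun i => ?_, fun z hz => ?_⟩
      · have : (0 : Fin n → ℝ) ≤ Pi.single j (2 : ℝ) := by simp
        have := this i
        simp only [Pi.add_apply, Pi.zero_apply] at this ⊢
        linarith
      · have e : (Pi.single j (2 : ℝ) : Fin n → ℝ) = (2 : ℝ) • Pi.single j 1 := by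
          rw [← Pi.single_smul]; simp
        rw [dotR_add_right, e, dotR_smul_right, dotR_single_right, h0, mul_zero, add_zero]
        exact ht.2 z hz
    have := hτj _ hy
    simp at this
    linarith
  | some v =>
    obtain ⟨hv, -, hvτ⟩ := Finset.mem_filter.1 (Finset.some_mem_insertNone.1 ho)
    rw [ldir, dotR_sub_right] at h0
    exact hvτ ⟨Dom.cv_mem (h.sub v hv), fun z hz => by
      have := ht.2 z hz
      linarith⟩

/-- Along the directions of decay the functionals are bounded below by minus the defect. -/
lemma ldir_low {o : Option (Fin n → ℕ)} (ho : o ∈ Finset.insertNone (VB V τ j)) {u : Fin n → ℝ} (hu : ∀ i, 0 ≤ u i)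
    (hd : 0 ≤ df V t₀ u) : -df V t₀ u ≤ dotR u (ldir t₀ j o) := by
  cases o with
  | none => rw [ldir, dotR_single_right]; linarith [hu j]
  | some v =>
    have hv := (Finset.mem_filter.1 (Finset.some_mem_insertNone.1 ho)).1
    rw [dotR_ldir_some, df]
    linarith [NN_le hv u]

lemma abs_xh_eq_exp (v : Fin n → ℕ) {x : Fin n → ℝ} (hx : ∀ i, x i ≠ 0) :
    |xh j v x| = Real.exp (v j * lg x j - dotR (lg x) (cv v)) := by
  have h1 := abs_mon_eq_exp v hx
  rw [mon_eq_xh (j := j), abs_mul, abs_pow] at h1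
  have h2 : |x j| = Real.exp (-lg x j) := by
    rw [lg, neg_neg, Real.exp_log (abs_pos.2 (hx j))]
  rw [h2, ← Real.exp_nat_mul] at h1
  have h3 : Real.exp (v j * lg x j) * Real.exp (v j * -lg x j) = 1 := by
    rw [← Real.exp_add]; simp
  calc |xh j v x| = Real.exp (v j * lg x j) * (Real.exp (v j * -lg x j) * |xh j v x|) := by
        rw [← mul_assoc, h3, one_mul]
    _ = _ := by rw [h1, ← Real.exp_add]; congr 1

lemma sqrt_add_le {a b : ℝ} (ha : 0 ≤ a) (hb : 0 ≤ b) : √(a + b) ≤ √a + √b := by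
  rw [Real.sqrt_le_left (by positivity)]
  nlinarith [Real.sq_sqrt ha, Real.sq_sqrt hb, Real.sqrt_nonneg a, Real.sqrt_nonneg b,
    mul_nonneg (Real.sqrt_nonneg a) (Real.sqrt_nonneg b)]

lemma sqrt_sum_le {ι : Type*} (s : Finset ι) (a : ι → ℝ) (ha : ∀ i ∈ s, 0 ≤ a i) :
    √(∑ i ∈ s, a i) ≤ ∑ i ∈ s, √(a i) := by
  induction s using Finset.induction_on with
  | empty => simp
  | insert i s hi ih =>
    rw [Finset.sum_insert hi, Finset.sum_insert hi]
    have h1 : ∀ k ∈ s, 0 ≤ a k := fun k hk => ha k (Finset.mem_insert_of_mem hk)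
    exact (sqrt_add_le (ha i (Finset.mem_insert_self _ _)) (Finset.sum_nonneg h1)).trans
      (by linarith [ih h1])

/-- The gain is small unless `lg x` has a large defect or one of the directions of decay is
nearly orthogonal to `lg x`. -/
lemma gn_exp_bound (h : Dom S V) (hV : V.Nonempty) (hne : (V1 V τ j).Nonempty)
    (ht : (fun _ => t₀) ∈ newtonPolyhedron S) (hsub : τ ⊆ newtonPolyhedron S)
    (hτmin : ∀ τ' : Set (Fin n → ℝ), IsFaceOf (newtonPolyhedron S) τ' → (fun _ => t₀) ∈ τ' → τ ⊆ τ')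
    (hr : r < 1) : ∃ K C : ℝ, 1 ≤ K ∧ 0 ≤ C ∧ ∀ x ∈ Wx r, gn V τ j x ≤
      ∑ o ∈ Finset.insertNone (VB V τ j),
        K * Real.exp (-dotR (lg x) (ldir t₀ j o) + C * df V t₀ (lg x)) := by
  obtain ⟨v₁, hv₁⟩ := hne
  obtain ⟨hv₁V, hv₁j, hv₁τ⟩ := Finset.mem_filter.1 hv₁
  obtain ⟨C, hC, hface⟩ := face_defect h hV ht hsub hτmin hv₁τ
  set D : ℕ := ∑ v ∈ V, v j
  have hD : ∀ v ∈ V, v j ≤ D := fun v hv =>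
    Finset.single_le_sum (f := fun v => v j) (fun _ _ => Nat.zero_le _) hv
  set m : ℝ := 1 + V.card
  have hm : 1 ≤ m := by simp [m]
  refine ⟨m ^ (D + 1), (C + 1) * (D + 1), one_le_pow₀ hm, by positivity, fun x hx => ?_⟩
  have hu := lg_nonneg hr hx
  have hd := df_nonneg h ht hu
  set u := lg x
  have hf := hface u hu
  set d := df V t₀ u with hddef
  have hf1 : dotR u (cv v₁) ≤ t₀ * sm u + C * d := by
    have := (abs_le.1 hf).2
    change _ ≤ C * d at this
    linarith
  have hN : NN V u = t₀ * sm u - d := by rw [hddef, df]; ring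
  have hb0 : 0 < √(b2 V τ j x) := Real.sqrt_pos.2 (b2_pos_Wx (r := r) ⟨v₁, hv₁⟩ x hx)
  have hbl : Real.exp (u j - dotR u (cv v₁)) ≤ √(b2 V τ j x) := by
    have := abs_xh_V1 (x := x) hv₁
    rwa [abs_xh_eq_exp v₁ hx.2, hv₁j, Nat.cast_one, one_mul] at this
  have hbi : (√(b2 V τ j x))⁻¹ ≤ Real.exp (dotR u (cv v₁) - u j) := by
    rw [← neg_sub, Real.exp_neg]
    exact inv_anti₀ (Real.exp_pos _) hbl
  have hxj : |x j| = Real.exp (-u j) := by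
    simp only [u, lg, neg_neg, Real.exp_log (abs_pos.2 (hx.2 j))]
  have hmu : √(mu2 V τ j x) ≤ m * Real.exp (-u j + (C + 1) * d) := by
    have e1 : √(mu2 V τ j x) ≤ |x j| + √(a2 V j x) * (√(b2 V τ j x))⁻¹ := by
      rw [mu2]
      refine (sqrt_add_le (sq_nonneg _) (mul_nonneg a2_nonneg (inv_nonneg.2 b2_nonneg))).trans ?_
      rw [Real.sqrt_sq_eq_abs, Real.sqrt_mul a2_nonneg, Real.sqrt_inv]
    have e2 : √(a2 V j x) ≤ V.card * Real.exp (-NN V u) := by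
      rw [a2]
      refine (sqrt_sum_le _ _ fun _ _ => sq_nonneg _).trans ?_
      refine (Finset.sum_le_card_nsmul _ _ (Real.exp (-NN V u)) fun v hv => ?_).trans ?_
      · obtain ⟨hvV, hvj⟩ := Finset.mem_filter.1 hv
        rw [Real.sqrt_sq_eq_abs, abs_xh_eq_exp v hx.2, hvj, Nat.cast_zero, zero_mul, zero_sub]
        exact Real.exp_le_exp.2 (neg_le_neg (NN_le hvV _))
      · rw [nsmul_eq_mul]
        have : ((V.filter fun v => v j = 0).card : ℝ) ≤ V.card :=
          Nat.cast_le.2 (Finset.card_filter_le _ _)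
        exact mul_le_mul_of_nonneg_right this (Real.exp_pos _).le
    have e3 : √(a2 V j x) * (√(b2 V τ j x))⁻¹ ≤ V.card * Real.exp (-u j + (C + 1) * d) := by
      refine (mul_le_mul e2 hbi (inv_nonneg.2 hb0.le) (by positivity)).trans ?_
      rw [mul_assoc, ← Real.exp_add]
      refine mul_le_mul_of_nonneg_left (Real.exp_le_exp.2 ?_) (Nat.cast_nonneg _)
      linarith
    have e4 : |x j| ≤ Real.exp (-u j + (C + 1) * d) := by
      rw [hxj]
      exact Real.exp_le_exp.2 (by nlinarith)
    simp only [m]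
    linarith
  have hm0 : (0 : ℝ) ≤ D := Nat.cast_nonneg _
  have hterm : ∀ v ∈ VB V τ j, √(tv V τ j v x) ≤ m ^ (D + 1) *
      Real.exp (-dotR u (ldir t₀ j (some v)) + (C + 1) * (D + 1) * d) := by
    intro v hv
    obtain ⟨hvV, hv1, -⟩ := Finset.mem_filter.1 hv
    have e1 : √(tv V τ j v x) = |xh j v x| * √(mu2 V τ j x) ^ (v j - 1) * (√(b2 V τ j x))⁻¹ := by
      rw [tv, Real.sqrt_mul (mul_nonneg (sq_nonneg _) (pow_nonneg mu2_nonneg _)),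
        Real.sqrt_mul (sq_nonneg _), Real.sqrt_sq_eq_abs, Real.sqrt_inv]
      congr 2
      rw [Real.sqrt_eq_iff_mul_self_eq (pow_nonneg mu2_nonneg _) (by positivity), ← mul_pow,
        Real.mul_self_sqrt mu2_nonneg]
    have hq : ((v j - 1 : ℕ) : ℝ) = (v j : ℝ) - 1 := by rw [Nat.cast_sub hv1, Nat.cast_one]
    have hle : ((v j - 1 : ℕ) : ℝ) ≤ D := Nat.cast_le.2 ((Nat.sub_le _ _).trans (hD v hvV))
    have e2 : √(mu2 V τ j x) ^ (v j - 1) ≤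
        m ^ (v j - 1) * Real.exp ((v j - 1 : ℕ) * (-u j + (C + 1) * d)) := by
      rw [Real.exp_nat_mul, ← mul_pow]
      exact pow_le_pow_left₀ (Real.sqrt_nonneg _) hmu _
    have e3 : m ^ (v j - 1) ≤ m ^ (D + 1) :=
      pow_le_pow_right₀ hm (by have := hD v hvV; omega)
    rw [e1, abs_xh_eq_exp v hx.2]
    calc _ ≤ Real.exp (v j * u j - dotR u (cv v)) * (m ^ (D + 1) *
          Real.exp ((v j - 1 : ℕ) * (-u j + (C + 1) * d))) * Real.exp (dotR u (cv v₁) - u j) := by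
          refine mul_le_mul (mul_le_mul_of_nonneg_left (e2.trans
            (mul_le_mul_of_nonneg_right e3 (Real.exp_pos _).le)) (Real.exp_pos _).le) hbi
            (inv_nonneg.2 hb0.le) (by positivity)
      _ = m ^ (D + 1) * Real.exp ((v j * u j - dotR u (cv v)) +
          (v j - 1 : ℕ) * (-u j + (C + 1) * d) + (dotR u (cv v₁) - u j)) := by
          rw [Real.exp_add, Real.exp_add]; ring
      _ ≤ _ := by
          refine mul_le_mul_of_nonneg_left (Real.exp_le_exp.2 ?_) (by positivity)
          rw [dotR_ldir_some]
          have h5 : ((v j - 1 : ℕ) : ℝ) * ((C + 1) * d) ≤ D * ((C + 1) * d) :=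
            mul_le_mul_of_nonneg_right hle (by positivity)
          rw [mul_add, hq] at *
          nlinarith
  rw [Finset.sum_insertNone]
  refine (?_ : gn V τ j x ≤ √(Th V τ j x)).trans ?_
  · rw [gn]
    refine mul_le_of_le_one_right (Real.sqrt_nonneg _) (inv_le_one_of_one_le₀ ?_)
    exact Real.one_le_sqrt.2 (by linarith [Th_nonneg (V := V) (τ := τ) (j := j) (x := x)])
  rw [Th]
  refine (sqrt_add_le mu2_nonneg (Finset.sum_nonneg fun v _ => tv_nonneg v)).trans
    (add_le_add ?_ ((sqrt_sum_le _ _ fun v _ => tv_nonneg v).trans (Finset.sum_le_sum hterm)))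
  refine hmu.trans (mul_le_mul ?_ (Real.exp_le_exp.2 ?_) (Real.exp_pos _).le (by positivity))
  · exact le_self_pow₀ hm (by omega)
  · rw [ldir, dotR_single_right]
    have : 0 ≤ (C + 1) * D * d := by positivity
    nlinarith

end Gain


/-! ### Integrability of the weights near the pole -/

section Weights

variable {n : ℕ} {S : Set (Fin n → ℕ)} {V : Finset (Fin n → ℕ)} {τ : Set (Fin n → ℝ)} {j : Fin n}
  {t₀ s₀ r : ℝ}

/-- In logarithmic coordinates the weight `mV ^ (s₀ + ε) * gn` decays along the `dim τ`
directions of the face and along one further transversal direction, and, at rate `ε`, in all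
directions. -/
lemma weight_exp_bound (h : Dom S V) (hV : V.Nonempty) (hne : (V1 V τ j).Nonempty)
    (ht₀ : 0 < t₀) (hs₀ : s₀ = -1 / t₀)
    (ht : (fun _ => t₀) ∈ newtonPolyhedron S) (hsub : τ ⊆ newtonPolyhedron S)
    (hτmin : ∀ τ' : Set (Fin n → ℝ), IsFaceOf (newtonPolyhedron S) τ' → (fun _ => t₀) ∈ τ' → τ ⊆ τ')
    (hr : r < 1) (s : Finset (Fin n → ℝ)) (hs : ∀ b ∈ s, (fun _ => t₀) + b ∈ τ) :
    ∃ K δ : ℝ, 0 ≤ K ∧ 0 < δ ∧ ∀ ε : ℝ, 0 < ε → ε ≤ 1 / (2 * t₀) → ∀ x ∈ Wx r,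
      mV V x ^ (s₀ + ε) * gn V τ j x ≤ ∑ o ∈ Finset.insertNone (VB V τ j),
        K * (Real.exp (sm (lg x)) * Real.exp (-(δ * (|dotR (lg x) (ldir t₀ j o)| +
          ∑ b ∈ s, |dotR (lg x) b|)) - ε * t₀ * ∑ i, |lg x i|)) := by
  obtain ⟨K, C, hK, hC, hgn⟩ := gn_exp_bound h hV hne ht hsub hτmin hr
  have hF : ∀ b ∈ s, ∃ c : ℝ, 0 ≤ c ∧ ∀ u : Fin n → ℝ, (∀ i, 0 ≤ u i) →
      |dotR u b| ≤ c * df V t₀ u := by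
    intro b hb
    obtain ⟨c, hc, hcb⟩ := face_defect h hV ht hsub hτmin (hs b hb)
    refine ⟨c, hc, fun u hu => ?_⟩
    have := hcb u hu
    rwa [dotR_add_right, dotR_const, add_sub_cancel_left] at this
  choose! c hc hcb using hF
  set A : ℝ := ∑ b ∈ s, c b
  have hA : 0 ≤ A := Finset.sum_nonneg hc
  set κ : ℝ := min 1 (1 / (4 * t₀ * (C + 2)))
  have hκ : 0 < κ := lt_min one_pos (by positivity)
  have hκ1 : κ ≤ 1 := min_le_left _ _
  have hκ2 : κ * (C + 2) ≤ 1 / (4 * t₀) := by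
    have : κ ≤ 1 / (4 * t₀ * (C + 2)) := min_le_right _ _
    refine (mul_le_mul_of_nonneg_right this (by positivity)).trans (le_of_eq ?_)
    field_simp
  set δ : ℝ := min κ (1 / (4 * t₀ * (A + 1)))
  have hδ : 0 < δ := lt_min hκ (by positivity)
  have hδκ : δ ≤ κ := min_le_left _ _
  have hδ2 : δ * A ≤ 1 / (4 * t₀) := by
    have : δ ≤ 1 / (4 * t₀ * (A + 1)) := min_le_right _ _
    refine (mul_le_mul_of_nonneg_left (by linarith : A ≤ A + 1) hδ.le).trans
      ((mul_le_mul_of_nonneg_right this (by positivity)).trans (le_of_eq ?_))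
    field_simp
  refine ⟨K, δ, by linarith, hδ, fun ε hε hε2 x hx => ?_⟩
  have hu := lg_nonneg hr hx
  have hd := df_nonneg h ht hu
  have hg := hgn x hx
  have hm := exp_NN_le_mV hV hx.2
  set u := lg x
  set d := df V t₀ u with hddef
  have habs : ∑ i, |u i| = sm u := Finset.sum_congr rfl fun i _ => abs_of_nonneg (hu i)
  have hst : s₀ * t₀ = -1 := by rw [hs₀]; field_simp
  have hh : 1 / (2 * t₀) = -s₀ / 2 := by rw [hs₀]; field_simp
  have hq : 1 / (4 * t₀) = -s₀ / 4 := by rw [hs₀]; field_simp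
  have hs0 : s₀ < 0 := by rw [hs₀]; exact div_neg_of_neg_of_pos (by norm_num) ht₀
  rw [hh] at hε2
  rw [hq] at hκ2 hδ2
  have h1 : mV V x ^ (s₀ + ε) ≤ Real.exp (sm u - ε * t₀ * sm u + s₀ / 2 * d) := by
    refine (Real.rpow_le_rpow_of_nonpos (Real.exp_pos _) hm (by linarith)).trans ?_
    rw [← Real.exp_mul]
    refine Real.exp_le_exp.2 ?_
    have hN : NN V u = t₀ * sm u - d := by rw [hddef, df]; ring
    rw [hN]
    have e : -(t₀ * sm u - d) * (s₀ + ε) = -(s₀ * t₀) * sm u - ε * t₀ * sm u + (s₀ + ε) * d := by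
      ring
    rw [e, hst]
    nlinarith
  have h2 : gn V τ j x ≤ ∑ o ∈ Finset.insertNone (VB V τ j),
      K * Real.exp (κ * (-dotR u (ldir t₀ j o) + C * d)) := by
    by_cases hy : ∀ o ∈ Finset.insertNone (VB V τ j), -dotR u (ldir t₀ j o) + C * d ≤ 0
    · refine hg.trans (Finset.sum_le_sum fun o ho =>
        mul_le_mul_of_nonneg_left (Real.exp_le_exp.2 ?_) (by linarith))
      nlinarith [hy o ho]
    · push Not at hy
      obtain ⟨o, ho, hyo⟩ := hy
      refine gn_le_one.trans (le_trans ?_ (Finset.single_le_sum (fun o _ => by positivity) ho))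
      have : 1 ≤ Real.exp (κ * (-dotR u (ldir t₀ j o) + C * d)) :=
        Real.one_le_exp (by positivity)
      nlinarith
  refine (mul_le_mul h1 h2 gn_nonneg (Real.exp_pos _).le).trans ?_
  rw [Finset.mul_sum]
  refine Finset.sum_le_sum fun o ho => ?_
  rw [mul_left_comm, ← Real.exp_add, ← Real.exp_add]
  refine mul_le_mul_of_nonneg_left (Real.exp_le_exp.2 ?_) (by linarith)
  have h3 : -dotR u (ldir t₀ j o) ≤ -|dotR u (ldir t₀ j o)| + 2 * d := by
    have := ldir_low ho hu hd
    rcases abs_cases (dotR u (ldir t₀ j o)) with ⟨e, -⟩ | ⟨e, -⟩ <;> rw [e] <;> linarith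
  have h4 : δ * ∑ b ∈ s, |dotR u b| ≤ -s₀ / 4 * d := by
    have : ∑ b ∈ s, |dotR u b| ≤ A * d := by
      rw [Finset.sum_mul]
      exact Finset.sum_le_sum fun b hb => hcb b hb u hu
    calc _ ≤ δ * (A * d) := mul_le_mul_of_nonneg_left this hδ.le
      _ = δ * A * d := by ring
      _ ≤ _ := mul_le_mul_of_nonneg_right hδ2 hd
  have h5 : δ * |dotR u (ldir t₀ j o)| ≤ κ * |dotR u (ldir t₀ j o)| :=
    mul_le_mul_of_nonneg_right hδκ (abs_nonneg _)
  have h6 : κ * (C + 2) * d ≤ -s₀ / 4 * d := mul_le_mul_of_nonneg_right hκ2 hd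
  have h7 := mul_le_mul_of_nonneg_left h3 hκ.le
  rw [habs]
  linarith

lemma measurable_lg : Measurable (lg : (Fin n → ℝ) → Fin n → ℝ) := by
  unfold lg
  fun_prop

/-- The gain lowers by one the order of growth of the weight integrals at `s₀`. -/
lemma lintegral_weight (h : Dom S V) (hV : V.Nonempty) (hne : (V1 V τ j).Nonempty)
    (ht₀ : 0 < t₀) (hs₀ : s₀ = -1 / t₀)
    (hτ : IsFaceOf (newtonPolyhedron S) τ) (htτ : (fun _ => t₀) ∈ τ)
    (hτj : ∀ y ∈ τ, y j ≤ 1)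
    (hτmin : ∀ τ' : Set (Fin n → ℝ), IsFaceOf (newtonPolyhedron S) τ' → (fun _ => t₀) ∈ τ' → τ ⊆ τ')
    (hr : r < 1) :
    ∃ C : ℝ, 0 ≤ C ∧ ∀ ε : ℝ, 0 < ε → ε ≤ 1 / (2 * t₀) →
      ∫⁻ x in Wx r, ENNReal.ofReal (mV V x ^ (s₀ + ε) * gn V τ j x) ≤
        ENNReal.ofReal (C * ε⁻¹ ^ (n - faceDim τ - 1)) := by
  have hsub : τ ⊆ newtonPolyhedron S := by
    obtain ⟨w, -, rfl⟩ := hτ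
    exact fun y hy => hy.1
  obtain ⟨s, hsi, hsc, hsτ, hspan⟩ := exists_face_basis htτ
  obtain ⟨K, δ, hK, hδ, hw⟩ := weight_exp_bound h hV hne ht₀ hs₀ (hsub htτ) hsub hτmin hr s hsτ
  have hD : ∀ o ∈ Finset.insertNone (VB V τ j), ∃ D : ℝ, 0 ≤ D ∧ ∀ η : ℝ, 0 < η →
      ∫⁻ u : Fin n → ℝ, ENNReal.ofReal (Real.exp (-(δ * (|dotR u (ldir t₀ j o)| +
          ∑ b ∈ s, |dotR u b|)) - η * ∑ i, |u i|)) ≤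
        ENNReal.ofReal (D * η⁻¹ ^ (n - faceDim τ - 1)) := by
    intro o ho
    have hnot := ldir_not_mem h hτ htτ hτj ht₀ ho
    have hos : ldir t₀ j o ∉ s := fun hmem => hnot (hspan ▸ Submodule.subset_span hmem)
    have hli : LinearIndepOn ℝ id (↑(insert (ldir t₀ j o) s : Finset (Fin n → ℝ)) : Set (Fin n → ℝ)) := by
      rw [Finset.coe_insert]
      exact hsi.id_insert (hspan ▸ hnot)
    obtain ⟨D, hD0, hD⟩ := lintegral_face hli hδ
    refine ⟨D, hD0, fun η hη => ?_⟩
    have := hD η hη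
    rw [Finset.card_insert_of_notMem hos, hsc, ← Nat.sub_sub] at this
    simpa only [Finset.sum_insert hos] using this
  choose! D hD0 hD using hD
  set O := Finset.insertNone (VB V τ j)
  refine ⟨K * 2 ^ n * (∑ o ∈ O, D o) * t₀⁻¹ ^ (n - faceDim τ - 1), ?_, fun ε hε hε2 => ?_⟩
  · have := Finset.sum_nonneg hD0
    positivity
  let E : Option (Fin n → ℕ) → (Fin n → ℝ) → ℝ := fun o u =>
    Real.exp (-(δ * (|dotR u (ldir t₀ j o)| + ∑ b ∈ s, |dotR u b|)) - ε * t₀ * ∑ i, |u i|)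
  have hEm : ∀ o, Measurable (E o) := fun o => by
    simp only [E, dotR]
    fun_prop
  have hmeas : ∀ o, Measurable fun x : Fin n → ℝ =>
      ENNReal.ofReal (Real.exp (sm (lg x)) * E o (lg x)) := fun o => by
    have h1 : Measurable fun u : Fin n → ℝ => Real.exp (sm u) * E o u := by
      refine Measurable.mul ?_ (hEm o)
      unfold sm
      fun_prop
    exact (h1.comp measurable_lg).ennreal_ofReal
  calc ∫⁻ x in Wx r, ENNReal.ofReal (mV V x ^ (s₀ + ε) * gn V τ j x)
      ≤ ∫⁻ x in Wx r, ∑ o ∈ O, ENNReal.ofReal K *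
          ENNReal.ofReal (Real.exp (sm (lg x)) * E o (lg x)) := by
        refine setLIntegral_mono' measurableSet_Wx fun x hx => ?_
        refine (ENNReal.ofReal_le_ofReal (hw ε hε hε2 x hx)).trans (le_of_eq ?_)
        rw [ENNReal.ofReal_sum_of_nonneg fun o _ => by positivity]
        exact Finset.sum_congr rfl fun o _ => ENNReal.ofReal_mul hK
    _ = ∑ o ∈ O, ENNReal.ofReal K *
          ∫⁻ x in Wx r, ENNReal.ofReal (Real.exp (sm (lg x)) * E o (lg x)) := by
        rw [lintegral_finsetSum _ fun o _ => (hmeas o).const_mul _]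
        exact Finset.sum_congr rfl fun o _ => lintegral_const_mul _ (hmeas o)
    _ ≤ ∑ o ∈ O, ENNReal.ofReal K * (2 ^ n *
          ENNReal.ofReal (D o * (ε * t₀)⁻¹ ^ (n - faceDim τ - 1))) := by
        refine Finset.sum_le_sum fun o ho => mul_le_mul_right ?_ _
        refine (lintegral_Wx_le r (E o) fun u => (Real.exp_pos _).le).trans ?_
        exact mul_le_mul_right (hD o ho (ε * t₀) (by positivity)) _
    _ = _ := by
        have e2 : (2 : ENNReal) ^ n = ENNReal.ofReal (2 ^ n) := by
          rw [ENNReal.ofReal_pow (by norm_num)]; simp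
        have e : ∀ o ∈ O, ENNReal.ofReal K * (2 ^ n *
            ENNReal.ofReal (D o * (ε * t₀)⁻¹ ^ (n - faceDim τ - 1))) =
            ENNReal.ofReal (K * (2 ^ n * (D o * (ε * t₀)⁻¹ ^ (n - faceDim τ - 1)))) := by
          intro o _
          rw [e2, ← ENNReal.ofReal_mul (by positivity), ← ENNReal.ofReal_mul hK]
        rw [Finset.sum_congr rfl e, ← ENNReal.ofReal_sum_of_nonneg]
        · congr 1
          rw [← Finset.mul_sum, ← Finset.mul_sum, ← Finset.sum_mul, mul_inv, mul_pow]
          ring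
        · intro o ho
          have := hD0 o ho
          positivity

end Weights

section WeightsInt

variable {n : ℕ} {V : Finset (Fin n → ℕ)} {g : (Fin n → ℕ) → (Fin n → ℝ) → ℝ} {r c : ℝ}
  {τ : Set (Fin n → ℝ)} {j : Fin n}

lemma continuousOn_mV_rpow (hV : V.Nonempty) (b : ℝ) :
    ContinuousOn (fun x => mV V x ^ b) (Wx r) := by
  refine ContinuousOn.rpow_const ?_ fun x hx => Or.inl (mV_pos hV hx.2).ne'
  refine Continuous.continuousOn ?_
  unfold mV mon
  fun_prop

lemma continuousOn_gn (I : Inst V g r c τ j) : ContinuousOn (gn V τ j) (Wx r) := by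
  have hTh : ContinuousOn (Th V τ j) (Wx r) := fun x hx =>
    ((ss_Th I.ne1).diff hx).continuousAt.continuousWithinAt
  unfold gn
  refine (hTh.sqrt).mul (ContinuousOn.inv₀ (continuousOn_const.add hTh).sqrt fun x _ => ?_)
  exact (Real.sqrt_pos.2 (by linarith [Th_nonneg (V := V) (τ := τ) (j := j) (x := x)])).ne'

/-- Integrability of the weights to the right of `s₀`, with the bound at `s₀ + ε`. -/
lemma integrable_weight {S : Set (Fin n → ℕ)} {t₀ s₀ : ℝ} (I : Inst V g r c τ j) (h : Dom S V)
    (ht₀ : 0 < t₀) (hs₀ : s₀ = -1 / t₀)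
    (hτ : IsFaceOf (newtonPolyhedron S) τ) (htτ : (fun _ => t₀) ∈ τ) (hτj : ∀ y ∈ τ, y j ≤ 1)
    (hτmin : ∀ τ' : Set (Fin n → ℝ), IsFaceOf (newtonPolyhedron S) τ' → (fun _ => t₀) ∈ τ' →
      τ ⊆ τ') :
    (∃ C : ℝ, 0 ≤ C ∧ ∀ ε : ℝ, 0 < ε → ε ≤ 1 / (2 * t₀) →
      ∫ x in Wx r, mV V x ^ (s₀ + ε) * gn V τ j x ≤ C * ε⁻¹ ^ (n - faceDim τ - 1)) ∧
    ∀ c' : ℝ, s₀ < c' → IntegrableOn (fun x => mV V x ^ c' * gn V τ j x) (Wx r) := by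
  have hV := I.ne
  obtain ⟨C, hC, hb⟩ := lintegral_weight h hV I.ne1 ht₀ hs₀ hτ htτ hτj hτmin I.r_lt
  have hmeas : ∀ b : ℝ, AEStronglyMeasurable (fun x => mV V x ^ b * gn V τ j x)
      (volume.restrict (Wx r)) := fun b =>
    ((continuousOn_mV_rpow hV b).mul (continuousOn_gn I)).aestronglyMeasurable measurableSet_Wx
  have hnn : ∀ (b : ℝ) (x : Fin n → ℝ), 0 ≤ mV V x ^ b * gn V τ j x := fun b x =>
    mul_nonneg (Real.rpow_nonneg (mV_nonneg V _) _) gn_nonneg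
  have hint : ∀ ε : ℝ, 0 < ε → ε ≤ 1 / (2 * t₀) →
      IntegrableOn (fun x => mV V x ^ (s₀ + ε) * gn V τ j x) (Wx r) := fun ε h0 h1 => by
    refine ⟨hmeas _, ?_⟩
    rw [hasFiniteIntegral_iff_ofReal (Eventually.of_forall (hnn _))]
    exact (hb ε h0 h1).trans_lt ENNReal.ofReal_lt_top
  refine ⟨⟨C, hC, fun ε h0 h1 => ?_⟩, fun c' hc' => ?_⟩
  · rw [integral_eq_lintegral_of_nonneg_ae (Eventually.of_forall (hnn _)) (hmeas _)]
    exact ENNReal.toReal_le_of_le_ofReal (by positivity) (hb ε h0 h1)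
  · set ε := min (c' - s₀) (1 / (2 * t₀))
    have h0 : 0 < ε := lt_min (by linarith) (by positivity)
    have h1 : ε ≤ c' - s₀ := min_le_left _ _
    refine ((hint ε h0 (min_le_right _ _)).const_mul ((V.card : ℝ) ^ (c' - s₀ - ε))).mono'
      (hmeas _) ((ae_restrict_iff' measurableSet_Wx).2 (Eventually.of_forall fun x hx => ?_))
    rw [Real.norm_of_nonneg (hnn _ _), ← mul_assoc]
    refine mul_le_mul_of_nonneg_right ?_ gn_nonneg
    have e : c' = (c' - s₀ - ε) + (s₀ + ε) := by ring
    conv_lhs => rw [e]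
    rw [Real.rpow_add (mV_pos hV hx.2)]
    refine mul_le_mul_of_nonneg_right ?_ (Real.rpow_nonneg (mV_nonneg V _) _)
    exact Real.rpow_le_rpow (mV_nonneg V _) (exists_mV_le V I.r_lt x hx) (by linarith)

end WeightsInt


/-! ### Meromorphic continuation and the order of the pole -/

/-- The identity theorem for meromorphic functions. -/
lemma eventuallyEq_of_meromorphicOn {F G : ℂ → ℂ} {W : Set ℂ} (hF : MeromorphicOn F W)
    (hG : MeromorphicOn G W) (hW : IsPreconnected W) {x y : ℂ} (hx : x ∈ W) (hy : y ∈ W)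
    (h : F =ᶠ[𝓝[≠] x] G) : F =ᶠ[𝓝[≠] y] G := by
  have hm : MeromorphicOn (F - G) W := fun z hz => (hF z hz).sub (hG z hz)
  have h0 : meromorphicOrderAt (F - G) x = ⊤ := by
    rw [meromorphicOrderAt_eq_top_iff]
    exact h.mono fun z hz => by simp [hz]
  have h1 : meromorphicOrderAt (F - G) y = ⊤ := by
    by_contra hne
    exact hm.meromorphicOrderAt_ne_top_of_isPreconnected hW hy hx hne h0
  exact (meromorphicOrderAt_eq_top_iff.1 h1).mono fun z hz => sub_eq_zero.1 (by simpa using hz)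

/-- A meromorphic function bounded by `ε⁻¹ ^ k` along one ray has a pole of order at most `k`. -/
lemma exists_tendsto_of_ray_bound {F : ℂ → ℂ} {s₀ : ℝ} (hF : MeromorphicAt F (s₀ : ℂ)) {k : ℕ}
    {C : ℝ} (hb : ∀ᶠ ε : ℝ in 𝓝[>] 0, ‖F ((s₀ + ε : ℝ) : ℂ)‖ ≤ C * ε⁻¹ ^ k) :
    ∃ L : ℂ, Tendsto (fun s : ℂ => (s - (s₀ : ℂ)) ^ k * F s) (𝓝[≠] (s₀ : ℂ)) (𝓝 L) := by
  have hm : MeromorphicAt (fun s : ℂ => (s - (s₀ : ℂ)) ^ k * F s) (s₀ : ℂ) :=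
    (((MeromorphicAt.id _).sub (MeromorphicAt.const _ _)).pow k).mul hF
  refine tendsto_nhds_of_meromorphicOrderAt_nonneg hm ?_
  by_contra hneg
  have ht := (tendsto_cobounded_iff_meromorphicOrderAt_neg hm).2 (not_le.1 hneg)
  have hray : Tendsto (fun ε : ℝ => ((s₀ + ε : ℝ) : ℂ)) (𝓝[>] 0) (𝓝[≠] (s₀ : ℂ)) := by
    refine tendsto_nhdsWithin_iff.2 ⟨?_, ?_⟩
    · have : Continuous fun ε : ℝ => ((s₀ + ε : ℝ) : ℂ) := by fun_prop
      refine Tendsto.mono_left ?_ nhdsWithin_le_nhds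
      simpa using this.tendsto 0
    · filter_upwards [self_mem_nhdsWithin] with ε hε
      have hε' : (0 : ℝ) < ε := hε
      simp [hε'.ne']
  have hn := (tendsto_norm_cobounded_atTop.comp (ht.comp hray)).eventually_gt_atTop C
  obtain ⟨ε, h1, h2, h3⟩ := (hn.and (hb.and self_mem_nhdsWithin)).exists
  have h3' : (0 : ℝ) < ε := h3
  simp only [Function.comp_apply] at h1
  refine h1.not_ge ?_
  have e : ((s₀ + ε : ℝ) : ℂ) - (s₀ : ℂ) = (ε : ℂ) := by push_cast; ring
  rw [e, norm_mul, norm_pow, Complex.norm_real, Real.norm_of_nonneg h3'.le]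
  calc ε ^ k * ‖F ((s₀ + ε : ℝ) : ℂ)‖ ≤ ε ^ k * (C * ε⁻¹ ^ k) :=
        mul_le_mul_of_nonneg_left h2 (by positivity)
    _ = C := by rw [inv_pow]; field_simp

section Assembly

variable {n : ℕ} {V : Finset (Fin n → ℕ)} {g : (Fin n → ℕ) → (Fin n → ℝ) → ℝ} {r r' c : ℝ}
  {τ : Set (Fin n → ℝ)} {j : Fin n} {σ : ℝ} {φ Ψ : (Fin n → ℝ) → ℝ}

/-- The integrals carrying the gain are `O(ε⁻¹ ^ (ρ - 1))` at `s₀ + ε`. -/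
lemma norm_FF_gain_le {s₀ C ε₀ : ℝ} {k m : ℕ} (I : Inst V g r c τ j) (hσ : σ = 1 ∨ σ = -1)
    (hr : r' < r) (hΨ : Adm r r' (wt V (gn V τ j) k) Ψ) (hk : -s₀ ≤ k) (hs₀ : s₀ < 0)
    (hε₀ : 0 < ε₀)
    (hC : ∀ ε : ℝ, 0 < ε → ε ≤ ε₀ →
      ∫ x in Wx r, mV V x ^ (s₀ + ε) * gn V τ j x ≤ C * ε⁻¹ ^ m)
    (hint : ∀ c' : ℝ, s₀ < c' → IntegrableOn (fun x => mV V x ^ c' * gn V τ j x) (Wx r)) :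
    ∃ D : ℝ, 0 ≤ D ∧ ∀ᶠ ε : ℝ in 𝓝[>] 0,
      ‖FF σ (fV V g) (((s₀ + ε : ℝ) : ℂ) + k) Ψ‖ ≤ D * ε⁻¹ ^ m := by
  obtain ⟨A, hA, Cf, hCf, hb⟩ := I.toBase.norm_FF_le hσ hr (fun _ _ => gn_nonneg) hΨ
  refine ⟨A * Cf ^ (k : ℝ) * |C|, by positivity, ?_⟩
  have h1 : ∀ᶠ ε : ℝ in 𝓝[>] 0, ε < min ε₀ (-s₀) :=
    nhdsWithin_le_nhds (eventually_lt_nhds (lt_min hε₀ (by linarith)))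
  filter_upwards [h1, self_mem_nhdsWithin] with ε hε hε0
  have h0 : (0 : ℝ) < ε := hε0
  have h2 : ε < ε₀ := hε.trans_le (min_le_left _ _)
  have h3 : ε < -s₀ := hε.trans_le (min_le_right _ _)
  have h4 := hb ((s₀ + ε : ℝ) : ℂ) (by rw [Complex.ofReal_re]; linarith)
    (by rw [Complex.ofReal_re]; exact hint _ (by linarith))
  rw [Complex.ofReal_re] at h4
  refine h4.trans ?_
  have h5 : Cf ^ (s₀ + ε + k) ≤ Cf ^ (k : ℝ) :=
    Real.rpow_le_rpow_of_exponent_le hCf (by linarith)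
  have h6 : ∫ x in Wx r, mV V x ^ (s₀ + ε) * gn V τ j x ≤ |C| * ε⁻¹ ^ m :=
    (hC ε h0 h2.le).trans (mul_le_mul_of_nonneg_right (le_abs_self C) (by positivity))
  have h7 : 0 ≤ ∫ x in Wx r, mV V x ^ (s₀ + ε) * gn V τ j x :=
    setIntegral_nonneg measurableSet_Wx fun x _ =>
      mul_nonneg (Real.rpow_nonneg (mV_nonneg V _) _) gn_nonneg
  rw [mul_assoc (A * _)]
  exact mul_le_mul (mul_le_mul_of_nonneg_left h5 hA) h6 h7 (by positivity)

/-- A factor vanishing only at integers does not vanish at `s₀`. -/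
lemma prod_ne_zero_of_not_int {s₀ : ℝ} (h : ∀ m : ℤ, s₀ ≠ m) (N : ℕ) :
    (((s₀ : ℂ) + 1) * (∏ i ∈ Finset.range N, ((s₀ : ℂ) + i + 1)) *
      (∏ i ∈ Finset.range N, ((s₀ : ℂ) + 1 + i + 1))) ≠ 0 := by
  have key : ∀ m : ℕ, (s₀ : ℂ) + m ≠ 0 := fun m hm => by
    have h1 : (s₀ : ℂ) = ((-(m : ℝ) : ℝ) : ℂ) := by
      push_cast; linear_combination hm
    exact h (-m) (by push_cast; exact Complex.ofReal_injective h1)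
  refine mul_ne_zero (mul_ne_zero (by simpa using key 1) (Finset.prod_ne_zero_iff.2 fun i _ => ?_))
    (Finset.prod_ne_zero_iff.2 fun i _ => ?_)
  · have := key (i + 1)
    push_cast at this
    rwa [← add_assoc] at this
  · have := key (i + 2)
    push_cast at this
    intro h0
    exact this (by linear_combination h0)

/-- A compact subset of the open box lies in a smaller closed box. -/
lemma exists_suppIn (hr : 0 < r) (hφ : HasCompactSupport φ) (h : tsupport φ ⊆ bx r) :
    ∃ r' < r, SuppIn r' φ := by
  have hcont : ContinuousOn (fun x : Fin n → ℝ => ‖x‖) (tsupport φ) := continuous_norm.continuousOn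
  rcases (tsupport φ).eq_empty_or_nonempty with he | hne
  · refine ⟨0, hr, fun x _ => image_eq_zero_of_notMem_tsupport ?_⟩
    simp [he]
  · obtain ⟨y, hy, hmax⟩ := hφ.isCompact.exists_isMaxOn hne hcont
    refine ⟨‖y‖, (pi_norm_lt_iff hr).2 (h hy), fun x ⟨i, hi⟩ => ?_⟩
    refine image_eq_zero_of_notMem_tsupport fun hx => ?_
    exact absurd (hi.trans_le (norm_le_pi_norm x i)) (not_lt.2 (hmax hx))

/-- A continuation of `s ↦ FF σ (fV V g) s φ` has a pole of order at most `ρ - 1` at `s₀`. -/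
lemma pole_order {S : Set (Fin n → ℕ)} {t₀ s₀ : ℝ} (I : Inst V g r c τ j) (h : Dom S V)
    (ht₀ : 0 < t₀) (hs₀ : s₀ = -1 / t₀) (hZ : ∀ m : ℤ, s₀ ≠ m)
    (hτ : IsFaceOf (newtonPolyhedron S) τ) (htτ : (fun _ => t₀) ∈ τ) (hτj : ∀ y ∈ τ, y j ≤ 1)
    (hτmin : ∀ τ' : Set (Fin n → ℝ), IsFaceOf (newtonPolyhedron S) τ' → (fun _ => t₀) ∈ τ' →
      τ ⊆ τ')
    (hσ : σ = 1 ∨ σ = -1) (hr : r' < r) (hφ : Amp r' φ) {M : ℂ → ℂ} {R : ℝ} (hR : -R < s₀)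
    (hM : MeromorphicOn M {s : ℂ | -R < s.re}) {c₀ : ℝ}
    (hMF : ∀ s : ℂ, c₀ < s.re → M s = FF σ (fV V g) s φ) :
    ∃ L : ℂ, Tendsto (fun s : ℂ => (s - (s₀ : ℂ)) ^ (n - faceDim τ - 1) * M s)
      (𝓝[≠] (s₀ : ℂ)) (𝓝 L) := by
  obtain ⟨⟨C, hC, hb⟩, hint⟩ := integrable_weight I h ht₀ hs₀ hτ htτ hτj hτmin
  obtain ⟨N, hN⟩ := exists_nat_ge (-s₀)
  have hs0 : s₀ < 0 := by rw [hs₀]; exact div_neg_of_neg_of_pos (by norm_num) ht₀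
  obtain ⟨Ψ₁, Ψ₂, h1, h2, hrep⟩ := representation I hτj hσ hr hφ N
  have hN1 : -s₀ ≤ ((1 + N : ℕ) : ℝ) := by push_cast; linarith
  have hε₀ : 0 < 1 / (2 * t₀) := by positivity
  obtain ⟨D₁, hD₁, hb₁⟩ := norm_FF_gain_le I hσ hr h1 hN hs0 hε₀ hb hint
  obtain ⟨D₂, hD₂, hb₂⟩ := norm_FF_gain_le I hσ hr h2 hN1 hs0 hε₀ hb hint
  set A : ℂ → ℂ := fun s => FF σ (fV V g) (s + N) Ψ₁
  set B : ℂ → ℂ := fun s => FF σ (fV V g) (s + (1 + N : ℕ)) Ψ₂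
  set q₁ : ℂ → ℂ := fun s => (s + 1) * ∏ i ∈ Finset.range N, (s + 1 + i + 1) with hq₁
  set q₂ : ℂ → ℂ := fun s => σ * ∏ i ∈ Finset.range N, (s + i + 1) with hq₂
  set P : ℂ → ℂ := fun s => (s + 1) * (∏ i ∈ Finset.range N, (s + i + 1)) *
    (∏ i ∈ Finset.range N, (s + 1 + i + 1)) with hP
  have hPd : Differentiable ℂ P := by fun_prop
  have hq₁d : Differentiable ℂ q₁ := by fun_prop
  have hq₂d : Differentiable ℂ q₂ := by fun_prop
  have hA : ∀ s : ℂ, s₀ < s.re → DifferentiableAt ℂ A s := fun s hs =>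
    I.toBase.differentiableAt_FF hσ hr (fun _ _ => gn_nonneg) h1 (by linarith) hint hs
  have hB : ∀ s : ℂ, s₀ < s.re → DifferentiableAt ℂ B s := fun s hs =>
    I.toBase.differentiableAt_FF hσ hr (fun _ _ => gn_nonneg) h2 (by linarith) hint hs
  set Q : ℂ → ℂ := fun s => q₁ s * A s - q₂ s * B s with hQ
  have hQd : ∀ s : ℂ, s₀ < s.re → DifferentiableAt ℂ Q s := fun s hs =>
    ((hq₁d s).mul (hA s hs)).sub ((hq₂d s).mul (hB s hs))
  have hopen : IsOpen {s : ℂ | s₀ < s.re} := isOpen_lt continuous_const Complex.continuous_re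
  have hQa : ∀ s : ℂ, s₀ < s.re → AnalyticAt ℂ Q s := fun s hs =>
    DifferentiableOn.analyticAt (fun z hz => (hQd z hz).differentiableWithinAt)
      (hopen.mem_nhds hs)
  have hPM : MeromorphicOn (P * M) {s : ℂ | s₀ < s.re} := fun s hs =>
    (hPd.analyticAt s).meromorphicAt.mul (hM s (hR.trans hs))
  have hconv : Convex ℝ {s : ℂ | s₀ < s.re} := convex_halfSpace_re_gt _
  have hloc : ∀ s : ℂ, s₀ < s.re → P * M =ᶠ[𝓝[≠] s] Q := by
    intro s hs
    set b : ℝ := max c₀ 0 + 1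
    have hb0 : c₀ < b := by have := le_max_left c₀ 0; simp only [b]; linarith
    have hb1 : 0 < b := by have := le_max_right c₀ 0; simp only [b]; linarith
    refine eventuallyEq_of_meromorphicOn hPM (fun z hz => (hQa z hz).meromorphicAt)
      hconv.isPreconnected (x := (b : ℂ)) (by simp; linarith) hs ?_
    have : {z : ℂ | max c₀ 0 < z.re} ∈ 𝓝 (b : ℂ) :=
      (isOpen_lt continuous_const Complex.continuous_re).mem_nhds (by simp; exact ⟨hb0, hb1⟩)
    refine nhdsWithin_le_nhds ?_
    filter_upwards [this] with z hz
    have hz' : max c₀ 0 < z.re := hz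
    have := hrep z ((le_max_right _ _).trans_lt hz')
    simp only [Pi.mul_apply, hMF z ((le_max_left _ _).trans_lt hz')]
    exact this
  have hMan : ∀ᶠ s in 𝓝[≠] (s₀ : ℂ), AnalyticAt ℂ M s :=
    (hM s₀ (by simpa using hR)).eventually_analyticAt
  have hray : Tendsto (fun ε : ℝ => ((s₀ + ε : ℝ) : ℂ)) (𝓝[>] 0) (𝓝 (s₀ : ℂ)) := by
    have : Continuous fun ε : ℝ => ((s₀ + ε : ℝ) : ℂ) := by fun_prop
    refine Tendsto.mono_left ?_ nhdsWithin_le_nhds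
    simpa using this.tendsto 0
  have hray' : Tendsto (fun ε : ℝ => ((s₀ + ε : ℝ) : ℂ)) (𝓝[>] 0) (𝓝[≠] (s₀ : ℂ)) := by
    refine tendsto_nhdsWithin_iff.2 ⟨hray, ?_⟩
    filter_upwards [self_mem_nhdsWithin] with ε hε
    have hε' : (0 : ℝ) < ε := hε
    simp [hε'.ne']
  have hbq₁ : ∀ᶠ ε : ℝ in 𝓝[>] 0, ‖q₁ ((s₀ + ε : ℝ) : ℂ)‖ < ‖q₁ s₀‖ + 1 :=
    ((hq₁d.continuous.norm.tendsto _).comp hray).eventually_lt_const (lt_add_one _)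
  have hbq₂ : ∀ᶠ ε : ℝ in 𝓝[>] 0, ‖q₂ ((s₀ + ε : ℝ) : ℂ)‖ < ‖q₂ s₀‖ + 1 :=
    ((hq₂d.continuous.norm.tendsto _).comp hray).eventually_lt_const (lt_add_one _)
  obtain ⟨L, hL⟩ := exists_tendsto_of_ray_bound (F := P * M) (k := n - faceDim τ - 1)
    (C := (‖q₁ s₀‖ + 1) * D₁ + (‖q₂ s₀‖ + 1) * D₂)
    ((hPd.analyticAt _).meromorphicAt.mul (hM s₀ (by simpa using hR))) (by
      filter_upwards [hbq₁, hbq₂, hb₁, hb₂, hray'.eventually hMan, self_mem_nhdsWithin]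
        with ε e1 e2 e3 e4 e5 e6
      have hε : (0 : ℝ) < ε := e6
      have hre : s₀ < ((s₀ + ε : ℝ) : ℂ).re := by rw [Complex.ofReal_re]; linarith
      -- both sides are continuous at this point, so they agree there and not only around it
      have heq : (P * M) ((s₀ + ε : ℝ) : ℂ) = Q ((s₀ + ε : ℝ) : ℂ) :=
        ((((hPd.analyticAt _).mul e5).continuousAt.eventuallyEq_nhds_iff_eventuallyEq_nhdsNE
          (hQa _ hre).continuousAt).1 (hloc _ hre)).self_of_nhds
      rw [heq]
      refine (norm_sub_le (q₁ _ * A _) (q₂ _ * B _)).trans ?_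
      rw [norm_mul (q₁ _), norm_mul (q₂ _), add_mul, mul_assoc, mul_assoc]
      exact add_le_add (mul_le_mul e1.le e3 (norm_nonneg _) (by positivity))
        (mul_le_mul e2.le e4 (norm_nonneg _) (by positivity)))
  have hP0 : P s₀ ≠ 0 := prod_ne_zero_of_not_int hZ N
  have hPne : ∀ᶠ s in 𝓝[≠] (s₀ : ℂ), P s ≠ 0 :=
    nhdsWithin_le_nhds (hPd.continuous.continuousAt.eventually_ne hP0)
  have hPt : Tendsto (fun s => (P s)⁻¹) (𝓝[≠] (s₀ : ℂ)) (𝓝 (P s₀)⁻¹) :=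
    ((hPd.continuous.tendsto _).inv₀ hP0).mono_left nhdsWithin_le_nhds
  refine ⟨(P s₀)⁻¹ * L, (hPt.mul hL).congr' ?_⟩
  filter_upwards [hPne] with s hs
  simp only [Pi.mul_apply]
  field_simp

end Assembly

/-- **Theorem 2.** If `τ₀` is unstable with respect to some variable, then the polar
multiplicity of `Z_±(s)` at `s₀` is strictly less than `ρ`. -/
theorem real_instability_drops_polar_multiplicity
    {n ρ : ℕ} (hn : 1 ≤ n)
    (f : (Fin n → ℝ) → ℝ) (a : (Fin n → ℕ) → ℝ)
    (hfa : ∀ᶠ x in 𝓝 (0 : Fin n → ℝ), HasSum (fun α => a α * ∏ i, x i ^ α i) (f x))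
    (hf0 : f 0 = 0) (hcrit : fderiv ℝ f 0 = 0)
    (hnc : ∃ α : Fin n → ℕ, α ≠ 0 ∧ a α ≠ 0)
    (Γ : Set (Fin n → ℝ)) (hΓ : Γ = newtonPolyhedron {α | a α ≠ 0})
    (hnd : NonDegenerateR a Γ)
    (t₀ s₀ : ℝ) (ht₀pos : 0 < t₀)
    (ht₀mem : (fun _ => t₀) ∈ Γ)
    (ht₀min : ∀ t : ℝ, 0 < t → (fun _ => t) ∈ Γ → t₀ ≤ t)
    (hs₀ : s₀ = -1 / t₀) (hs₀Z : ∀ m : ℤ, s₀ ≠ (m : ℝ))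
    (τ₀ : Set (Fin n → ℝ)) (hτface : IsFaceOf Γ τ₀)
    (hτmem : (fun _ => t₀) ∈ τ₀)
    (hτmin : ∀ τ : Set (Fin n → ℝ), IsFaceOf Γ τ → (fun _ => t₀) ∈ τ → τ₀ ⊆ τ)
    (hρ : ρ = n - faceDim τ₀)
    (j : Fin n) (hunst : UnstableR a Γ τ₀ j) :
    ∃ U : Set (Fin n → ℝ), IsOpen U ∧ (0 : Fin n → ℝ) ∈ U ∧
      ∀ φ : (Fin n → ℝ) → ℝ, ContDiff ℝ (⊤ : ℕ∞) φ → HasCompactSupport φ → tsupport φ ⊆ U →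
      ∀ σ : ℝ, σ = 1 ∨ σ = -1 →
      ∀ G : ℂ → ℂ,
        IsMeroCont (fun s => ∫ x : Fin n → ℝ, ((sgnPart σ (f x) : ℝ) : ℂ) ^ s * (φ x : ℂ))
          (s₀ : ℂ) G →
        ∃ L : ℂ, Tendsto (fun s : ℂ => (s - (s₀ : ℂ)) ^ (ρ - 1) * G s)
          (𝓝[≠] (s₀ : ℂ)) (𝓝 L) := by
  subst hΓ
  obtain ⟨V, g, r, c, I, hD, hfV⟩ := exists_setup hfa hf0 hnd hτface hunst
  refine ⟨bx r, isOpen_bx r, zero_mem_bx I.r_pos, fun φ hφ hφc hφU σ hσ G hG => ?_⟩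
  obtain ⟨r', hr'r, hsupp⟩ := exists_suppIn I.r_pos hφc hφU
  have hZ : ∀ s : ℂ, (∫ x : Fin n → ℝ, ((sgnPart σ (f x) : ℝ) : ℂ) ^ s * (φ x : ℂ)) =
      FF σ (fV V g) s φ := by
    intro s
    refine integral_congr_ae (Eventually.of_forall fun x => ?_)
    by_cases hx : φ x = 0
    · simp [hx]
    · have : x ∈ bx r := hφU (subset_tsupport φ hx)
      simp only [pw, hfV x this]
  obtain ⟨Ω, hΩo, hΩc, hΩ, hGm, hGZ⟩ := hG
  have hs0Ω : (s₀ : ℂ) ∈ Ω := hΩ (Or.inr rfl)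
  -- `Ω` need not meet a half-plane `Re s > -R` in a connected set; a path in `Ω` from `1` to `s₀`
  -- stays in such a half-plane when `R` is large.
  have h1Ω : (1 : ℂ) ∈ Ω := hΩ (Or.inl (by simp))
  obtain ⟨p, hp⟩ := (hΩo.isConnected_iff_isPathConnected.1 hΩc).joinedIn _ h1Ω _ hs0Ω
  set K : Set ℂ := Set.range p
  have hKp : IsPreconnected K := isPreconnected_range p.continuous
  have hKΩ : K ⊆ Ω := by
    rintro _ ⟨t, rfl⟩
    exact hp t
  have hKc : IsCompact K := isCompact_range p.continuous
  have hK1 : (1 : ℂ) ∈ K := ⟨0, p.source⟩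
  have hKs : (s₀ : ℂ) ∈ K := ⟨1, p.target⟩
  obtain ⟨R, hRK⟩ : ∃ R : ℕ, ∀ s ∈ K, -(R : ℝ) < s.re := by
    obtain ⟨m, hm⟩ := (hKc.image Complex.continuous_re).bddBelow
    obtain ⟨R, hR⟩ := exists_nat_gt (-m)
    exact ⟨R, fun s hs => by linarith [hm (Set.mem_image_of_mem _ hs)]⟩
  obtain ⟨M, hM, c₀, hMF⟩ := I.toBase.mer hσ hr'r R ⟨hφ, hsupp⟩
  have hRs : -(R : ℝ) < s₀ := by simpa using hRK _ hKs
  obtain ⟨L, hL⟩ := pole_order I hD ht₀pos hs₀ hs₀Z hτface hτmem (fun y hy => (hunst.1 y hy).2)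
    hτmin hσ hr'r ⟨hφ, hsupp⟩ hRs hM hMF
  have h1 : G =ᶠ[𝓝[≠] (1 : ℂ)] M := by
    set b : ℝ := max c₀ 0 + 1
    have hconv : Convex ℝ {s : ℂ | 0 < s.re} := convex_halfSpace_re_gt _
    have hb : max c₀ 0 < b := lt_add_one _
    have hb1 : 0 < b := (le_max_right _ _).trans_lt hb
    refine eventuallyEq_of_meromorphicOn (W := {s : ℂ | 0 < s.re})
      (fun z hz => hGm z (hΩ (Or.inl hz)))
      (fun z (hz : 0 < z.re) => hM z
        (show -(R : ℝ) < z.re from (neg_nonpos.2 (Nat.cast_nonneg R)).trans_lt hz))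
      hconv.isPreconnected (x := (b : ℂ)) (by simpa using hb1) (by simp) ?_
    have : {z : ℂ | max c₀ 0 < z.re} ∈ 𝓝 (b : ℂ) :=
      (isOpen_lt continuous_const Complex.continuous_re).mem_nhds (by simpa using hb)
    refine nhdsWithin_le_nhds ?_
    filter_upwards [this] with z hz
    have hz' : max c₀ 0 < z.re := hz
    rw [hGZ z ((le_max_right _ _).trans_lt hz'), hMF z ((le_max_left _ _).trans_lt hz')]
    exact hZ z
  have h2 : G =ᶠ[𝓝[≠] (s₀ : ℂ)] M :=
    eventuallyEq_of_meromorphicOn (fun z hz => hGm z (hKΩ hz)) (fun z hz => hM z (hRK z hz)) hKp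
      hK1 hKs h1
  refine ⟨L, hL.congr' ?_⟩
  filter_upwards [h2] with s hs
  rw [hρ, hs]
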